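/- arXiv:0807.5101 — 5 statements merged into one kernel-verified Lean document; each statement's English description precedes it below -/
import Mathlib

section
/- There exists an absolute constant C > 0 such that for every finite abelian group G of odd order and every nonempty subset A ⊆ G of density α > 0, one has Λ(A) ≥ exp(−C · α^{−C}). -/
/-!
The proof is Bourgain's density increment on Bohr sets, run with smooth weights.

For characters `Γ₁, …, Γ_d` the function `‖x‖ = ∑ᵢ |Γᵢ(x) - 1|` is a pseudo-norm on `G`, and a *soft
Bohr set* is the probability weight proportional to `exp (-L ‖x‖)`. A shift by `y` changes such a
weight by a factor at most `exp (L ‖y‖)` at every point, so no regularity of Bohr sets is needed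
(`norm_mean_shift_sub_le`). A covering argument shows that passing from `L` to `L / 2` increases the
total mass at most by a factor `O(1) ^ d` (`mass_half_le`). Hence masses are at least
`L ^ (-O(d)) |G|` (`mass_lower`), and a soft Bohr set at scale `4 n L` with `n` large looks
concentrated at `0` from the point of view of scale `L` (`moment_le`).

Suppose that `A` has density `δ ≥ α` on a translate of a soft Bohr set of rank `d`, and density at
most `δ + ε` on all translates of soft Bohr sets of rank at most `d + 1` at the next three scales,
where `ε = α ^ 3 / 50`. Then there is a translate on which the density of `A` is close to `δ` with
respect to all of the measures involved in counting progressions `u, v, 2 v - u` with `u` at scale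
`L₁` and `v` at the finer scale `L₂`. The balanced part of the middle indicator contributes little
by Fourier analysis: a large coefficient at `ψ` would give a density increment on the soft Bohr set
with the additional frequency `ψ` (`norm_coeff_le`). The constant part contributes about `δ ^ 3`,
since local densities which never exceed `δ + ε` and average to about `δ` are almost constant
(`core_count`). Here odd order enters: the measure of `2 v` is again a soft Bohr set
(`exists_double`).

So either there are at least `α ^ 3 / 2` times the product of two masses many progressions, or the
density increases by `ε`. The latter happens at most `K = O(α ^ (-3))` times (`iterate`). Ranks
remain at most `K` and `log L` remains `O(K ^ 2)`, so all masses are at least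
`exp (-O(K ^ 3)) |G|`, which gives the theorem with `exp (-O(α ^ (-9)))`.
-/

open scoped BigOperators Classical

/-- The normalized count of three-term arithmetic progressions in `A ⊆ G`:
`Λ(A) = |{(x,d) : x ∈ A, x+d ∈ A, x+2•d ∈ A}| / |G|²`. -/
noncomputable def apCount {G : Type*} [AddCommGroup G] [Fintype G] (A : Finset G) : ℝ :=
  ((Finset.univ.filter
      (fun p : G × G => p.1 ∈ A ∧ p.1 + p.2 ∈ A ∧ p.1 + 2 • p.2 ∈ A)).card : ℝ) /
    (Fintype.card G : ℝ) ^ 2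

noncomputable section

namespace SoftBohr

variable {G : Type*} [AddCommGroup G] {d : ℕ}

/-- The translation-invariant pseudo-norm `∑ᵢ |Γᵢ(x) - 1|` on `G` attached to a finite family of
characters. Its balls are (up to the choice of norm on the torus) the Bohr sets of `Γ`. -/
def bohrNorm (Γ : Fin d → AddChar G ℂ) (x : G) : ℝ := ∑ i, ‖Γ i x - 1‖

/-! ### The pseudo-norm and the weights -/

lemma bohrNorm_nonneg (Γ : Fin d → AddChar G ℂ) (x : G) : 0 ≤ bohrNorm Γ x :=
  Finset.sum_nonneg fun _ _ => norm_nonneg _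

lemma bohrNorm_cons (Γ : Fin d → AddChar G ℂ) (ψ : AddChar G ℂ) (x : G) :
    bohrNorm (Fin.cons ψ Γ : Fin (d + 1) → AddChar G ℂ) x = ‖ψ x - 1‖ + bohrNorm Γ x := by
  simp [bohrNorm, Fin.sum_univ_succ]

variable [Fintype G]

/-- The total mass `∑ₓ exp (-L ‖x‖_Γ)`, playing the role of the size of the Bohr set of radius
about `1 / L`. -/
def mass (Γ : Fin d → AddChar G ℂ) (L : ℝ) : ℝ := ∑ x, Real.exp (-(L * bohrNorm Γ x))

/-- The *soft Bohr set*: the probability weight on `G` proportional to `exp (-L ‖x‖_Γ)`. -/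
def soft (Γ : Fin d → AddChar G ℂ) (L : ℝ) (x : G) : ℝ :=
  Real.exp (-(L * bohrNorm Γ x)) / mass Γ L

lemma norm_char_sub (ψ : AddChar G ℂ) (x y : G) : ‖ψ (x - y) - 1‖ = ‖ψ x - ψ y‖ := by
  have h : ψ x - ψ y = (ψ (x - y) - 1) * ψ y := by
    rw [sub_mul, ← AddChar.map_add_eq_mul]; simp
  rw [h, norm_mul, AddChar.norm_apply, mul_one]

lemma bohrNorm_neg (Γ : Fin d → AddChar G ℂ) (x : G) : bohrNorm Γ (-x) = bohrNorm Γ x := by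
  refine Finset.sum_congr rfl fun i _ => ?_
  have := norm_char_sub (Γ i) 0 x
  rw [zero_sub] at this
  rw [this, norm_sub_rev]; simp

lemma bohrNorm_add_le (Γ : Fin d → AddChar G ℂ) (x y : G) :
    bohrNorm Γ (x + y) ≤ bohrNorm Γ x + bohrNorm Γ y := by
  unfold bohrNorm
  rw [← Finset.sum_add_distrib]
  refine Finset.sum_le_sum fun i _ => ?_
  have h : Γ i (x + y) - 1 = (Γ i x - 1) * Γ i y + (Γ i y - 1) := by
    rw [AddChar.map_add_eq_mul]; ring
  rw [h]
  refine (norm_add_le _ _).trans ?_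
  rw [norm_mul, AddChar.norm_apply, mul_one]

lemma bohrNorm_two_nsmul_le (Γ : Fin d → AddChar G ℂ) (x : G) :
    bohrNorm Γ (2 • x) ≤ 2 * bohrNorm Γ x := by
  rw [two_nsmul, two_mul]; exact bohrNorm_add_le Γ x x

lemma bohrNorm_le (Γ : Fin d → AddChar G ℂ) (x : G) : bohrNorm Γ x ≤ 2 * d := by
  have : ∀ i ∈ (Finset.univ : Finset (Fin d)), ‖Γ i x - 1‖ ≤ 2 := fun i _ => by
    refine (norm_sub_le _ _).trans ?_
    rw [AddChar.norm_apply, norm_one]; norm_num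
  refine (Finset.sum_le_sum this).trans ?_
  simp [mul_comm]

lemma mass_pos (Γ : Fin d → AddChar G ℂ) (L : ℝ) : 0 < mass Γ L :=
  Finset.sum_pos (fun _ _ => Real.exp_pos _) ⟨0, Finset.mem_univ _⟩

lemma soft_nonneg (Γ : Fin d → AddChar G ℂ) (L : ℝ) (x : G) : 0 ≤ soft Γ L x :=
  div_nonneg (Real.exp_pos _).le (mass_pos Γ L).le

lemma sum_soft (Γ : Fin d → AddChar G ℂ) (L : ℝ) : ∑ x, soft Γ L x = 1 := by
  unfold soft
  rw [← Finset.sum_div]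
  exact div_self (mass_pos Γ L).ne'

/-- The density of a soft Bohr set varies slowly, at every point: this is what replaces the
regularity of sharp Bohr sets. -/
lemma abs_soft_sub_le (Γ : Fin d → AddChar G ℂ) {L : ℝ} (hL : 0 ≤ L) (x y : G) :
    |soft Γ L (x - y) - soft Γ L x| ≤ (Real.exp (L * bohrNorm Γ y) - 1) * soft Γ L x := by
  set t := L * bohrNorm Γ y with ht
  have h1 : L * bohrNorm Γ x ≤ L * bohrNorm Γ (x - y) + t := by
    have := bohrNorm_add_le Γ (x - y) y
    rw [sub_add_cancel] at this
    rw [ht, ← mul_add]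
    exact mul_le_mul_of_nonneg_left this hL
  have h2 : L * bohrNorm Γ (x - y) ≤ L * bohrNorm Γ x + t := by
    have := bohrNorm_add_le Γ x (-y)
    rw [bohrNorm_neg, ← sub_eq_add_neg] at this
    rw [ht, ← mul_add]
    exact mul_le_mul_of_nonneg_left this hL
  have e1 : soft Γ L (x - y) ≤ Real.exp t * soft Γ L x := by
    unfold soft
    rw [← mul_div_assoc, ← Real.exp_add]
    refine div_le_div_of_nonneg_right (Real.exp_le_exp.2 ?_) (mass_pos Γ L).le
    linarith
  have e2 : soft Γ L x * Real.exp (-t) ≤ soft Γ L (x - y) := by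
    unfold soft
    rw [div_mul_eq_mul_div, ← Real.exp_add]
    refine div_le_div_of_nonneg_right (Real.exp_le_exp.2 ?_) (mass_pos Γ L).le
    linarith
  -- `1 - exp (-t) ≤ t ≤ exp t - 1`
  have e3 : 1 - Real.exp (-t) ≤ Real.exp t - 1 := by
    have := Real.add_one_le_exp t
    have := Real.add_one_le_exp (-t)
    linarith
  have h0 := soft_nonneg Γ L x
  rw [abs_le]
  constructor
  · nlinarith [mul_le_mul_of_nonneg_right e3 h0]
  · linarith

lemma norm_shift_sub_le {E : Type*} [NormedAddCommGroup E] [NormedSpace ℝ E]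
    (Γ : Fin d → AddChar G ℂ) {L : ℝ} (hL : 0 ≤ L) (f : G → E) (hf : ∀ x, ‖f x‖ ≤ 1) (y : G) :
    ‖∑ x, soft Γ L x • f (x + y) - ∑ x, soft Γ L x • f x‖ ≤ Real.exp (L * bohrNorm Γ y) - 1 := by
  have h : ∑ x, soft Γ L x • f (x + y) = ∑ x, soft Γ L (x - y) • f x :=
    Fintype.sum_equiv (Equiv.addRight y) _ _ fun x => by simp
  rw [h, ← Finset.sum_sub_distrib]
  refine (norm_sum_le _ _).trans ?_
  have : ∀ x ∈ (Finset.univ : Finset G), ‖soft Γ L (x - y) • f x - soft Γ L x • f x‖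
      ≤ (Real.exp (L * bohrNorm Γ y) - 1) * soft Γ L x := fun x _ => by
    rw [← sub_smul, norm_smul, Real.norm_eq_abs]
    exact (mul_le_of_le_one_right (abs_nonneg _) (hf x)).trans (abs_soft_sub_le Γ hL x y)
  refine (Finset.sum_le_sum this).trans ?_
  rw [← Finset.mul_sum, sum_soft, mul_one]

/-- Averaging a bounded function over a soft Bohr set is almost unaffected by a further random
shift `φ y`, provided that `exp (L ‖φ y‖)` has expectation close to `1`. -/
lemma norm_mean_shift_sub_le {E : Type*} [NormedAddCommGroup E] [NormedSpace ℝ E]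
    (Γ : Fin d → AddChar G ℂ) {L ε : ℝ} (hL : 0 ≤ L) (f : G → E) (hf : ∀ x, ‖f x‖ ≤ 1)
    (p : G → ℝ) (hp : ∀ y, 0 ≤ p y) (hp1 : ∑ y, p y = 1) (φ : G → G)
    (hm : ∑ y, p y * Real.exp (L * bohrNorm Γ (φ y)) ≤ 1 + ε) :
    ‖∑ y, p y • (∑ x, soft Γ L x • f (x + φ y)) - ∑ x, soft Γ L x • f x‖ ≤ ε := by
  have h : ∑ x, soft Γ L x • f x = ∑ y, p y • ∑ x, soft Γ L x • f x := by
    rw [← Finset.sum_smul, hp1, one_smul]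
  rw [h, ← Finset.sum_sub_distrib]
  refine (norm_sum_le _ _).trans ?_
  have : ∀ y ∈ (Finset.univ : Finset G),
      ‖p y • (∑ x, soft Γ L x • f (x + φ y)) - p y • ∑ x, soft Γ L x • f x‖
      ≤ p y * Real.exp (L * bohrNorm Γ (φ y)) - p y := fun y _ => by
    rw [← smul_sub, norm_smul, Real.norm_of_nonneg (hp y)]
    have := mul_le_mul_of_nonneg_left (norm_shift_sub_le Γ hL f hf (φ y)) (hp y)
    linarith
  refine (Finset.sum_le_sum this).trans ?_
  rw [Finset.sum_sub_distrib, hp1]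
  linarith

/-! ### Doubling -/

/-- The majorant of `exp (-(|t| / 4))` on the unit interval `⌊t⌋ = j`. -/
def cellWeight (j : ℤ) : ℝ := Real.exp (-((|(j : ℝ)| - 1) / 4))

lemma summable_cellWeight : Summable cellWeight := by
  have h : Summable fun n : ℕ => Real.exp (1 / 4) * Real.exp ((n : ℝ) * (-(1 / 4))) :=
    (Real.summable_exp_nat_mul_iff.2 (by norm_num)).mul_left _
  refine Summable.of_nat_of_neg (h.congr fun n => ?_) (h.congr fun n => ?_)
  all_goals
    simp only [cellWeight]
    rw [← Real.exp_add]
    congr 1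
    simp
    ring

lemma exp_le_cellWeight (t : ℝ) : Real.exp (-(|t| / 4)) ≤ cellWeight ⌊t⌋ := by
  unfold cellWeight
  refine Real.exp_le_exp.2 ?_
  have h1 := Int.floor_le t
  have h2 := Int.lt_floor_add_one t
  have : |(⌊t⌋ : ℝ)| ≤ |t| + 1 := by
    have : |(⌊t⌋ : ℝ) - t| ≤ 1 := abs_le.2 ⟨by linarith, by linarith⟩
    have := abs_sub_abs_le_abs_sub (⌊t⌋ : ℝ) t
    linarith
  linarith

/-- The cell of side `1 / L` of the `i`-th complex coordinate which contains `Γᵢ(x) - 1`. -/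
def cell (Γ : Fin d → AddChar G ℂ) (L : ℝ) (x : G) (i : Fin d) : ℤ × ℤ :=
  (⌊L * (Γ i x - 1).re⌋, ⌊L * (Γ i x - 1).im⌋)

/-- Two points of the same cell differ by an element of pseudo-norm at most `2 d / L`, so that the
number of points in a cell is at most a multiple of the mass at scale `L`. -/
lemma card_cell_le (Γ : Fin d → AddChar G ℂ) {L : ℝ} (hL : 0 < L) (c : Fin d → ℤ × ℤ) :
    ((Finset.univ.filter fun x : G => cell Γ L x = c).card : ℝ) ≤
      Real.exp 2 ^ d * mass Γ L := by
  rcases (Finset.univ.filter fun x : G => cell Γ L x = c).eq_empty_or_nonempty with h | ⟨y, hy⟩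
  · rw [h]
    simpa using mul_nonneg (pow_nonneg (Real.exp_pos 2).le d) (mass_pos Γ L).le
  have hy' : cell Γ L y = c := (Finset.mem_filter.1 hy).2
  have key : ∀ x, cell Γ L x = c → L * bohrNorm Γ (x - y) ≤ 2 * d := by
    intro x hx
    have hxy : cell Γ L x = cell Γ L y := hx.trans hy'.symm
    have hi : ∀ i ∈ (Finset.univ : Finset (Fin d)), L * ‖Γ i (x - y) - 1‖ ≤ 2 := by
      intro i _
      have e := congrFun hxy i
      simp only [cell, Prod.mk.injEq] at e
      have e1 := (Int.abs_sub_lt_one_of_floor_eq_floor e.1).le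
      have e2 := (Int.abs_sub_lt_one_of_floor_eq_floor e.2).le
      rw [norm_char_sub]
      have h3 := Complex.norm_le_abs_re_add_abs_im (Γ i x - Γ i y)
      have e1' : L * |(Γ i x - Γ i y).re| ≤ 1 := by
        rwa [← mul_sub, abs_mul, abs_of_pos hL, ← Complex.sub_re, sub_sub_sub_cancel_right] at e1
      have e2' : L * |(Γ i x - Γ i y).im| ≤ 1 := by
        rwa [← mul_sub, abs_mul, abs_of_pos hL, ← Complex.sub_im, sub_sub_sub_cancel_right] at e2
      nlinarith [mul_le_mul_of_nonneg_left h3 hL.le]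
    rw [bohrNorm, Finset.mul_sum]
    refine (Finset.sum_le_sum hi).trans ?_
    simp [mul_comm]
  calc ((Finset.univ.filter fun x : G => cell Γ L x = c).card : ℝ)
      = ∑ x ∈ Finset.univ.filter fun x : G => cell Γ L x = c, (1 : ℝ) := by simp
    _ ≤ ∑ x ∈ Finset.univ.filter fun x : G => cell Γ L x = c,
          Real.exp 2 ^ d * Real.exp (-(L * bohrNorm Γ (x - y))) := by
        refine Finset.sum_le_sum fun x hx => ?_
        have := key x (Finset.mem_filter.1 hx).2
        rw [← Real.exp_nat_mul, ← Real.exp_add]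
        refine Real.one_le_exp ?_
        linarith
    _ ≤ ∑ x, Real.exp 2 ^ d * Real.exp (-(L * bohrNorm Γ (x - y))) :=
        Finset.sum_le_sum_of_subset_of_nonneg (Finset.subset_univ _) fun _ _ _ => by positivity
    _ = Real.exp 2 ^ d * mass Γ L := by
        rw [← Finset.mul_sum, mass]
        congr 1
        exact Fintype.sum_equiv (Equiv.subRight y) _ _ fun x => by simp

/-- Doubling: halving `L` multiplies the mass by a factor at most exponential in the rank. The
group is covered by cells of side `1 / L`; each holds at most `exp 2 ^ d * mass Γ L` points, and the
weights `exp (-(L / 2) ‖x‖)` of the cells sum to at most `O(1) ^ d`. -/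
lemma mass_half_le (Γ : Fin d → AddChar G ℂ) {L : ℝ} (hL : 0 < L) :
    mass Γ (L / 2) ≤ (Real.exp 2 * (∑' j, cellWeight j) ^ 2) ^ d * mass Γ L := by
  set S := ∑' j, cellWeight j with hS
  set g : ℤ × ℤ → ℝ := fun j => cellWeight j.1 * cellWeight j.2 with hg
  have g0 : ∀ j, 0 ≤ g j := fun j => mul_nonneg (Real.exp_pos _).le (Real.exp_pos _).le
  have hw : ∀ x, Real.exp (-(L / 2 * bohrNorm Γ x)) ≤ ∏ i, g (cell Γ L x i) := by
    intro x
    rw [bohrNorm, Finset.mul_sum, ← Finset.sum_neg_distrib, Real.exp_sum]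
    refine Finset.prod_le_prod (fun _ _ => (Real.exp_pos _).le) fun i _ => ?_
    have h1 := exp_le_cellWeight (L * (Γ i x - 1).re)
    have h2 := exp_le_cellWeight (L * (Γ i x - 1).im)
    refine le_trans ?_ (mul_le_mul h1 h2 (Real.exp_pos _).le (Real.exp_pos _).le)
    rw [← Real.exp_add]
    refine Real.exp_le_exp.2 ?_
    rw [abs_mul, abs_mul, abs_of_pos hL]
    have h3 := mul_le_mul_of_nonneg_left (Complex.abs_re_le_norm (Γ i x - 1)) hL.le
    have h4 := mul_le_mul_of_nonneg_left (Complex.abs_im_le_norm (Γ i x - 1)) hL.le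
    linarith
  -- a finite box of cells that contains all cells met by `G`
  obtain ⟨J, hJ⟩ : ∃ J : Finset ℤ, ∀ x i, (cell Γ L x i).1 ∈ J ∧ (cell Γ L x i).2 ∈ J := by
    refine ⟨(Finset.univ.image fun p : G × Fin d => (cell Γ L p.1 p.2).1) ∪
      (Finset.univ.image fun p : G × Fin d => (cell Γ L p.1 p.2).2), fun x i => ⟨?_, ?_⟩⟩
    · exact Finset.mem_union_left _ (Finset.mem_image_of_mem _ (Finset.mem_univ (x, i)))
    · exact Finset.mem_union_right _ (Finset.mem_image_of_mem _ (Finset.mem_univ (x, i)))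
  have hsum : ∑ j ∈ J ×ˢ J, g j ≤ S ^ 2 := by
    have h1 : ∑ j ∈ J, cellWeight j ≤ S :=
      summable_cellWeight.sum_le_tsum J fun _ _ => (Real.exp_pos _).le
    rw [Finset.sum_product]
    simp only [hg]
    rw [← Finset.sum_mul_sum, sq]
    have h0 : 0 ≤ ∑ j ∈ J, cellWeight j := Finset.sum_nonneg fun _ _ => (Real.exp_pos _).le
    exact mul_le_mul h1 h1 h0 (h0.trans h1)
  calc mass Γ (L / 2) ≤ ∑ x, ∏ i, g (cell Γ L x i) := Finset.sum_le_sum fun x _ => hw x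
    _ = ∑ c ∈ Fintype.piFinset fun _ : Fin d => J ×ˢ J,
          ∑ x ∈ Finset.univ.filter fun x : G => cell Γ L x = c, ∏ i, g (cell Γ L x i) := by
        refine (Finset.sum_fiberwise_of_maps_to (fun x _ => ?_) _).symm
        rw [Fintype.mem_piFinset]
        exact fun i => Finset.mem_product.2 (hJ x i)
    _ = ∑ c ∈ Fintype.piFinset fun _ : Fin d => J ×ˢ J,
          ((Finset.univ.filter fun x : G => cell Γ L x = c).card : ℝ) * ∏ i, g (c i) := by
        refine Finset.sum_congr rfl fun c _ => ?_
        rw [← nsmul_eq_mul, ← Finset.sum_const]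
        refine Finset.sum_congr rfl fun x hx => ?_
        rw [(Finset.mem_filter.1 hx).2]
    _ ≤ ∑ c ∈ Fintype.piFinset fun _ : Fin d => J ×ˢ J,
          (Real.exp 2 ^ d * mass Γ L) * ∏ i, g (c i) :=
        Finset.sum_le_sum fun c _ => mul_le_mul_of_nonneg_right (card_cell_le Γ hL c)
          (Finset.prod_nonneg fun _ _ => g0 _)
    _ = (Real.exp 2 ^ d * mass Γ L) * (∑ j ∈ J ×ˢ J, g j) ^ d := by
        rw [← Finset.mul_sum, ← Finset.prod_univ_sum]
        simp
    _ ≤ (Real.exp 2 ^ d * mass Γ L) * (S ^ 2) ^ d := by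
        refine mul_le_mul_of_nonneg_left (pow_le_pow_left₀ (Finset.sum_nonneg fun _ _ => g0 _)
          hsum d) (mul_nonneg (by positivity) (mass_pos Γ L).le)
    _ = _ := by rw [mul_pow]; ring

/-- The doubling constant in the form used below: a power of two with a fixed exponent. -/
lemma exists_doubling : ∃ c : ℕ, ∀ (G : Type) [AddCommGroup G] [Fintype G] (d : ℕ)
    (Γ : Fin d → AddChar G ℂ) (L : ℝ), 0 < L →
      mass Γ (L / 2) ≤ (2 : ℝ) ^ (c * d) * mass Γ L := by
  obtain ⟨c, hc⟩ := pow_unbounded_of_one_lt (Real.exp 2 * (∑' j, cellWeight j) ^ 2)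
    (one_lt_two : (1 : ℝ) < 2)
  refine ⟨c, fun G _ _ d Γ L hL => (mass_half_le Γ hL).trans ?_⟩
  rw [pow_mul]
  exact mul_le_mul_of_nonneg_right (pow_le_pow_left₀ (by positivity) hc.le d) (mass_pos Γ L).le

lemma mass_lower (Γ : Fin d → AddChar G ℂ) (c : ℕ)
    (hc : ∀ L : ℝ, 0 < L → mass Γ (L / 2) ≤ (2 : ℝ) ^ (c * d) * mass Γ L) (k : ℕ) :
    Real.exp (-(2 * d)) * Fintype.card G ≤ (2 : ℝ) ^ (c * d * k) * mass Γ (2 ^ k) := by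
  induction k with
  | zero =>
    simp only [mul_zero, pow_zero, one_mul]
    have : ∀ x ∈ (Finset.univ : Finset G),
        Real.exp (-(2 * d)) ≤ Real.exp (-(1 * bohrNorm Γ x)) := fun x _ =>
      Real.exp_le_exp.2 (by have := bohrNorm_le Γ x; linarith)
    have := Finset.sum_le_sum this
    simp only [Finset.sum_const, Finset.card_univ, nsmul_eq_mul] at this
    rw [mul_comm]
    exact this
  | succ k ih =>
    refine ih.trans ?_
    have := hc (2 ^ (k + 1)) (by positivity)
    rw [show (2 : ℝ) ^ (k + 1) / 2 = 2 ^ k by rw [pow_succ]; ring] at this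
    calc _ ≤ (2 : ℝ) ^ (c * d * k) * (2 ^ (c * d) * mass Γ (2 ^ (k + 1))) :=
          mul_le_mul_of_nonneg_left this (by positivity)
      _ = _ := by rw [← mul_assoc, ← pow_add]; ring_nf

/-- The exponential moment of a soft Bohr set at scale `4 n L` with respect to the coarser scale
`2 L` is close to `1`. By convexity its `n`-th power is at most the moment at scale `2 n L`, which
is bounded by doubling; Bernoulli's inequality concludes. -/
lemma moment_le (Γ : Fin d → AddChar G ℂ) (c : ℕ)
    (hc : ∀ L : ℝ, 0 < L → mass Γ (L / 2) ≤ (2 : ℝ) ^ (c * d) * mass Γ L) {n : ℕ} {ε L : ℝ}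
    (hε : 0 < ε) (hn : (2 : ℝ) ^ (c * d) ≤ n * ε) (hL : 0 < L) :
    ∑ y, soft Γ (4 * n * L) y * Real.exp (2 * L * bohrNorm Γ y) ≤ 1 + ε := by
  by_contra! hcon
  have hn0 : 0 < (n : ℝ) := by
    by_contra! h
    have : (0 : ℝ) < 2 ^ (c * d) := by positivity
    nlinarith
  have h1 : (∑ y, soft Γ (4 * n * L) y * Real.exp (2 * L * bohrNorm Γ y)) ^ n ≤
      ∑ y, soft Γ (4 * n * L) y * Real.exp (2 * L * bohrNorm Γ y) ^ n :=
    Real.pow_arith_mean_le_arith_mean_pow _ _ _ (fun y _ => soft_nonneg _ _ y) (sum_soft _ _)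
      (fun _ _ => (Real.exp_pos _).le) n
  have h2 : ∑ y, soft Γ (4 * n * L) y * Real.exp (2 * L * bohrNorm Γ y) ^ n =
      mass Γ (4 * n * L / 2) / mass Γ (4 * n * L) := by
    rw [mass, Finset.sum_div]
    refine Finset.sum_congr rfl fun y _ => ?_
    rw [soft, div_mul_eq_mul_div, ← Real.exp_nat_mul, ← Real.exp_add]
    congr 2
    ring
  have h3 : mass Γ (4 * n * L / 2) / mass Γ (4 * n * L) ≤ 2 ^ (c * d) :=
    (div_le_iff₀ (mass_pos _ _)).2 (hc _ (by positivity))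
  have h4 := one_add_mul_le_pow (show (-2 : ℝ) ≤ ε by linarith) n
  have h5 := pow_le_pow_left₀ (by positivity : (0 : ℝ) ≤ 1 + ε) hcon.le n
  linarith

/-! ### The Fourier-analytic input -/

lemma sum_char_eq (x : G) :
    ∑ ψ : AddChar G ℂ, ψ x = if x = 0 then (Fintype.card G : ℂ) else 0 :=
  AddChar.sum_apply_eq_ite x

lemma parseval (F : G → ℝ) :
    ∑ ψ : AddChar G ℂ, ‖∑ u, (F u : ℂ) * ψ (-u)‖ ^ 2 = Fintype.card G * ∑ u, F u ^ 2 := by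
  have h : ((∑ ψ : AddChar G ℂ, ‖∑ u, (F u : ℂ) * ψ (-u)‖ ^ 2 : ℝ) : ℂ) =
      ((Fintype.card G * ∑ u, F u ^ 2 : ℝ) : ℂ) := by
    push_cast
    have : ∀ ψ : AddChar G ℂ, ((‖∑ u, (F u : ℂ) * ψ (-u)‖ : ℝ) : ℂ) ^ 2 =
        ∑ u, ∑ w, (F u : ℂ) * F w * ψ (w - u) := by
      intro ψ
      rw [← Complex.mul_conj', map_sum, Finset.sum_mul_sum]
      refine Finset.sum_congr rfl fun u _ => Finset.sum_congr rfl fun w _ => ?_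
      rw [map_mul, Complex.conj_ofReal, ← AddChar.map_neg_eq_conj, neg_neg, sub_eq_add_neg,
        AddChar.map_add_eq_mul]
      ring
    simp only [this]
    rw [Finset.sum_comm, Finset.mul_sum]
    refine Finset.sum_congr rfl fun u _ => ?_
    rw [Finset.sum_comm]
    simp only [← Finset.mul_sum, sum_char_eq, sub_eq_zero]
    simp
    ring
  exact_mod_cast h

/-- The count of solutions of `u + w = 2 v`, weighted by `F` on `u` and `w` and by `k` on `v`, is
controlled by the largest Fourier coefficient of `k` at a character of the form `ψ(2 ·)`. -/
lemma abs_trilinear_le (k F : G → ℝ) (S : ℝ)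
    (hS : ∀ ψ : AddChar G ℂ, ‖∑ v, (k v : ℂ) * ψ (2 • v)‖ ≤ S) :
    |∑ u, ∑ v, k v * F u * F (2 • v - u)| ≤ S * ∑ u, F u ^ 2 := by
  have hcard : (0 : ℝ) < Fintype.card G := by exact_mod_cast Fintype.card_pos
  have h : ((Fintype.card G * ∑ u, ∑ v, k v * F u * F (2 • v - u) : ℝ) : ℂ) =
      ∑ ψ : AddChar G ℂ, (∑ v, (k v : ℂ) * ψ (2 • v)) * (∑ u, (F u : ℂ) * ψ (-u)) ^ 2 := by
    have e : ∀ ψ : AddChar G ℂ, (∑ v, (k v : ℂ) * ψ (2 • v)) * (∑ u, (F u : ℂ) * ψ (-u)) ^ 2 =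
        ∑ u, ∑ v, ∑ w, (k v : ℂ) * F u * F w * ψ (2 • v - u - w) := by
      intro ψ
      rw [sq, Finset.sum_mul_sum, Finset.sum_mul_sum, Finset.sum_comm]
      refine Finset.sum_congr rfl fun u _ => Finset.sum_congr rfl fun v _ => ?_
      rw [Finset.mul_sum]
      refine Finset.sum_congr rfl fun w _ => ?_
      rw [sub_eq_add_neg, sub_eq_add_neg, AddChar.map_add_eq_mul, AddChar.map_add_eq_mul]
      ring
    simp only [e]
    refine Eq.trans ?_ Finset.sum_comm
    push_cast
    rw [Finset.mul_sum]
    refine Finset.sum_congr rfl fun u _ => ?_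
    rw [Finset.sum_comm, Finset.mul_sum]
    refine Finset.sum_congr rfl fun v _ => ?_
    rw [Finset.sum_comm]
    simp only [← Finset.mul_sum, sum_char_eq, sub_eq_zero]
    simp
    ring
  have h2 : Fintype.card G * |∑ u, ∑ v, k v * F u * F (2 • v - u)| ≤
      Fintype.card G * (S * ∑ u, F u ^ 2) := by
    calc Fintype.card G * |∑ u, ∑ v, k v * F u * F (2 • v - u)|
        = ‖((Fintype.card G * ∑ u, ∑ v, k v * F u * F (2 • v - u) : ℝ) : ℂ)‖ := by
          rw [Complex.norm_real, Real.norm_eq_abs, abs_mul, abs_of_pos hcard]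
      _ ≤ ∑ ψ : AddChar G ℂ, S * ‖∑ u, (F u : ℂ) * ψ (-u)‖ ^ 2 := by
          rw [h]
          refine (norm_sum_le _ _).trans (Finset.sum_le_sum fun ψ _ => ?_)
          rw [norm_mul, norm_pow]
          exact mul_le_mul_of_nonneg_right (hS ψ) (by positivity)
      _ = Fintype.card G * (S * ∑ u, F u ^ 2) := by
          rw [← Finset.mul_sum, parseval]; ring
  exact le_of_mul_le_mul_left h2 hcard

/-! ### The counting step -/

/-- If `a` has density about `δ` on a soft Bohr set, and no noticeably larger density on any
translate of the soft Bohr set obtained by adding the frequency `ψ` and refining the scale, then the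
balanced function of `a` has small Fourier coefficient at `ψ`. -/
lemma norm_coeff_le (a : G → ℝ) (a0 : ∀ x, 0 ≤ a x) (a1 : ∀ x, a x ≤ 1)
    (Γ : Fin d → AddChar G ℂ) (ψ : AddChar G ℂ) {L L' δ ε θ : ℝ} (hL : 1 ≤ L)
    (hδ0 : 0 ≤ δ) (hδ1 : δ ≤ 1)
    (hm : ∑ y, soft (Fin.cons ψ Γ : Fin (d + 1) → AddChar G ℂ) L' y *
      Real.exp (L * bohrNorm (Fin.cons ψ Γ : Fin (d + 1) → AddChar G ℂ) y) ≤ 1 + ε)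
    (hu : ∀ x, ∑ y, soft (Fin.cons ψ Γ : Fin (d + 1) → AddChar G ℂ) L' y * a (x + y) ≤ δ + ε)
    (hP : δ - θ ≤ ∑ v, soft Γ L v * a v) :
    ‖∑ v, ((soft Γ L v * (a v - δ) : ℝ) : ℂ) * ψ v‖ ≤ 5 * ε + θ := by
  set p := soft (Fin.cons ψ Γ : Fin (d + 1) → AddChar G ℂ) L' with hp
  have p0 : ∀ y, 0 ≤ p y := soft_nonneg _ _
  have p1 : ∑ y, p y = 1 := sum_soft _ _
  have ν0 : ∀ y, 0 ≤ soft Γ L y := soft_nonneg _ _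
  have ν1 : ∑ y, soft Γ L y = 1 := sum_soft _ _
  have hL0 : 0 ≤ L := by linarith
  have hm1 : ∑ y, p y * Real.exp (L * bohrNorm Γ y) ≤ 1 + ε := by
    refine le_trans (Finset.sum_le_sum fun y _ => mul_le_mul_of_nonneg_left
      (Real.exp_le_exp.2 (mul_le_mul_of_nonneg_left ?_ hL0)) (p0 y)) hm
    rw [bohrNorm_cons]
    linarith [norm_nonneg (ψ y - 1)]
  have hm2 : ∑ y, p y * ‖ψ y - 1‖ ≤ ε := by
    have : ∀ y ∈ (Finset.univ : Finset G), p y * ‖ψ y - 1‖ ≤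
        p y * Real.exp (L * bohrNorm (Fin.cons ψ Γ : Fin (d + 1) → AddChar G ℂ) y) - p y := by
      intro y _
      rw [bohrNorm_cons]
      have h1 := Real.add_one_le_exp (L * (‖ψ y - 1‖ + bohrNorm Γ y))
      have h2 : ‖ψ y - 1‖ ≤ L * (‖ψ y - 1‖ + bohrNorm Γ y) := by
        nlinarith [norm_nonneg (ψ y - 1), bohrNorm_nonneg Γ y,
          mul_nonneg (sub_nonneg.2 hL) (norm_nonneg (ψ y - 1)),
          mul_nonneg hL0 (bohrNorm_nonneg Γ y)]
      nlinarith [mul_le_mul_of_nonneg_left (h2.trans (by linarith :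
        L * (‖ψ y - 1‖ + bohrNorm Γ y) ≤ Real.exp (L * (‖ψ y - 1‖ + bohrNorm Γ y)) - 1)) (p0 y)]
    refine (Finset.sum_le_sum this).trans ?_
    rw [Finset.sum_sub_distrib, p1]
    linarith
  have habs : ∀ x, |a x - δ| ≤ 1 := fun x => abs_le.2 ⟨by linarith [a0 x], by linarith [a1 x]⟩
  -- first the argument of `(a - δ) ψ` is shifted by a random `y`
  set f : G → ℂ := fun x => ((a x - δ : ℝ) : ℂ) * ψ x with hf
  have hf1 : ∀ x, ‖f x‖ ≤ 1 := fun x => by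
    simp only [hf]
    rw [norm_mul, AddChar.norm_apply, mul_one, Complex.norm_real]
    exact habs x
  have s1 := norm_mean_shift_sub_le Γ hL0 f hf1 p p0 p1 (fun y => y) hm1
  have e0 : ∑ v, ((soft Γ L v * (a v - δ) : ℝ) : ℂ) * ψ v = ∑ x, soft Γ L x • f x := by
    refine Finset.sum_congr rfl fun v _ => ?_
    simp only [hf, Complex.real_smul]
    push_cast
    ring
  -- then the shift is removed from the character
  set D : G → ℝ := fun v => ∑ y, p y * a (v + y) with hD
  have s2 : ‖∑ y, p y • (∑ x, soft Γ L x • f (x + y)) -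
      ∑ x, ((soft Γ L x * (D x - δ) : ℝ) : ℂ) * ψ x‖ ≤ ε := by
    have e1 : ∑ x, ((soft Γ L x * (D x - δ) : ℝ) : ℂ) * ψ x =
        ∑ y, p y • (∑ x, soft Γ L x • (((a (x + y) - δ : ℝ) : ℂ) * ψ x)) := by
      have : ∀ x, D x - δ = ∑ y, p y * (a (x + y) - δ) := fun x => by
        simp only [hD, mul_sub, Finset.sum_sub_distrib, ← Finset.sum_mul, p1, one_mul]
      simp only [this, Finset.smul_sum]
      rw [Finset.sum_comm]
      refine Finset.sum_congr rfl fun x _ => ?_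
      rw [Finset.mul_sum]
      push_cast
      rw [Finset.sum_mul]
      refine Finset.sum_congr rfl fun y _ => ?_
      simp only [Complex.real_smul]
      ring
    rw [e1, ← Finset.sum_sub_distrib]
    refine (norm_sum_le _ _).trans (le_trans (Finset.sum_le_sum fun y _ => ?_) hm2)
    rw [← smul_sub, norm_smul, Real.norm_of_nonneg (p0 y), ← Finset.sum_sub_distrib]
    refine mul_le_mul_of_nonneg_left ?_ (p0 y)
    refine (norm_sum_le _ _).trans (le_trans (Finset.sum_le_sum fun x _ => ?_)
      (le_of_eq (show ∑ x, soft Γ L x * ‖ψ y - 1‖ = _ by rw [← Finset.sum_mul, ν1, one_mul])))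
    rw [← smul_sub, norm_smul, Real.norm_of_nonneg (ν0 x)]
    refine mul_le_mul_of_nonneg_left ?_ (ν0 x)
    simp only [hf]
    rw [← mul_sub, AddChar.map_add_eq_mul, show ψ x * ψ y - ψ x = ψ x * (ψ y - 1) by ring,
      norm_mul, norm_mul, AddChar.norm_apply, one_mul, Complex.norm_real]
    exact mul_le_of_le_one_left (norm_nonneg _) (habs _)
  -- the local densities `D` are at most `δ + ε` and at least `δ - θ - ε` on average
  have s3 := norm_mean_shift_sub_le Γ hL0 a
    (fun x => by rw [Real.norm_of_nonneg (a0 x)]; exact a1 x) p p0 p1 (fun y => y) hm1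
  have e3 : ∑ y, p y • (∑ x, soft Γ L x • a (x + y)) = ∑ x, soft Γ L x * D x := by
    simp only [hD, smul_eq_mul, Finset.mul_sum]
    rw [Finset.sum_comm]
    exact Finset.sum_congr rfl fun x _ => Finset.sum_congr rfl fun y _ => by ring
  rw [e3, Real.norm_eq_abs] at s3
  simp only [smul_eq_mul] at s3
  have s4 : ‖∑ x, ((soft Γ L x * (D x - δ) : ℝ) : ℂ) * ψ x‖ ≤ 3 * ε + θ := by
    have : ∀ x ∈ (Finset.univ : Finset G), ‖((soft Γ L x * (D x - δ) : ℝ) : ℂ) * ψ x‖ ≤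
        soft Γ L x * (δ + 2 * ε) - soft Γ L x * D x := fun x _ => by
      rw [norm_mul, AddChar.norm_apply, mul_one, Complex.norm_real, norm_mul,
        Real.norm_of_nonneg (ν0 x), ← mul_sub, Real.norm_eq_abs]
      refine mul_le_mul_of_nonneg_left ?_ (ν0 x)
      have := hu x
      have hε : 0 ≤ ε := (Finset.sum_nonneg fun y _ =>
        mul_nonneg (p0 y) (norm_nonneg _)).trans hm2
      exact abs_le.2 ⟨by linarith, by simp only [hD]; linarith⟩
    refine (norm_sum_le _ _).trans ((Finset.sum_le_sum this).trans ?_)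
    rw [Finset.sum_sub_distrib, ← Finset.sum_mul, ν1, one_mul]
    linarith [(abs_le.1 s3).1]
  rw [e0]
  rw [norm_sub_rev] at s1
  have t1 := norm_le_norm_add_norm_sub' (∑ x, soft Γ L x • f x)
    (∑ y, p y • (∑ x, soft Γ L x • f (x + y)))
  have t2 := norm_le_norm_add_norm_sub' (∑ y, p y • (∑ x, soft Γ L x • f (x + y)))
    (∑ x, ((soft Γ L x * (D x - δ) : ℝ) : ℂ) * ψ x)
  linarith

/-- The weighted number of solutions of `u + w = 2 v`, that is, of three-term progressions
`u, v, 2 v - u`. -/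
def apSum (a : G → ℝ) : ℝ := ∑ u, ∑ v, a u * a v * a (2 • v - u)

lemma apSum_translate (a : G → ℝ) (t : G) : apSum (fun x => a (t + x)) = apSum a := by
  unfold apSum
  refine Fintype.sum_equiv (Equiv.addLeft t) _ _ fun u => ?_
  refine Fintype.sum_equiv (Equiv.addLeft t) _ _ fun v => ?_
  simp only [Equiv.coe_addLeft]
  congr 2
  rw [nsmul_add, two_nsmul t]
  abel

/-- Lower bound for the number of progressions with outer terms weighted at scale `L₁` and middle
term weighted at the finer scale `L₂`. The outer weight is distributed symmetrically, as a square
root on each outer term, which makes the Fourier bound lossless. The contribution of the constant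
part of the middle term is bounded below because almost all local densities at scale `L₂` have to be
close to their upper bound `δ + ε`. -/
lemma core_count (a : G → ℝ) (a0 : ∀ x, 0 ≤ a x) (a1 : ∀ x, a x ≤ 1)
    (Γ : Fin d → AddChar G ℂ) {L₁ L₂ δ ε θ S : ℝ} (hL₁ : 0 ≤ L₁) (hL₂ : 0 ≤ L₂) (hδ0 : 0 ≤ δ) (hδ1 : δ ≤ 1)
    (hε : 0 ≤ ε) (hθ : 0 ≤ θ)
    (hm : ∑ v, soft Γ L₂ v * Real.exp (L₁ * bohrNorm Γ v) ≤ 1 + ε)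
    (hu : ∀ u, ∑ v, soft Γ L₂ v * a (2 • v - u) ≤ δ + ε)
    (hP1 : δ - θ ≤ ∑ u, soft Γ L₁ u * a u)
    (hP3 : δ - θ ≤ ∑ u, soft Γ L₁ u * ∑ v, soft Γ L₂ v * a (2 • v - u))
    (hS : ∀ ψ : AddChar G ℂ, ‖∑ v, ((soft Γ L₂ v * (a v - δ) : ℝ) : ℂ) * ψ (2 • v)‖ ≤ S) :
    (δ ^ 3 - 2 * θ - 2 * ε - S) * (mass Γ L₁ * mass Γ L₂) ≤ apSum a := by
  set M := mass Γ L₁ with hM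
  have M0 : 0 < M := mass_pos _ _
  set ν := soft Γ L₂ with hν
  have ν0 : ∀ y, 0 ≤ ν y := soft_nonneg _ _
  have ν1 : ∑ y, ν y = 1 := sum_soft _ _
  set μ := soft Γ L₁ with hμ
  have μ0 : ∀ y, 0 ≤ μ y := soft_nonneg _ _
  have μ1 : ∑ y, μ y = 1 := sum_soft _ _
  set ω : G → ℝ := fun u => Real.exp (-(L₁ / 2 * bohrNorm Γ u)) with hω
  have ω0 : ∀ u, 0 ≤ ω u := fun u => (Real.exp_pos _).le
  have ω1 : ∀ u, ω u ≤ 1 := fun u => by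
    simp only [hω]
    rw [Real.exp_le_one_iff]
    have := mul_nonneg hL₁ (bohrNorm_nonneg Γ u)
    linarith
  have ω2 : ∀ u, ω u * ω u = M * μ u := fun u => by
    simp only [hω, hμ, soft]
    rw [← Real.exp_add, mul_div_cancel₀ _ M0.ne']
    congr 1; ring
  set F : G → ℝ := fun u => ω u * a u with hF
  have F0 : ∀ u, 0 ≤ F u := fun u => mul_nonneg (ω0 u) (a0 u)
  have F1 : ∀ u, F u ≤ a u := fun u => mul_le_of_le_one_left (a0 u) (ω1 u)
  have hF2 : ∑ u, F u ^ 2 ≤ M := by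
    have : ∀ u ∈ (Finset.univ : Finset G), F u ^ 2 ≤ M * μ u := fun u _ => by
      rw [← ω2, ← sq]
      exact pow_le_pow_left₀ (F0 u) (mul_le_of_le_one_right (ω0 u) (a1 u)) 2
    refine (Finset.sum_le_sum this).trans ?_
    rw [← Finset.mul_sum, μ1, mul_one]
  have S0 : 0 ≤ S := (norm_nonneg _).trans (hS 0)
  have w1 := abs_trilinear_le (fun v => ν v * (a v - δ)) F S hS
  have w1' := (abs_le.1 w1).1
  have hSM : S * ∑ u, F u ^ 2 ≤ S * M := mul_le_mul_of_nonneg_left hF2 S0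
  -- the main term, with the middle indicator replaced by `δ`
  have w0 : M * (∑ u, μ u * (a u * ∑ v, ν v * a (2 • v - u)) - ε) ≤
      ∑ u, ∑ v, ν v * F u * F (2 • v - u) := by
    have pt : ∀ u v, M * (μ u * (a u * (ν v * a (2 • v - u)))) -
        M * (μ u * (ν v * Real.exp (L₁ * bohrNorm Γ v) - ν v)) ≤
        ν v * F u * F (2 • v - u) := by
      intro u v
      set t := L₁ * bohrNorm Γ v with ht
      have h1 : ω u * Real.exp (-t) ≤ ω (2 • v - u) := by
        simp only [hω]
        rw [← Real.exp_add]
        refine Real.exp_le_exp.2 ?_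
        have h2 := bohrNorm_add_le Γ (2 • v) (-u)
        rw [bohrNorm_neg, ← sub_eq_add_neg] at h2
        have h3 := h2.trans (add_le_add_left (bohrNorm_two_nsmul_le Γ v) _)
        have h4 := mul_le_mul_of_nonneg_left h3 hL₁
        rw [ht]
        linarith
      have h2 : 2 - Real.exp t ≤ Real.exp (-t) := by
        have := Real.add_one_le_exp t
        have := Real.add_one_le_exp (-t)
        linarith
      have h3 : 1 ≤ Real.exp t := Real.one_le_exp (mul_nonneg hL₁ (bohrNorm_nonneg Γ v))
      have h4 : ω u * ω u * (2 - Real.exp t) ≤ ω u * ω (2 • v - u) := by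
        calc ω u * ω u * (2 - Real.exp t) ≤ ω u * ω u * Real.exp (-t) :=
              mul_le_mul_of_nonneg_left h2 (mul_nonneg (ω0 u) (ω0 u))
          _ = ω u * (ω u * Real.exp (-t)) := by ring
          _ ≤ _ := mul_le_mul_of_nonneg_left h1 (ω0 u)
      rw [ω2] at h4
      set b := a u * a (2 • v - u) with hb
      have b0 : 0 ≤ b := mul_nonneg (a0 _) (a0 _)
      have b1 : b ≤ 1 := mul_le_one₀ (a1 _) (a0 _) (a1 _)
      have m0 : 0 ≤ M * μ u := mul_nonneg M0.le (μ0 u)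
      calc M * (μ u * (a u * (ν v * a (2 • v - u)))) - M * (μ u * (ν v * Real.exp t - ν v))
          = ν v * ((M * μ u) * (b - (Real.exp t - 1))) := by rw [hb]; ring
        _ ≤ ν v * (b * (M * μ u * (2 - Real.exp t))) := by
            refine mul_le_mul_of_nonneg_left ?_ (ν0 v)
            have : b - (Real.exp t - 1) ≤ b * (2 - Real.exp t) := by nlinarith
            nlinarith [mul_le_mul_of_nonneg_left this m0]
        _ ≤ ν v * (b * (ω u * ω (2 • v - u))) :=
            mul_le_mul_of_nonneg_left (mul_le_mul_of_nonneg_left h4 b0) (ν0 v)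
        _ = ν v * F u * F (2 • v - u) := by rw [hb]; simp only [hF]; ring
    have hs := Finset.sum_le_sum fun u (_ : u ∈ (Finset.univ : Finset G)) =>
      Finset.sum_le_sum fun v (_ : v ∈ (Finset.univ : Finset G)) => pt u v
    refine le_trans ?_ hs
    simp only [Finset.sum_sub_distrib, ← Finset.mul_sum]
    rw [← Finset.sum_mul, μ1, ν1]
    nlinarith
  have q : δ ^ 2 - 2 * θ - ε ≤ ∑ u, μ u * (a u * ∑ v, ν v * a (2 • v - u)) := by
    have pt : ∀ u ∈ (Finset.univ : Finset G),
        (δ + ε) * (μ u * a u) - (δ + ε) * μ u + μ u * ∑ v, ν v * a (2 • v - u) ≤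
          μ u * (a u * ∑ v, ν v * a (2 • v - u)) := fun u _ => by
      nlinarith [mul_nonneg (μ0 u) (mul_nonneg (sub_nonneg.2 (a1 u)) (sub_nonneg.2 (hu u)))]
    have hs := Finset.sum_le_sum pt
    rw [Finset.sum_add_distrib, Finset.sum_sub_distrib, ← Finset.mul_sum, ← Finset.mul_sum,
      μ1] at hs
    refine le_trans ?_ hs
    have p0 : 0 ≤ ∑ u, μ u * a u := Finset.sum_nonneg fun u _ => mul_nonneg (μ0 u) (a0 u)
    nlinarith [mul_le_mul_of_nonneg_left hP1 hδ0, mul_nonneg hε p0,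
      mul_le_of_le_one_left hθ hδ1]
  have split : ∑ u, ∑ v, ν v * a v * F u * F (2 • v - u) =
      δ * (∑ u, ∑ v, ν v * F u * F (2 • v - u)) +
        ∑ u, ∑ v, ν v * (a v - δ) * F u * F (2 • v - u) := by
    rw [Finset.mul_sum, ← Finset.sum_add_distrib]
    refine Finset.sum_congr rfl fun u _ => ?_
    rw [Finset.mul_sum, ← Finset.sum_add_distrib]
    exact Finset.sum_congr rfl fun v _ => by ring
  have up : (∑ u, ∑ v, ν v * a v * F u * F (2 • v - u)) * mass Γ L₂ ≤ apSum a := by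
    unfold apSum
    rw [Finset.sum_mul]
    refine Finset.sum_le_sum fun u _ => ?_
    rw [Finset.sum_mul]
    refine Finset.sum_le_sum fun v _ => ?_
    have h1 : ν v * mass Γ L₂ ≤ 1 := by
      simp only [hν, soft]
      rw [div_mul_cancel₀ _ (mass_pos Γ L₂).ne', Real.exp_le_one_iff]
      exact neg_nonpos.2 (mul_nonneg hL₂ (bohrNorm_nonneg Γ v))
    calc ν v * a v * F u * F (2 • v - u) * mass Γ L₂
        = (ν v * mass Γ L₂) * (a v * (F u * F (2 • v - u))) := by ring
      _ ≤ 1 * (a v * (a u * a (2 • v - u))) :=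
          mul_le_mul h1 (mul_le_mul_of_nonneg_left (mul_le_mul (F1 _) (F1 _) (F0 _) (a0 _)) (a0 _))
            (mul_nonneg (a0 _) (mul_nonneg (F0 _) (F0 _))) zero_le_one
      _ = a u * a v * a (2 • v - u) := by ring
  refine le_trans ?_ up
  rw [← mul_assoc]
  refine mul_le_mul_of_nonneg_right ?_ (mass_pos Γ L₂).le
  rw [split]
  have h1 : δ * (M * (δ ^ 2 - 2 * θ - ε - ε)) ≤ δ * ∑ u, ∑ v, ν v * F u * F (2 • v - u) := by
    refine mul_le_mul_of_nonneg_left (le_trans (mul_le_mul_of_nonneg_left ?_ M0.le) w0) hδ0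
    linarith
  have h2 : (δ ^ 3 - 2 * θ - 2 * ε) * M ≤ δ * (M * (δ ^ 2 - 2 * θ - ε - ε)) := by
    nlinarith [mul_nonneg M0.le (mul_nonneg (sub_nonneg.2 hδ1) (by positivity : 0 ≤ 2 * θ + 2 * ε))]
  linarith

/-- For `|G|` odd, doubling is an automorphism of `G`, and the image of a soft Bohr set under it
is again a soft Bohr set of the same rank and scale. -/
lemma exists_double (hodd : Odd (Fintype.card G)) (Γ : Fin d → AddChar G ℂ) :
    ∃ Γ' : Fin d → AddChar G ℂ, ∀ (L : ℝ) (f : G → ℝ),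
      ∑ v, soft Γ L v * f (2 • v) = ∑ z, soft Γ' L z * f z := by
  obtain ⟨k, hk⟩ := hodd
  have hcard : ∀ z : G, (2 * (k + 1)) • z = z := fun z => by
    rw [show 2 * (k + 1) = Fintype.card G + 1 by omega, add_nsmul, card_nsmul_eq_zero, one_nsmul,
      zero_add]
  let half : G →+ G := nsmulAddMonoidHom (k + 1)
  have h1 : ∀ v : G, half (2 • v) = v := fun v => by
    simp only [half, nsmulAddMonoidHom_apply]
    rw [smul_smul, mul_comm, hcard]
  have h2 : ∀ v : G, 2 • half v = v := fun v => by
    simp only [half, nsmulAddMonoidHom_apply]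
    rw [smul_smul, hcard]
  let e : G ≃ G := ⟨fun v => 2 • v, half, h1, h2⟩
  refine ⟨fun i => (Γ i).compAddMonoidHom half, fun L f => ?_⟩
  have hN : ∀ v, bohrNorm (fun i => (Γ i).compAddMonoidHom half) (e v) = bohrNorm Γ v := fun v => by
    simp [bohrNorm, e, h1]
  have hmass : mass (fun i => (Γ i).compAddMonoidHom half) L = mass Γ L := by
    unfold mass
    exact (Fintype.sum_equiv e _ _ fun v => by rw [hN]).symm
  refine Fintype.sum_equiv e _ _ fun v => ?_
  unfold soft
  rw [hmass, hN]
  rfl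

lemma soft_pos (Γ : Fin d → AddChar G ℂ) (L : ℝ) (x : G) : 0 < soft Γ L x :=
  div_pos (Real.exp_pos _) (mass_pos Γ L)

/-- The density of `a` on the translate by `x` of a soft Bohr set. -/
def dens (a : G → ℝ) (Γ : Fin d → AddChar G ℂ) (L : ℝ) (x : G) : ℝ :=
  ∑ y, soft Γ L y * a (x + y)

lemma dens_le_one (a : G → ℝ) (a1 : ∀ x, a x ≤ 1) (Γ : Fin d → AddChar G ℂ) (L : ℝ) (x : G) :
    dens a Γ L x ≤ 1 := by
  refine le_trans (Finset.sum_le_sum fun y _ =>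
    mul_le_of_le_one_right (soft_nonneg _ _ y) (a1 _)) (sum_soft Γ L).le

lemma dens_nonneg (a : G → ℝ) (a0 : ∀ x, 0 ≤ a x) (Γ : Fin d → AddChar G ℂ) (L : ℝ) (x : G) :
    0 ≤ dens a Γ L x :=
  Finset.sum_nonneg fun y _ => mul_nonneg (soft_nonneg _ _ y) (a0 _)

/-- If `a` has density `δ` on some translate of a soft Bohr set, and density at most `δ + ε` on
every translate of every soft Bohr set of rank at most one larger at the three next scales, then `a`
has many progressions. Here `L`, `L₁`, `L₂`, `L₃` are the successive scales. -/
lemma step_count (hodd : Odd (Fintype.card G)) (a : G → ℝ) (a0 : ∀ x, 0 ≤ a x) (a1 : ∀ x, a x ≤ 1)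
    (Γ : Fin d → AddChar G ℂ) (x₀ : G) {L L₁ L₂ L₃ ε : ℝ} (hL : 1 ≤ L) (hL₁ : L ≤ L₁)
    (hL₂ : L₁ ≤ L₂) (hε : 0 ≤ ε)
    (m1 : ∑ y, soft Γ L₁ y * Real.exp (2 * L * bohrNorm Γ y) ≤ 1 + ε)
    (m2 : ∑ y, soft Γ L₂ y * Real.exp (2 * L₁ * bohrNorm Γ y) ≤ 1 + ε)
    (m3 : ∀ Γ' : Fin (d + 1) → AddChar G ℂ,
      ∑ y, soft Γ' L₃ y * Real.exp (2 * L₂ * bohrNorm Γ' y) ≤ 1 + ε)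
    (u1 : ∀ x, dens a Γ L₁ x ≤ dens a Γ L x₀ + ε)
    (u2 : ∀ (Γ' : Fin d → AddChar G ℂ) (x : G), dens a Γ' L₂ x ≤ dens a Γ L x₀ + ε)
    (u3 : ∀ (Γ' : Fin (d + 1) → AddChar G ℂ) (x : G), dens a Γ' L₃ x ≤ dens a Γ L x₀ + ε) :
    (dens a Γ L x₀ ^ 3 - 25 * ε) * (mass Γ L₁ * mass Γ L₂) ≤ apSum a := by
  set δ := dens a Γ L x₀ with hδ
  have hδ0 : 0 ≤ δ := dens_nonneg a a0 Γ L x₀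
  have hδ1 : δ ≤ 1 := dens_le_one a a1 Γ L x₀
  have hL0 : 0 ≤ L := by linarith
  have weaken : ∀ {r : ℕ} (Γ' : Fin r → AddChar G ℂ) (M N N' : ℝ) (φ : G → G),
      (∀ y, N' * bohrNorm Γ (φ y) ≤ N * bohrNorm Γ' y) →
      ∑ y, soft Γ' M y * Real.exp (N * bohrNorm Γ' y) ≤ 1 + ε →
      ∑ y, soft Γ' M y * Real.exp (N' * bohrNorm Γ (φ y)) ≤ 1 + ε :=
    fun Γ' M N N' φ h hm => le_trans (Finset.sum_le_sum fun y _ =>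
      mul_le_mul_of_nonneg_left (Real.exp_le_exp.2 (h y)) (soft_nonneg _ _ y)) hm
  have ha : ∀ x, ‖a x‖ ≤ 1 := fun x => by rw [Real.norm_of_nonneg (a0 x)]; exact a1 x
  set β := soft Γ L with hβ
  have β1 : ∑ x, β x = 1 := sum_soft _ _
  set μ := soft Γ L₁ with hμ
  have μ0 : ∀ x, 0 ≤ μ x := soft_nonneg _ _
  have μ1 : ∑ x, μ x = 1 := sum_soft _ _
  set ν := soft Γ L₂ with hν
  have ν0 : ∀ x, 0 ≤ ν x := soft_nonneg _ _
  have ν1 : ∑ x, ν x = 1 := sum_soft _ _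
  -- the densities of `a` around `x₀ + x` on the three measures involved in the count
  set P1 : G → ℝ := fun x => ∑ u, μ u * a (x₀ + x + u) with hP1
  set P2 : G → ℝ := fun x => ∑ v, ν v * a (x₀ + x + v) with hP2
  set P3 : G → ℝ := fun x => ∑ u, μ u * ∑ v, ν v * a (x₀ + x + (2 • v - u)) with hP3
  have hδ' : ∑ x, β x • a (x₀ + x) = δ := by simp only [smul_eq_mul, hδ, dens, hβ]
  have E1 : δ - ε ≤ ∑ x, β x * P1 x := by
    have h := norm_mean_shift_sub_le Γ hL0 (fun x => a (x₀ + x)) (fun x => ha _) μ μ0 μ1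
      (fun y => y) (weaken Γ L₁ (2 * L) L (fun y => y) (fun y => by
        nlinarith [mul_nonneg hL0 (bohrNorm_nonneg Γ y)]) m1)
    rw [hδ', Real.norm_eq_abs] at h
    have e : ∑ y, μ y • ∑ x, β x • a (x₀ + (x + y)) = ∑ x, β x * P1 x := by
      simp only [hP1, smul_eq_mul, Finset.mul_sum]
      rw [Finset.sum_comm]
      exact Finset.sum_congr rfl fun x _ => Finset.sum_congr rfl fun y _ => by
        rw [add_assoc]; ring
    rw [e] at h
    linarith [(abs_le.1 h).1]
  have E2 : δ - ε ≤ ∑ x, β x * P2 x := by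
    have h := norm_mean_shift_sub_le Γ hL0 (fun x => a (x₀ + x)) (fun x => ha _) ν ν0 ν1
      (fun y => y) (weaken Γ L₂ (2 * L₁) L (fun y => y) (fun y =>
        mul_le_mul_of_nonneg_right (by linarith) (bohrNorm_nonneg Γ y)) m2)
    rw [hδ', Real.norm_eq_abs] at h
    have e : ∑ y, ν y • ∑ x, β x • a (x₀ + (x + y)) = ∑ x, β x * P2 x := by
      simp only [hP2, smul_eq_mul, Finset.mul_sum]
      rw [Finset.sum_comm]
      exact Finset.sum_congr rfl fun x _ => Finset.sum_congr rfl fun y _ => by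
        rw [add_assoc]; ring
    rw [e] at h
    linarith [(abs_le.1 h).1]
  have E3 : δ - 2 * ε ≤ ∑ x, β x * P3 x := by
    have h := norm_mean_shift_sub_le Γ hL0 (fun x => a (x₀ + x)) (fun x => ha _) ν ν0 ν1
      (fun y => 2 • y) (weaken Γ L₂ (2 * L₁) L (fun y => 2 • y) (fun y => by
        have h1 := mul_le_mul_of_nonneg_left (bohrNorm_two_nsmul_le Γ y) hL0
        have h2 := mul_le_mul_of_nonneg_right hL₁ (bohrNorm_nonneg Γ y)
        linarith) m2)
    rw [hδ', Real.norm_eq_abs] at h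
    have h' : ∀ v, ∑ x, β x * a (x₀ + (x + 2 • v)) - ε ≤
        ∑ u, μ u * ∑ x, β x * a (x₀ + (x + 2 • v - u)) := by
      intro v
      have h := norm_mean_shift_sub_le Γ hL0 (fun x => a (x₀ + (x + 2 • v))) (fun x => ha _) μ μ0 μ1
        (fun y => -y) (weaken Γ L₁ (2 * L) L (fun y => -y) (fun y => by
          rw [bohrNorm_neg]
          nlinarith [mul_nonneg hL0 (bohrNorm_nonneg Γ y)]) m1)
      rw [Real.norm_eq_abs] at h
      have h := (abs_le.1 h).1
      simp only [smul_eq_mul] at h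
      have e : ∀ x u, x + -u + 2 • v = x + 2 • v - u := fun x u => by abel
      simp only [e] at h
      linarith
    have e : ∑ v, ν v * ∑ u, μ u * ∑ x, β x * a (x₀ + (x + 2 • v - u)) = ∑ x, β x * P3 x := by
      simp only [hP3, Finset.mul_sum]
      rw [Finset.sum_comm]
      rw [Finset.sum_congr rfl fun u _ => Finset.sum_comm]
      rw [Finset.sum_comm]
      refine Finset.sum_congr rfl fun x _ => Finset.sum_congr rfl fun u _ =>
        Finset.sum_congr rfl fun v _ => ?_
      rw [show x₀ + (x + 2 • v - u) = x₀ + x + (2 • v - u) by abel]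
      ring
    have hs := Finset.sum_le_sum fun v (_ : v ∈ (Finset.univ : Finset G)) =>
      mul_le_mul_of_nonneg_left (h' v) (ν0 v)
    rw [e] at hs
    simp only [mul_sub, Finset.sum_sub_distrib, ← Finset.sum_mul, ν1] at hs
    simp only [smul_eq_mul] at h
    linarith [(abs_le.1 h).1]
  obtain ⟨x, hx⟩ : ∃ x, 3 * δ - 4 * ε ≤ P1 x + P2 x + P3 x := by
    by_contra! hcon
    have hs : ∑ x, β x * (P1 x + P2 x + P3 x) < ∑ x, β x * (3 * δ - 4 * ε) :=
      Finset.sum_lt_sum_of_nonempty ⟨0, Finset.mem_univ _⟩ fun x _ =>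
        mul_lt_mul_of_pos_left (hcon x) (soft_pos Γ L x)
    rw [← Finset.sum_mul, β1] at hs
    simp only [mul_add, Finset.sum_add_distrib] at hs
    linarith
  obtain ⟨Γd, hΓd⟩ := exists_double hodd Γ
  have b1 : P1 x ≤ δ + ε := u1 (x₀ + x)
  have b2 : P2 x ≤ δ + ε := u2 Γ (x₀ + x)
  have b3' : ∀ u, ∑ v, ν v * a (x₀ + x + (2 • v - u)) ≤ δ + ε := fun u => by
    have h := hΓd L₂ fun z => a (x₀ + x - u + z)
    have h2 := u2 Γd (x₀ + x - u)
    unfold dens at h2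
    rw [← h] at h2
    refine le_trans (le_of_eq (Finset.sum_congr rfl fun v _ => ?_)) h2
    rw [show x₀ + x + (2 • v - u) = x₀ + x - u + 2 • v by abel]
  have b3 : P3 x ≤ δ + ε := by
    refine (Finset.sum_le_sum fun u _ => mul_le_mul_of_nonneg_left (b3' u) (μ0 u)).trans ?_
    rw [← Finset.sum_mul, μ1, one_mul]
  rw [← apSum_translate a (x₀ + x)]
  have hS : ∀ ψ : AddChar G ℂ,
      ‖∑ v, ((soft Γ L₂ v * (a (x₀ + x + v) - δ) : ℝ) : ℂ) * ψ (2 • v)‖ ≤ 5 * ε + 6 * ε := by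
    intro ψ
    have h := norm_coeff_le (fun y => a (x₀ + x + y)) (fun _ => a0 _) (fun _ => a1 _) Γ (ψ ^ 2)
      (L := L₂) (L' := L₃) (δ := δ) (ε := ε) (θ := 6 * ε) (by linarith) hδ0 hδ1
      (le_trans (Finset.sum_le_sum fun y _ => mul_le_mul_of_nonneg_left (Real.exp_le_exp.2
        (mul_le_mul_of_nonneg_right (by linarith) (bohrNorm_nonneg _ y))) (soft_nonneg _ _ y))
        (m3 (Fin.cons (ψ ^ 2) Γ)))
      (fun z => by
        have := u3 (Fin.cons (ψ ^ 2) Γ) (x₀ + x + z)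
        simpa only [dens, add_assoc] using this)
      (by
        have : 3 * δ - 4 * ε ≤ P1 x + P2 x + P3 x := hx
        change δ - 6 * ε ≤ P2 x
        linarith)
    have e : ∀ v, (ψ ^ 2) v = ψ (2 • v) := fun v => by
      rw [AddChar.pow_apply, AddChar.map_nsmul_eq_pow]
    simpa only [e] using h
  have := core_count (fun y => a (x₀ + x + y)) (fun _ => a0 _) (fun _ => a1 _) Γ (L₁ := L₁)
    (L₂ := L₂) (δ := δ) (ε := ε) (θ := 6 * ε) (by linarith) (by linarith) hδ0 hδ1 hε (by linarith)
    (weaken Γ L₂ (2 * L₁) L₁ (fun y => y) (fun y =>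
        mul_le_mul_of_nonneg_right (by linarith) (bohrNorm_nonneg Γ y)) m2)
    b3' (by change δ - 6 * ε ≤ P1 x; linarith) (by change δ - 6 * ε ≤ P3 x; linarith) hS
  refine le_trans (mul_le_mul_of_nonneg_right ?_ (mul_pos (mass_pos _ _) (mass_pos _ _)).le) this
  linarith

/-! ### The density increment -/

/-- The density increment iteration. As long as the number of progressions is not large, the density
increases by `ε` at the cost of at most one new frequency and three scales. Scales are powers of
`2 ^ (s + 2)`; the number `m` bounds the number of remaining increments. -/
lemma iterate (hodd : Odd (Fintype.card G)) (a : G → ℝ) (a0 : ∀ x, 0 ≤ a x) (a1 : ∀ x, a x ≤ 1)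
    (c : ℕ) (hc : ∀ (d : ℕ) (Γ : Fin d → AddChar G ℂ) (L : ℝ), 0 < L →
      mass Γ (L / 2) ≤ (2 : ℝ) ^ (c * d) * mass Γ L)
    {α ε : ℝ} (hα : 0 < α) (hε : 0 < ε) (hαε : 50 * ε ≤ α ^ 3) (K s : ℕ)
    (hs : (2 : ℝ) ^ (c * (K + 1)) ≤ 2 ^ s * ε) (m : ℕ) :
    ∀ (d j : ℕ) (Γ : Fin d → AddChar G ℂ) (x₀ : G), d + m ≤ K → j + 3 * m ≤ 3 * K →
      α ≤ dens a Γ (2 ^ ((s + 2) * j)) x₀ → 1 - m * ε < dens a Γ (2 ^ ((s + 2) * j)) x₀ →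
      ∃ (d' j₁ j₂ : ℕ) (Γ' : Fin d' → AddChar G ℂ), d' ≤ K ∧ j₁ ≤ 3 * K ∧ j₂ ≤ 3 * K ∧
        α ^ 3 / 2 * (mass Γ' (2 ^ ((s + 2) * j₁)) * mass Γ' (2 ^ ((s + 2) * j₂))) ≤ apSum a := by
  induction m with
  | zero =>
    intro d j Γ x₀ _ _ _ h
    have := dens_le_one a a1 Γ (2 ^ ((s + 2) * j)) x₀
    simp at h
    linarith
  | succ m ih =>
    intro d j Γ x₀ hd hj h1 h2
    set L : ℕ → ℝ := fun i => 2 ^ ((s + 2) * i) with hL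
    have hLs : ∀ i, L (i + 1) = 4 * ((2 ^ s : ℕ) : ℝ) * L i := fun i => by
      simp only [hL]
      push_cast
      rw [mul_add, mul_one, pow_add, pow_add]
      ring
    have hL1 : ∀ i, 1 ≤ L i := fun i => one_le_pow₀ one_le_two
    have hmono : ∀ i, L i ≤ L (i + 1) := fun i =>
      pow_le_pow_right₀ one_le_two (Nat.mul_le_mul_left _ (Nat.le_succ i))
    have hmom : ∀ (r : ℕ) (Γ' : Fin r → AddChar G ℂ) (i : ℕ), r ≤ K + 1 →
        ∑ y, soft Γ' (L (i + 1)) y * Real.exp (2 * L i * bohrNorm Γ' y) ≤ 1 + ε := by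
      intro r Γ' i hr
      rw [hLs]
      refine moment_le Γ' c (hc r Γ') hε ?_ (by linarith [hL1 i])
      push_cast
      exact (pow_le_pow_right₀ one_le_two (Nat.mul_le_mul_left c hr)).trans hs
    by_cases hinc : ∃ (r i : ℕ) (Γ' : Fin r → AddChar G ℂ) (x : G), r ≤ d + 1 ∧ i ≤ j + 3 ∧
        dens a Γ (L j) x₀ + ε < dens a Γ' (L i) x
    · obtain ⟨r, i, Γ', x, hr, hi, hx⟩ := hinc
      refine ih r i Γ' x (by omega) (by omega) ?_ ?_
      · have : α ≤ dens a Γ (L j) x₀ := h1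
        change α ≤ dens a Γ' (L i) x
        linarith
      · have : 1 - ((m + 1 : ℕ) : ℝ) * ε < dens a Γ (L j) x₀ := h2
        push_cast at this
        change 1 - m * ε < dens a Γ' (L i) x
        linarith
    · push Not at hinc
      refine ⟨d, j + 1, j + 2, Γ, by omega, by omega, by omega, ?_⟩
      have := step_count hodd a a0 a1 Γ x₀ (L := L j) (L₁ := L (j + 1)) (L₂ := L (j + 2))
        (L₃ := L (j + 3)) (ε := ε) (hL1 j) (hmono j) (hmono (j + 1)) hε.le
        (hmom d Γ j (by omega)) (hmom d Γ (j + 1) (by omega))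
        (fun Γ' => hmom (d + 1) Γ' (j + 2) (by omega))
        (fun x => hinc d (j + 1) Γ x (by omega) (by omega))
        (fun Γ' x => hinc d (j + 2) Γ' x (by omega) (by omega))
        (fun Γ' x => hinc (d + 1) (j + 3) Γ' x (by omega) (by omega))
      refine le_trans (mul_le_mul_of_nonneg_right ?_
        (mul_pos (mass_pos _ _) (mass_pos _ _)).le) this
      have : α ^ 3 ≤ dens a Γ (L j) x₀ ^ 3 := pow_le_pow_left₀ hα.le h1 3
      linarith

/-! ### From the iteration to the count -/

lemma apSum_indicator (A : Finset G) :
    apSum (fun x => if x ∈ A then (1 : ℝ) else 0) = apCount A * (Fintype.card G : ℝ) ^ 2 := by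
  have hcard : (Fintype.card G : ℝ) ≠ 0 := by exact_mod_cast Fintype.card_ne_zero
  rw [apCount, div_mul_cancel₀ _ (pow_ne_zero 2 hcard), Finset.card_filter]
  push_cast
  rw [Fintype.sum_prod_type, apSum]
  refine Finset.sum_congr rfl fun u _ => ?_
  refine Fintype.sum_equiv (Equiv.subRight u) _ _ fun v => ?_
  have h : u + 2 • (v - u) = 2 • v - u := by rw [nsmul_sub, two_nsmul u]; abel
  simp only [Equiv.subRight_apply, h, add_sub_cancel]
  by_cases h1 : u ∈ A <;> by_cases h2 : v ∈ A <;> by_cases h3 : 2 • v - u ∈ A <;>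
    simp [h1, h2, h3]

lemma dens_rank_zero (a : G → ℝ) (Γ : Fin 0 → AddChar G ℂ) (L : ℝ) :
    dens a Γ L 0 = (∑ x, a x) / Fintype.card G := by
  simp [dens, soft, mass, bohrNorm, Finset.mul_sum, div_eq_inv_mul]

lemma two_pow_le_exp (n : ℕ) : (2 : ℝ) ^ n ≤ Real.exp n := by
  rw [← mul_one (n : ℝ), Real.exp_nat_mul]
  refine pow_le_pow_left₀ zero_le_two ?_ n
  have := Real.add_one_le_exp (1 : ℝ)
  linarith

/-- Lower bound for the mass of a soft Bohr set whose rank and scale are among those met in the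
iteration with at most `K` steps. -/
lemma mass_lower' (Γ : Fin d → AddChar G ℂ) (c K s j : ℕ) (hd : d ≤ K) (hj : j ≤ 3 * K)
    (hc : ∀ L : ℝ, 0 < L → mass Γ (L / 2) ≤ (2 : ℝ) ^ (c * d) * mass Γ L) :
    Real.exp (-(2 * K + c * K * ((s + 2) * (3 * K)))) * Fintype.card G ≤
      mass Γ (2 ^ ((s + 2) * j)) := by
  have h := mass_lower Γ c hc ((s + 2) * j)
  have h1 : (2 : ℝ) ^ (c * d * ((s + 2) * j)) ≤ Real.exp (c * K * ((s + 2) * (3 * K))) := by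
    refine (two_pow_le_exp _).trans (Real.exp_le_exp.2 ?_)
    have : c * d * ((s + 2) * j) ≤ c * K * ((s + 2) * (3 * K)) := by gcongr
    exact_mod_cast this
  have h2 : Real.exp (-(2 * K)) ≤ Real.exp (-(2 * d)) := by
    refine Real.exp_le_exp.2 ?_
    have : (d : ℝ) ≤ K := by exact_mod_cast hd
    linarith
  have h3 : Real.exp (-(2 * K)) * Fintype.card G ≤
      Real.exp (c * K * ((s + 2) * (3 * K))) * mass Γ (2 ^ ((s + 2) * j)) :=
    (mul_le_mul_of_nonneg_right h2 (Nat.cast_nonneg _)).trans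
      (h.trans (mul_le_mul_of_nonneg_right h1 (mass_pos _ _).le))
  calc Real.exp (-(2 * K + c * K * ((s + 2) * (3 * K)))) * Fintype.card G
      = Real.exp (-(c * K * ((s + 2) * (3 * K)))) * (Real.exp (-(2 * K)) * Fintype.card G) := by
        rw [← mul_assoc (Real.exp _) (Real.exp _), ← Real.exp_add]; congr 2; ring
    _ ≤ Real.exp (-(c * K * ((s + 2) * (3 * K)))) *
        (Real.exp (c * K * ((s + 2) * (3 * K))) * mass Γ (2 ^ ((s + 2) * j))) :=
        mul_le_mul_of_nonneg_left h3 (Real.exp_pos _).le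
    _ = mass Γ (2 ^ ((s + 2) * j)) := by
        rw [← mul_assoc, ← Real.exp_add, neg_add_cancel, Real.exp_zero, one_mul]

/-- The bound with explicit dependence on the doubling exponent `c`. -/
lemma apCount_lower (c : ℕ) (hc : ∀ (d : ℕ) (Γ : Fin d → AddChar G ℂ) (L : ℝ), 0 < L →
      mass Γ (L / 2) ≤ (2 : ℝ) ^ (c * d) * mass Γ L)
    (hodd : Odd (Fintype.card G)) (A : Finset G) {α : ℝ}
    (hαA : α = (A.card : ℝ) / (Fintype.card G : ℝ)) (hα : 0 < α) :
    Real.exp (-((206 + 6 * c * (2 * c + 3) * 51 ^ 3) * (α⁻¹) ^ 9)) ≤ apCount A := by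
  have hcard : (0 : ℝ) < Fintype.card G := by exact_mod_cast Fintype.card_pos
  have hα1 : α ≤ 1 := by
    rw [hαA, div_le_one hcard]
    exact_mod_cast Finset.card_le_univ A
  set a : G → ℝ := fun x => if x ∈ A then 1 else 0 with ha
  have a0 : ∀ x, 0 ≤ a x := fun x => by simp only [ha]; split_ifs <;> norm_num
  have a1 : ∀ x, a x ≤ 1 := fun x => by simp only [ha]; split_ifs <;> norm_num
  set X := α⁻¹ with hX
  have hX1 : 1 ≤ X := (one_le_inv₀ hα).2 hα1
  have hX0 : 0 < X := by linarith
  have hαX : α = X⁻¹ := by rw [hX, inv_inv]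
  set ε := α ^ 3 / 50 with hεdef
  have hε : 0 < ε := by positivity
  have hεinv : 1 / ε = 50 * X ^ 3 := by
    rw [hεdef, hαX]; field_simp
  set K := ⌈1 / ε⌉₊ with hK
  have hK1 : 1 / ε ≤ K := Nat.le_ceil _
  have hK1' : 1 ≤ K * ε := by rwa [div_le_iff₀ hε] at hK1
  have hX3 : 1 ≤ X ^ 3 := one_le_pow₀ hX1
  have hK2 : (K : ℝ) ≤ 51 * X ^ 3 := by
    have := (Nat.ceil_lt_add_one (by positivity : 0 ≤ 1 / ε)).le
    rw [← hK, hεinv] at this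
    linarith
  have hKone : (1 : ℝ) ≤ K := by rw [hεinv] at hK1; linarith
  set s := c * (K + 1) + K with hs
  have hs2 : (2 : ℝ) ^ (c * (K + 1)) ≤ 2 ^ s * ε := by
    rw [hs, pow_add, mul_assoc]
    refine le_mul_of_one_le_right (by positivity) (hK1'.trans ?_)
    refine mul_le_mul_of_nonneg_right ?_ hε.le
    exact_mod_cast Nat.lt_two_pow_self.le
  have hdens : dens a (Fin.elim0 : Fin 0 → AddChar G ℂ) (2 ^ ((s + 2) * 0)) 0 = α := by
    rw [dens_rank_zero, hαA]
    simp [ha]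
  obtain ⟨d, j₁, j₂, Γ, hd, hj₁, hj₂, hT⟩ := iterate hodd a a0 a1 c hc hα hε
    (by rw [hεdef]; linarith) K s hs2 K 0 0 Fin.elim0 0 (by omega) (by omega)
    (by rw [hdens]) (by rw [hdens]; linarith)
  rw [apSum_indicator] at hT
  set E : ℝ := 2 * K + c * K * ((s + 2) * (3 * K)) with hE
  have q1 := mass_lower' Γ c K s j₁ hd hj₁ (hc d Γ)
  have q2 := mass_lower' Γ c K s j₂ hd hj₂ (hc d Γ)
  rw [← hE] at q1 q2
  have q : Real.exp (-E) * Fintype.card G * (Real.exp (-E) * Fintype.card G) ≤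
      mass Γ (2 ^ ((s + 2) * j₁)) * mass Γ (2 ^ ((s + 2) * j₂)) :=
    mul_le_mul q1 q2 (by positivity) (mass_pos _ _).le
  have q3 : Real.exp (-(2 * X ^ 3)) ≤ α ^ 3 / 2 := by
    have h := Real.add_one_le_exp (2 * X ^ 3)
    rw [Real.exp_neg, show α ^ 3 / 2 = (2 * X ^ 3)⁻¹ by rw [hαX]; field_simp]
    exact inv_anti₀ (by positivity) (by linarith)
  have q4 : Real.exp (-(2 * X ^ 3)) * (Real.exp (-E) * Real.exp (-E)) ≤ apCount A := by
    have h := (mul_le_mul q3 q (by positivity) (by positivity)).trans hT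
    have hc2 : (0 : ℝ) < (Fintype.card G : ℝ) ^ 2 := by positivity
    refine le_of_mul_le_mul_right (le_trans (le_of_eq ?_) h) hc2
    ring
  refine le_trans ?_ q4
  rw [← Real.exp_add, ← Real.exp_add]
  refine Real.exp_le_exp.2 ?_
  have hsK : (s : ℝ) + 2 ≤ (2 * c + 3) * K := by
    rw [hs]
    push_cast
    have : (c : ℝ) * 1 ≤ c * K := mul_le_mul_of_nonneg_left hKone (Nat.cast_nonneg c)
    linarith
  have hX39 : X ^ 3 ≤ X ^ 9 := pow_le_pow_right₀ hX1 (by norm_num)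
  have hE2 : 2 * E ≤ 4 * K + 6 * c * (2 * c + 3) * (K : ℝ) ^ 3 := by
    have := mul_le_mul_of_nonneg_left hsK (by positivity : (0 : ℝ) ≤ 6 * c * K ^ 2)
    rw [hE]
    nlinarith
  have hK3 : (K : ℝ) ^ 3 ≤ 51 ^ 3 * X ^ 9 := by
    calc (K : ℝ) ^ 3 ≤ (51 * X ^ 3) ^ 3 := pow_le_pow_left₀ (by positivity) hK2 3
      _ = 51 ^ 3 * X ^ 9 := by ring
  have hK4 := mul_le_mul_of_nonneg_left hK3 (by positivity : (0 : ℝ) ≤ 6 * c * (2 * c + 3))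
  linarith

end SoftBohr

end

/-- **Meshulam's counting theorem.** There is an absolute constant `C > 0` such that for
every finite abelian group `G` of odd order and every nonempty `A ⊆ G` of density
`α > 0`, one has `Λ(A) ≥ exp(−C·α^{−C})`. -/
theorem meshulam_count_odd :
    ∃ C : ℝ, 0 < C ∧
      ∀ (G : Type) [AddCommGroup G] [Fintype G],
        Odd (Fintype.card G) →
        ∀ A : Finset G,
          let α : ℝ := (A.card : ℝ) / (Fintype.card G : ℝ)
          0 < α →
            apCount A ≥ Real.exp (-(C * α ^ (-C))) := by
  obtain ⟨c, hc⟩ := SoftBohr.exists_doubling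
  refine ⟨206 + 6 * c * (2 * c + 3) * 51 ^ 3, by positivity, ?_⟩
  intro G _ _ hodd A α hα
  refine le_trans (Real.exp_le_exp.2 (neg_le_neg ?_))
    (SoftBohr.apCount_lower c (hc G) hodd A rfl hα)
  refine mul_le_mul_of_nonneg_left ?_ (by positivity)
  have hcard : (0 : ℝ) < Fintype.card G := by exact_mod_cast Fintype.card_pos
  have hα1 : α ≤ 1 := by
    refine (div_le_one hcard).2 ?_
    exact_mod_cast Finset.card_le_univ A
  rw [Real.rpow_neg hα.le, ← Real.inv_rpow hα.le, ← Real.rpow_natCast]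
  refine Real.rpow_le_rpow_of_exponent_le ((one_le_inv₀ hα).2 hα1) ?_
  have : (0 : ℝ) ≤ 6 * c * (2 * c + 3) * 51 ^ 3 := by positivity
  push_cast
  linarith
end

section
/- For every integer m ≥ 1 there exist a constant c > 0 and an integer K ≥ 1 (depending only on m) such that the following holds. Let G be a finite abelian group with m·x = 0 for all x ∈ G and let A ⊆ G have density α > 0. Then either Λ(A) ≥ c·α³, or there is a subgroup G' ≤ G of index at most K such that max_{x ∈ G} |A ∩ (x + G')| / |G'| ≥ α + c·α². -/
/-!
The proof is Meshulam's Fourier argument, with `c = 1/4` and `K = m`.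

Write `S(ψ) = ∑_{a ∈ A} ψ(a)` for a character `ψ` of `G` and let `N = |G|`. The number `T` of pairs
`(x, d)` with `x, x + d, x + 2d ∈ A` is the number of solutions of `a + b = 2c` in `A`, so by
orthogonality `N T = ∑_ψ S(ψ)² S(-2ψ)` (`sum_charSum_eq_apCount`). The trivial character contributes
`|A|³`. A character with `2ψ = 0` is real-valued, so it contributes `S(ψ)² |A| ≥ 0`; this is why no
assumption on the parity of `m` is needed. If `|S(χ)| ≤ B` for all `χ ≠ 0`, the remaining terms
are at most `B ∑_ψ |S(ψ)|² = B N |A|` in absolute value. With `B = |A|² / (2N)` this yields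
`Λ(A) ≥ α³ / 2` (`charSum_count_lower_bound`).

Otherwise `|S(χ)| > |A|² / (2N)` for some `χ ≠ 0`. Its kernel `G'` has index at most `m`, since
`χ` takes values in the `m`-th roots of unity (`index_charKer_le`). As `χ` is constant on cosets of
`G'` and has mean zero, `|G'| |S(χ)|` is at most the `ℓ¹` norm of `x ↦ |A ∩ (x + G')| - α |G'|`,
a function of mean zero; were it bounded above by `|G'| α² / 4`, its `ℓ¹` norm would be at most
`N |G'| α² / 2`, a contradiction (`charSum_le_of_no_increment`).
-/

open scoped BigOperators Classical

section CountOrIncrement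

variable {G : Type} [AddCommGroup G]

/-- The unnormalized Fourier coefficient `∑_{a ∈ A} ψ(a)` of the indicator function of `A`. -/
noncomputable def charSum (A : Finset G) (ψ : AddChar G ℂ) : ℂ := ∑ a ∈ A, ψ a

lemma charSum_zero (A : Finset G) : charSum A 0 = A.card := by simp [charSum]

/-- The kernel of a character, as a subgroup of `G`. -/
def charKer (χ : AddChar G ℂ) : AddSubgroup G where
  carrier := {x | χ x = 1}
  zero_mem' := by simp
  add_mem' := by
    intro a b ha hb
    simp only [Set.mem_ofPred_eq] at *
    simp [AddChar.map_add_eq_mul, ha, hb]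
  neg_mem' := by
    intro a ha
    simp only [Set.mem_ofPred_eq] at *
    simp [AddChar.map_neg_eq_inv, ha]

lemma mem_charKer (χ : AddChar G ℂ) (x : G) : x ∈ charKer χ ↔ χ x = 1 := Iff.rfl

lemma sub_mem_charKer (χ : AddChar G ℂ) (x y : G) : x - y ∈ charKer χ ↔ χ x = χ y := by
  have h : χ y ≠ 0 := (χ.val_isUnit y).ne_zero
  rw [mem_charKer, AddChar.map_sub_eq_div, div_eq_one_iff_eq h]

lemma index_charKer_le {m : ℕ} (hm : 1 ≤ m) (hG : ∀ x : G, m • x = 0) (χ : AddChar G ℂ) :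
    (charKer χ).index ≤ m := by
  have hlift : ∀ a b : G, QuotientAddGroup.leftRel (charKer χ) a b → χ a = χ b := by
    intro a b hab
    rw [QuotientAddGroup.leftRel_apply, neg_add_eq_sub, sub_mem_charKer] at hab
    exact hab.symm
  let f : G ⧸ charKer χ → (Polynomial.nthRootsFinset m (1 : ℂ)) := fun q =>
    ⟨Quotient.lift (fun x => χ x) hlift q, by
      induction q using QuotientAddGroup.induction_on with
      | H x =>
        rw [Polynomial.mem_nthRootsFinset hm]
        change χ x ^ m = 1
        rw [← AddChar.map_nsmul_eq_pow, hG, AddChar.map_zero_eq_one]⟩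
  have hf : Function.Injective f := by
    intro p q hpq
    induction p using QuotientAddGroup.induction_on with
    | H x =>
      induction q using QuotientAddGroup.induction_on with
      | H y =>
        have hxy : χ x = χ y := congrArg Subtype.val hpq
        rw [QuotientAddGroup.eq, neg_add_eq_sub, sub_mem_charKer]
        exact hxy.symm
  calc (charKer χ).index = Nat.card (G ⧸ charKer χ) := rfl
    _ ≤ Nat.card (Polynomial.nthRootsFinset m (1 : ℂ)) := Nat.card_le_card_of_injective f hf
    _ = (Polynomial.nthRootsFinset m (1 : ℂ)).card := by simp
    _ ≤ m := by
      rw [Polynomial.nthRootsFinset_def]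
      exact (Multiset.toFinset_card_le _).trans (Polynomial.card_nthRoots m 1)

variable [Fintype G]

lemma charSum_neg (A : Finset G) (ψ : AddChar G ℂ) :
    charSum A (-ψ) = (starRingEnd ℂ) (charSum A ψ) := by
  simp [charSum, AddChar.map_neg_eq_conj]

/-- Parseval's identity for the indicator function of `A`. -/
lemma sum_norm_charSum_sq (A : Finset G) :
    ∑ ψ : AddChar G ℂ, ‖charSum A ψ‖ ^ 2 = (Fintype.card G : ℝ) * A.card := by
  have h : ∑ ψ : AddChar G ℂ, charSum A ψ * charSum A (-ψ) = (Fintype.card G : ℂ) * A.card := by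
    calc ∑ ψ : AddChar G ℂ, charSum A ψ * charSum A (-ψ)
        = ∑ ψ : AddChar G ℂ, ∑ a ∈ A, ∑ b ∈ A, ψ (a - b) := by
          refine Finset.sum_congr rfl fun ψ _ => ?_
          rw [charSum, charSum, Finset.sum_mul_sum]
          refine Finset.sum_congr rfl fun a _ => Finset.sum_congr rfl fun b _ => ?_
          rw [sub_eq_add_neg, AddChar.map_add_eq_mul, AddChar.neg_apply]
      _ = ∑ a ∈ A, ∑ b ∈ A, ∑ ψ : AddChar G ℂ, ψ (a - b) := by
          rw [Finset.sum_comm]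
          exact Finset.sum_congr rfl fun a _ => Finset.sum_comm
      _ = ∑ a ∈ A, ∑ b ∈ A, if a = b then (Fintype.card G : ℂ) else 0 := by
          simp only [AddChar.sum_apply_eq_ite, sub_eq_zero]
      _ = _ := by simp [mul_comm]
  have h2 : ((∑ ψ : AddChar G ℂ, ‖charSum A ψ‖ ^ 2 : ℝ) : ℂ)
      = (((Fintype.card G : ℝ) * A.card : ℝ) : ℂ) := by
    push_cast
    rw [← h]
    refine Finset.sum_congr rfl fun ψ _ => ?_
    rw [charSum_neg, Complex.mul_conj']
  exact_mod_cast h2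

/-- The number of three-term progressions in `A` equals the number of solutions of `a + b = 2c`
in `A`, which orthogonality of characters turns into a sum of Fourier coefficients. -/
lemma sum_charSum_eq_apCount (A : Finset G) :
    ∑ ψ : AddChar G ℂ, charSum A ψ ^ 2 * charSum A (-(2 • ψ)) =
      (Fintype.card G : ℂ) * ((Finset.univ.filter (fun p : G × G =>
        p.1 ∈ A ∧ p.1 + p.2 ∈ A ∧ p.1 + 2 • p.2 ∈ A)).card : ℂ) := by
  have hcard : (Finset.univ.filter (fun p : G × G =>
        p.1 ∈ A ∧ p.1 + p.2 ∈ A ∧ p.1 + 2 • p.2 ∈ A)).card =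
      ((A ×ˢ A ×ˢ A).filter (fun t => t.1 + t.2.1 - 2 • t.2.2 = 0)).card := by
    refine Finset.card_nbij' (fun p => (p.1, p.1 + 2 • p.2, p.1 + p.2))
      (fun t => (t.1, t.2.2 - t.1)) ?_ ?_ ?_ ?_
    · rintro ⟨x, d⟩ h
      simp at h
      simp only [Finset.coe_filter, Finset.mem_product, Set.mem_ofPred_eq]
      refine ⟨⟨h.1, h.2.2, h.2.1⟩, ?_⟩
      rw [two_nsmul, two_nsmul]; abel
    · rintro ⟨a, b, c⟩ h
      simp only [Finset.coe_filter, Finset.mem_product, Set.mem_ofPred_eq] at h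
      obtain ⟨⟨ha, hb, hc⟩, h⟩ := h
      have hb' : a + 2 • (c - a) = b := by
        rw [← sub_eq_zero, ← neg_eq_zero, ← h, two_nsmul, two_nsmul]; abel
      simp [ha, hc, hb', hb]
    · rintro ⟨x, d⟩ _
      simp
    · rintro ⟨a, b, c⟩ h
      simp only [Finset.coe_filter, Finset.mem_product, Set.mem_ofPred_eq] at h
      have hb' : a + 2 • (c - a) = b := by
        rw [← sub_eq_zero, ← neg_eq_zero, ← h.2, two_nsmul, two_nsmul]; abel
      simp [hb']
  rw [hcard]
  calc ∑ ψ : AddChar G ℂ, charSum A ψ ^ 2 * charSum A (-(2 • ψ))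
      = ∑ ψ : AddChar G ℂ, ∑ t ∈ A ×ˢ A ×ˢ A, ψ (t.1 + t.2.1 - 2 • t.2.2) := by
        refine Finset.sum_congr rfl fun ψ _ => ?_
        rw [Finset.sum_product, pow_two, charSum, charSum, mul_assoc, Finset.sum_mul]
        refine Finset.sum_congr rfl fun a _ => ?_
        rw [Finset.sum_product, Finset.sum_mul_sum, Finset.mul_sum]
        refine Finset.sum_congr rfl fun b _ => ?_
        rw [Finset.mul_sum]
        refine Finset.sum_congr rfl fun c _ => ?_
        rw [sub_eq_add_neg, AddChar.map_add_eq_mul, AddChar.map_add_eq_mul, AddChar.neg_apply,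
          AddChar.nsmul_apply, ← AddChar.map_nsmul_eq_pow, smul_neg, mul_assoc]
    _ = ∑ t ∈ A ×ˢ A ×ˢ A, if t.1 + t.2.1 - 2 • t.2.2 = 0 then (Fintype.card G : ℂ) else 0 := by
        rw [Finset.sum_comm]
        simp only [AddChar.sum_apply_eq_ite]
    _ = _ := by
        rw [← Finset.sum_filter, Finset.sum_const, nsmul_eq_mul, mul_comm]

/-- If all nontrivial Fourier coefficients of `A` are at most `B`, then the number of progressions
is at least the expected `|A|³ / N` up to an error `B |A|`. -/
lemma charSum_count_lower_bound (A : Finset G) (B : ℝ) (hB : 0 ≤ B)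
    (h : ∀ χ : AddChar G ℂ, χ ≠ 0 → ‖charSum A χ‖ ≤ B) :
    (A.card : ℝ) ^ 3 - B * ((Fintype.card G : ℝ) * A.card) ≤
      (Fintype.card G : ℝ) * ((Finset.univ.filter (fun p : G × G =>
        p.1 ∈ A ∧ p.1 + p.2 ∈ A ∧ p.1 + 2 • p.2 ∈ A)).card : ℝ) := by
  have hterm : ∀ ψ : AddChar G ℂ,
      (if ψ = 0 then (A.card : ℝ) ^ 3 else 0) - B * ‖charSum A ψ‖ ^ 2 ≤
        (charSum A ψ ^ 2 * charSum A (-(2 • ψ))).re := by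
    intro ψ
    have hnn : 0 ≤ B * ‖charSum A ψ‖ ^ 2 := by positivity
    by_cases h0 : ψ = 0
    · subst h0
      have e : (charSum A 0 ^ 2 * charSum A (-(2 • (0 : AddChar G ℂ)))) =
          (((A.card : ℝ) ^ 3 : ℝ) : ℂ) := by
        rw [nsmul_zero, neg_zero, charSum_zero]; push_cast; ring
      rw [e, Complex.ofReal_re, if_pos rfl]
      linarith
    · rw [if_neg h0]
      by_cases h2 : 2 • ψ = 0
      · -- Such a character is its own conjugate, so its coefficient is real.
        have hneg : -ψ = ψ := by
          rw [neg_eq_iff_add_eq_zero, ← two_nsmul, h2]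
        have hreal : (starRingEnd ℂ) (charSum A ψ) = charSum A ψ := by
          rw [← charSum_neg, hneg]
        obtain ⟨r, hr⟩ := Complex.conj_eq_iff_real.1 hreal
        have e : charSum A ψ ^ 2 * charSum A (-(2 • ψ)) = ((r ^ 2 * A.card : ℝ) : ℂ) := by
          rw [h2, neg_zero, charSum_zero, hr]; push_cast; ring
        rw [e, Complex.ofReal_re]
        have : 0 ≤ r ^ 2 * (A.card : ℝ) := by positivity
        linarith
      · have hle := h (-(2 • ψ)) (by simpa using h2)
        have h1 := Complex.abs_re_le_norm (charSum A ψ ^ 2 * charSum A (-(2 • ψ)))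
        rw [norm_mul, norm_pow] at h1
        have h3 : ‖charSum A ψ‖ ^ 2 * ‖charSum A (-(2 • ψ))‖ ≤ ‖charSum A ψ‖ ^ 2 * B := by
          gcongr
        have h4 := neg_abs_le (charSum A ψ ^ 2 * charSum A (-(2 • ψ))).re
        linarith
  have hsum := Finset.sum_le_sum fun ψ (_ : ψ ∈ Finset.univ) => hterm ψ
  rw [Finset.sum_sub_distrib, ← Finset.mul_sum, sum_norm_charSum_sq, ← Complex.re_sum,
    sum_charSum_eq_apCount] at hsum
  simpa using hsum

/-- If no coset of `ker χ` carries a density increment of `α² / 4`, then the Fourier coefficient of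
`A` at `χ` is at most `α² N / 2`. -/
lemma charSum_le_of_no_increment (A : Finset G) (χ : AddChar G ℂ) (hχ : χ ≠ 0) (α : ℝ)
    (hα : α * Fintype.card G = A.card)
    (h : ∀ x : G, ((A.filter (fun a => a - x ∈ charKer χ)).card : ℝ) / Nat.card (charKer χ) <
      α + 1 / 4 * α ^ 2) :
    ‖charSum A χ‖ ≤ α ^ 2 / 2 * Fintype.card G := by
  set M : ℝ := (Nat.card (charKer χ) : ℝ) with hMdef
  have hM : 0 < M := by
    rw [hMdef]; exact_mod_cast Nat.card_pos
  set f : G → ℝ := fun x => ((A.filter (fun a => a - x ∈ charKer χ)).card : ℝ) with hf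
  have hfsum : ∀ x, f x = ∑ a ∈ A, if a - x ∈ charKer χ then (1 : ℝ) else 0 := by
    intro x; simp [hf]
  have hcoset : ∀ a : G, ∑ x : G, (if a - x ∈ charKer χ then (1 : ℝ) else 0) = M := by
    intro a
    rw [← Equiv.sum_comp (Equiv.subLeft a)]
    simp only [Equiv.subLeft_apply, sub_sub_cancel]
    rw [Finset.sum_boole, hMdef, Nat.card_eq_fintype_card, Fintype.card_subtype]
  have hf1 : ∑ x, f x = M * A.card := by
    simp only [hfsum]
    rw [Finset.sum_comm]
    simp only [hcoset]
    simp [mul_comm]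
  have hf2 : ∑ x, χ x * (f x : ℂ) = M * charSum A χ := by
    have e : ∀ x, χ x * (f x : ℂ) =
        ∑ a ∈ A, χ a * ((if a - x ∈ charKer χ then (1 : ℝ) else 0 : ℝ) : ℂ) := by
      intro x
      rw [hfsum, Complex.ofReal_sum, Finset.mul_sum]
      refine Finset.sum_congr rfl fun a _ => ?_
      split_ifs with hax
      · rw [(sub_mem_charKer χ a x).1 hax]
      · simp
    simp only [e]
    rw [Finset.sum_comm, charSum, Finset.mul_sum]
    refine Finset.sum_congr rfl fun a _ => ?_
    rw [← Finset.mul_sum, ← Complex.ofReal_sum, hcoset, mul_comm]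
  have hχ0 : ∑ x, χ x = 0 := AddChar.sum_eq_zero_iff_ne_zero.2 hχ
  have hbal : (M : ℂ) * charSum A χ = ∑ x, χ x * ((f x - α * M : ℝ) : ℂ) := by
    rw [← hf2]
    simp only [Complex.ofReal_sub, mul_sub]
    rw [Finset.sum_sub_distrib, ← Finset.sum_mul, hχ0]
    simp
  have hnorm : M * ‖charSum A χ‖ ≤ ∑ x, |f x - α * M| := by
    calc M * ‖charSum A χ‖ = ‖(M : ℂ) * charSum A χ‖ := by
          rw [norm_mul, Complex.norm_real, Real.norm_of_nonneg hM.le]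
      _ ≤ ∑ x, ‖χ x * ((f x - α * M : ℝ) : ℂ)‖ := by
          rw [hbal]; exact norm_sum_le _ _
      _ = ∑ x, |f x - α * M| := by
          refine Finset.sum_congr rfl fun x _ => ?_
          rw [norm_mul, AddChar.norm_apply, one_mul, Complex.norm_real, Real.norm_eq_abs]
  -- `|t| = 2 max(t, 0) - t`, and the terms `-t` sum to zero.
  have habs : ∀ x, |f x - α * M| ≤ M * α ^ 2 / 2 - (f x - α * M) := by
    intro x
    have hx := h x
    rw [div_lt_iff₀ hM] at hx
    change f x < _ at hx
    have : 0 ≤ M * α ^ 2 := by positivity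
    rw [abs_le]
    constructor <;> nlinarith
  have hle := hnorm.trans (Finset.sum_le_sum fun x _ => habs x)
  rw [Finset.sum_sub_distrib, Finset.sum_sub_distrib, hf1] at hle
  simp only [Finset.sum_const, Finset.card_univ, nsmul_eq_mul] at hle
  refine le_of_mul_le_mul_left ?_ hM
  rw [← hα] at hle
  linarith

end CountOrIncrement

/-- **Uniformity or density increment.** For every `m ≥ 1` there are `c > 0` and `K ≥ 1`
such that: if `G` is a finite abelian group with `m • x = 0` for all `x` and `A ⊆ G` has
density `α > 0`, then either `Λ(A) ≥ c·α³`, or some subgroup `G' ≤ G` of index at most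
`K` has `max_x |A ∩ (x + G')|/|G'| ≥ α + c·α²`. -/
theorem count_or_increment_bounded_exponent :
    ∀ m : ℕ, 1 ≤ m →
      ∃ (c : ℝ) (K : ℕ), 0 < c ∧ 1 ≤ K ∧
        ∀ (G : Type) [AddCommGroup G] [Fintype G],
          (∀ x : G, m • x = 0) →
          ∀ A : Finset G,
            let α : ℝ := (A.card : ℝ) / (Fintype.card G : ℝ)
            0 < α →
            (apCount A ≥ c * α ^ 3 ∨
              ∃ G' : AddSubgroup G, G'.index ≤ K ∧
                ∃ x : G,
                  ((A.filter (fun a => a - x ∈ G')).card : ℝ) / (Nat.card G' : ℝ) ≥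
                    α + c * α ^ 2) := by
  intro m hm
  refine ⟨1 / 4, m, by norm_num, hm, ?_⟩
  intro G _ _ hG A α hα
  by_contra! hcon
  obtain ⟨hcount, hinc⟩ := hcon
  have hN : (0 : ℝ) < Fintype.card G := by exact_mod_cast Fintype.card_pos
  have hαN : α * Fintype.card G = A.card := div_mul_cancel₀ _ hN.ne'
  have hlow := charSum_count_lower_bound A (α ^ 2 / 2 * Fintype.card G) (by positivity)
    fun χ hχ => charSum_le_of_no_increment A χ hχ α hαN (hinc _ (index_charKer_le hm hG χ))
  rw [apCount, div_lt_iff₀ (by positivity)] at hcount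
  have hup := mul_lt_mul_of_pos_left hcount hN
  rw [← hαN] at hlow
  have hpos : 0 < (α * Fintype.card G) ^ 3 := by positivity
  nlinarith
end

section
/- There exists an absolute constant C > 0 such that the following holds. Let H be a finite abelian group of exponent 2 and let 𝒜 = (A_h)_{h∈H} be a family on H whose density function satisfies f_𝒜 = δ·1_S for some δ ∈ (0,1] and some set S ⊆ H of density σ > 0. Then Λ(𝒜) ≥ exp(−C·δ^{−1}·log(2σ^{−1})). -/
/-!
The idea is to count pairs of elements of `A_h` along translates of a random cube.  Choose `d` with
`2/δ ≤ 2^d ≤ 4/δ`, and for `v ∈ H^d`, `ω ∈ {0,1}^d` write `ω·v = ∑ ω_i v_i`.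

* The proportion of `(v, h)` with `h + ω·v ∈ S` for all `ω` is at least `σ^(2^d)`
  (`cube_count`, by repeated Cauchy–Schwarz).
* For such `(v, h)`, the average over `t` of `X(t) = #{ω : t + ω·v ∈ A_h}` is `δ 2^d ≥ 2`, so
  `X² - X`, the number of ordered pairs `ω ≠ ω'` with both `t + ω·v` and `t + ω'·v` in `A_h`, is on
  average at least `2` (`cube_pairs`).  For every such pair, `a = t + ω·v` and `a' = t + ω'·v` satisfy
  `a + a' + h = h + (ω xor ω')·v ∈ S`, because `H` has exponent `2`.
* For fixed `ω ≠ ω'`, the pair `(t + ω·v, t + ω'·v)` is uniformly distributed on `H²`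
  (`pair_uniform`).

Hence the density of triples `(h, a, a')` with `a, a' ∈ A_h` and `a + a' + h ∈ S` is at least
`2 σ^(2^d) / 4^d`.  Since `Λ(𝒜)` is `δ` times this density, `Λ(𝒜) ≥ δ³ σ^(4/δ) / 8`, and
`C = 6` suffices.
-/

open scoped BigOperators Classical

/-- The density of a family `𝒜 = (A_h)_{h ∈ H}` on `H`:
`P_H(𝒜) = (1/|H|)·Σ_h |A_h|/|H|`. -/
noncomputable def famDensity {H : Type*} [AddCommGroup H] [Fintype H]
    (A : H → Finset H) : ℝ :=
  (∑ h, ((A h).card : ℝ)) / (Fintype.card H : ℝ) ^ 2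

/-- The normalized count associated to a family `𝒜 = (A_h)_{h ∈ H}` on `H`:
`Λ(𝒜) = |{(a,a',y,h) : a ∈ A_h, a' ∈ A_h, y ∈ A_{a+a'-h}}| / |H|⁴`. -/
noncomputable def famLambda {H : Type*} [AddCommGroup H] [Fintype H]
    (A : H → Finset H) : ℝ :=
  ((Finset.univ.filter (fun q : H × H × H × H =>
      q.1 ∈ A q.2.2.2 ∧ q.2.1 ∈ A q.2.2.2 ∧
        q.2.2.1 ∈ A (q.1 + q.2.1 - q.2.2.2))).card : ℝ) /
    (Fintype.card H : ℝ) ^ 4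

/-! ### Cubes and indicators -/

/-- The cube point `ω·v = ∑ ω_i v_i`. -/
def cubePt {H : Type*} [AddCommGroup H] {d : ℕ} (v : Fin d → H) (ω : Fin d → Bool) : H :=
  ∑ i, if ω i then v i else 0

/-- The indicator function of a finite set, with real values. -/
noncomputable def ind {H : Type*} (S : Finset H) (x : H) : ℝ := if x ∈ S then 1 else 0

/-- The indicator of the event that the whole cube `h + {0,1}^d·v` lies in `S`. -/
noncomputable def cubeInd {H : Type*} [AddCommGroup H] (S : Finset H) {d : ℕ} (v : Fin d → H)
    (h : H) : ℝ :=
  ∏ ω : Fin d → Bool, ind S (h + cubePt v ω)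

/-- The number of triples `(h, a, a')` with `a, a' ∈ A_h` and `a + a' + h ∈ S`. -/
noncomputable def tripleCount {H : Type*} [AddCommGroup H] [Fintype H] (A : H → Finset H)
    (S : Finset H) : ℝ :=
  ∑ h, ∑ a, ∑ a', ind (A h) a * ind (A h) a' * ind S (a + a' + h)

section

variable {H : Type*}

lemma ind_nonneg (S : Finset H) (x : H) : 0 ≤ ind S x := by
  unfold ind; split_ifs <;> norm_num

lemma ind_le_one (S : Finset H) (x : H) : ind S x ≤ 1 := by
  unfold ind; split_ifs <;> norm_num

lemma ind_sq (S : Finset H) (x : H) : ind S x * ind S x = ind S x := by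
  unfold ind; split_ifs <;> norm_num

lemma sum_ind [Fintype H] (S : Finset H) : ∑ x, ind S x = S.card := by
  simp [ind]

lemma sum_comm_three {α β γ ι : Type*} [Fintype α] [Fintype β] [Fintype γ] (s : Finset ι)
    (f : α → β → γ → ι → ℝ) :
    ∑ a, ∑ b, ∑ c, ∑ x ∈ s, f a b c x = ∑ x ∈ s, ∑ a, ∑ b, ∑ c, f a b c x := by
  rw [Finset.sum_comm (s := s)]
  refine Finset.sum_congr rfl fun a _ => ?_
  rw [Finset.sum_comm (s := s)]
  exact Finset.sum_congr rfl fun b _ => Finset.sum_comm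

variable [AddCommGroup H]

lemma cubeInd_nonneg (S : Finset H) {d : ℕ} (v : Fin d → H) (h : H) : 0 ≤ cubeInd S v h :=
  Finset.prod_nonneg fun _ _ => ind_nonneg _ _

lemma cubeInd_le (S : Finset H) {d : ℕ} (v : Fin d → H) (h : H) (ω : Fin d → Bool) :
    cubeInd S v h ≤ ind S (h + cubePt v ω) := by
  unfold cubeInd
  rw [← Finset.mul_prod_erase Finset.univ _ (Finset.mem_univ ω)]
  exact mul_le_of_le_one_right (ind_nonneg _ _)
    (Finset.prod_le_one (fun _ _ => ind_nonneg _ _) fun _ _ => ind_le_one _ _)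

lemma cubePt_zero {d : ℕ} (v : Fin d → H) : cubePt v (fun _ => false) = 0 := by
  simp [cubePt]

lemma cubePt_xor (h2 : ∀ x : H, x + x = 0) {d : ℕ} (v : Fin d → H) (ω ω' : Fin d → Bool) :
    cubePt v (fun i => xor (ω i) (ω' i)) = cubePt v ω + cubePt v ω' := by
  unfold cubePt
  rw [← Finset.sum_add_distrib]
  refine Finset.sum_congr rfl fun i _ => ?_
  beta_reduce
  generalize ω i = p
  generalize ω' i = q
  cases p <;> cases q <;> simp [h2]

lemma cubePt_add_single {d : ℕ} (v : Fin d → H) (ω : Fin d → Bool) (i : Fin d) (c : H) :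
    cubePt (v + Pi.single i c) ω = cubePt v ω + if ω i then c else 0 := by
  unfold cubePt
  have : ∀ j, (if ω j then (v + Pi.single i c : Fin d → H) j else 0) =
      (if ω j then v j else 0) + if j = i then (if ω i then c else 0) else 0 := by
    intro j
    by_cases hj : j = i
    · subst hj; cases ω j <;> simp
    · simp [hj]
  simp only [this, Finset.sum_add_distrib, Finset.sum_ite_eq', Finset.mem_univ, if_true]

/-- Splitting a `(d+1)`-dimensional cube along its first direction. -/
lemma cubeInd_cons (S : Finset H) {d : ℕ} (x : H) (v : Fin d → H) (h : H) :
    cubeInd S (Fin.cons x v : Fin (d + 1) → H) h = cubeInd S v h * cubeInd S v (h + x) := by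
  unfold cubeInd
  rw [← (Fin.consEquiv fun _ : Fin (d + 1) => Bool).prod_comp, Fintype.prod_prod_type,
    Fintype.prod_bool, mul_comm]
  congr 1 <;> refine Finset.prod_congr rfl fun ω _ => ?_ <;>
    simp [cubePt, Fin.consEquiv, Fin.sum_univ_succ, add_assoc]

variable [Fintype H]

/-! ### Counting cubes and pairs of cube points -/

/-- Each step in dimension is Cauchy–Schwarz: summing over the new direction turns the sum over `h`
into its square. -/
lemma cube_count (S : Finset H) (d : ℕ) :
    ((S.card : ℝ) / Fintype.card H) ^ (2 ^ d) * (Fintype.card H : ℝ) ^ (d + 1) ≤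
      ∑ v : Fin d → H, ∑ h, cubeInd S v h := by
  have hN : (0 : ℝ) < Fintype.card H := by exact_mod_cast Fintype.card_pos
  induction d with
  | zero =>
    have : ∀ (v : Fin 0 → H) h, cubeInd S v h = ind S h := by
      intro v h; simp [cubeInd, cubePt]
    simp only [this, sum_ind]
    simp [hN.ne']
  | succ d ih =>
    have key : ∑ v : Fin (d + 1) → H, ∑ h, cubeInd S v h =
        ∑ v : Fin d → H, (∑ h, cubeInd S v h) ^ 2 := by
      rw [← (Fin.consEquiv fun _ : Fin (d + 1) => H).sum_comp, Fintype.sum_prod_type,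
        Finset.sum_comm]
      refine Finset.sum_congr rfl fun v _ => ?_
      rw [sq, Finset.sum_mul_sum, Finset.sum_comm]
      refine Finset.sum_congr rfl fun h _ => ?_
      rw [← Equiv.sum_comp (Equiv.addLeft h) (fun j => cubeInd S v h * cubeInd S v j)]
      exact Finset.sum_congr rfl fun x _ => cubeInd_cons S x v h
    rw [key]
    have cs := sq_sum_le_card_mul_sum_sq (s := Finset.univ)
      (f := fun v : Fin d → H => ∑ h, cubeInd S v h)
    have hc : ((Finset.univ : Finset (Fin d → H)).card : ℝ) = (Fintype.card H : ℝ) ^ d := by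
      simp
    rw [hc] at cs
    have h0 : 0 ≤ ((S.card : ℝ) / Fintype.card H) ^ (2 ^ d) * (Fintype.card H : ℝ) ^ (d + 1) := by
      positivity
    have h1 := (pow_le_pow_left₀ h0 ih 2).trans cs
    refine le_of_mul_le_mul_left (le_trans (le_of_eq ?_) h1) (pow_pos hN d)
    ring

/-- For `ω ≠ ω'`, the pair `(t + ω·v, t + ω'·v)` is uniformly distributed on `H²`. -/
lemma pair_uniform (h2 : ∀ x : H, x + x = 0) {d : ℕ} {ω ω' : Fin d → Bool} (hne : ω ≠ ω')
    (g : H → H → ℝ) :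
    (Fintype.card H : ℝ) * ∑ v : Fin d → H, ∑ t, g (t + cubePt v ω) (t + cubePt v ω') =
      (Fintype.card H : ℝ) ^ d * ∑ a, ∑ a', g a a' := by
  obtain ⟨i, hi⟩ := Function.ne_iff.mp hne
  set η : Fin d → Bool := fun j => xor (ω j) (ω' j) with hη
  have hηi : η i = true := by
    simp only [hη]; revert hi; cases ω i <;> cases ω' i <;> simp
  have hshift : ∀ v : Fin d → H, ∑ t, g (t + cubePt v ω) (t + cubePt v ω') =
      ∑ t, g t (t + cubePt v η) := by
    intro v
    rw [← Equiv.sum_comp (Equiv.addRight (cubePt v ω)) (fun t => g t (t + cubePt v η))]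
    refine Finset.sum_congr rfl fun t _ => ?_
    simp only [Equiv.coe_addRight, hη, cubePt_xor h2]
    rw [show t + cubePt v ω + (cubePt v ω + cubePt v ω') =
      t + (cubePt v ω + cubePt v ω) + cubePt v ω' by abel, h2, add_zero]
  -- Translating `v` by `c` in the coordinate `i` translates `η·v` by `c`; average over `c`.
  have havg : ∀ c : H, ∑ v : Fin d → H, ∑ t, g t (t + cubePt v η) =
      ∑ v : Fin d → H, ∑ t, g t (t + cubePt v η + c) := by
    intro c
    rw [← Equiv.sum_comp (Equiv.addRight (Pi.single i c : Fin d → H))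
      (fun v => ∑ t, g t (t + cubePt v η))]
    simp only [Equiv.coe_addRight, cubePt_add_single, hηi, if_true, add_assoc]
  simp only [hshift]
  calc (Fintype.card H : ℝ) * ∑ v : Fin d → H, ∑ t, g t (t + cubePt v η)
      = ∑ _c : H, ∑ v : Fin d → H, ∑ t, g t (t + cubePt v η) := by simp
    _ = ∑ c : H, ∑ v : Fin d → H, ∑ t, g t (t + cubePt v η + c) :=
        Finset.sum_congr rfl fun c _ => havg c
    _ = ∑ v : Fin d → H, ∑ t, ∑ c, g t (t + cubePt v η + c) := by
        rw [Finset.sum_comm]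
        exact Finset.sum_congr rfl fun v _ => Finset.sum_comm
    _ = ∑ _v : Fin d → H, ∑ t, ∑ c, g t c := by
        refine Finset.sum_congr rfl fun v _ => Finset.sum_congr rfl fun t _ => ?_
        exact Equiv.sum_comp (Equiv.addLeft (t + cubePt v η)) (fun c => g t c)
    _ = _ := by simp

/-- If `B` has density at least `2 / 2^d`, an average translate of a cube contains at least two
ordered pairs of distinct indices whose points lie in `B`. -/
lemma cube_pairs (B : Finset H) {d : ℕ} (v : Fin d → H)
    (hB : 2 * (Fintype.card H : ℝ) ≤ 2 ^ d * B.card) :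
    2 * (Fintype.card H : ℝ) ≤ ∑ t, ∑ ω : Fin d → Bool, ∑ ω' ∈ Finset.univ.erase ω,
      ind B (t + cubePt v ω) * ind B (t + cubePt v ω') := by
  have hX : ∑ t, ∑ ω : Fin d → Bool, ind B (t + cubePt v ω) = 2 ^ d * B.card := by
    rw [Finset.sum_comm]
    have : ∀ ω : Fin d → Bool, ∑ t, ind B (t + cubePt v ω) = B.card := fun ω =>
      (Equiv.sum_comp (Equiv.addRight (cubePt v ω)) (ind B)).trans (sum_ind B)
    simp [this]
  have hpair : ∀ t, ∑ ω : Fin d → Bool, ∑ ω' ∈ Finset.univ.erase ω,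
      ind B (t + cubePt v ω) * ind B (t + cubePt v ω') =
      (∑ ω : Fin d → Bool, ind B (t + cubePt v ω)) ^ 2 -
        ∑ ω : Fin d → Bool, ind B (t + cubePt v ω) := by
    intro t
    rw [sq, Finset.sum_mul_sum, ← Finset.sum_sub_distrib]
    refine Finset.sum_congr rfl fun ω _ => ?_
    rw [← Finset.add_sum_erase Finset.univ _ (Finset.mem_univ ω), ind_sq]
    ring
  simp only [hpair]
  -- `X² - X ≥ 3X - 4`, the tangent line bound at `X = 2`.
  have hlow : ∑ t, (3 * (∑ ω : Fin d → Bool, ind B (t + cubePt v ω)) - 4) ≤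
      ∑ t, ((∑ ω : Fin d → Bool, ind B (t + cubePt v ω)) ^ 2 -
        ∑ ω : Fin d → Bool, ind B (t + cubePt v ω)) :=
    Finset.sum_le_sum fun t _ => by
      nlinarith [sq_nonneg ((∑ ω : Fin d → Bool, ind B (t + cubePt v ω)) - 2)]
  refine le_trans ?_ hlow
  rw [Finset.sum_sub_distrib, ← Finset.mul_sum, hX]
  simp
  linarith

/-! ### The lower bound for triples -/

lemma tripleCount_nonneg (A : H → Finset H) (S : Finset H) : 0 ≤ tripleCount A S :=
  Finset.sum_nonneg fun _ _ => Finset.sum_nonneg fun _ _ => Finset.sum_nonneg fun _ _ =>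
    mul_nonneg (mul_nonneg (ind_nonneg _ _) (ind_nonneg _ _)) (ind_nonneg _ _)

/-- Double counting of the tuples `(v, h, t, ω, ω')` with `ω ≠ ω'`, the cube `h + {0,1}^d·v` inside
`S`, and `t + ω·v`, `t + ω'·v` both in `A_h`. -/
lemma tripleCount_lower (h2 : ∀ x : H, x + x = 0) (A : H → Finset H) (S : Finset H) (d : ℕ)
    (hA : ∀ h ∈ S, 2 * (Fintype.card H : ℝ) ≤ 2 ^ d * (A h).card) :
    2 * ((S.card : ℝ) / Fintype.card H) ^ (2 ^ d) * (Fintype.card H : ℝ) ^ 3 ≤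
      4 ^ d * tripleCount A S := by
  have hN : (0 : ℝ) < Fintype.card H := by exact_mod_cast Fintype.card_pos
  set N : ℝ := (Fintype.card H : ℝ) with hNdef
  let G : H → H → H → ℝ := fun h a a' => ind (A h) a * ind (A h) a' * ind S (a + a' + h)
  have hG : ∀ h a a', 0 ≤ G h a a' := fun _ _ _ =>
    mul_nonneg (mul_nonneg (ind_nonneg _ _) (ind_nonneg _ _)) (ind_nonneg _ _)
  have step1 : ∀ (v : Fin d → H) (h : H), 2 * N * cubeInd S v h ≤
      ∑ t, ∑ ω : Fin d → Bool, ∑ ω' ∈ Finset.univ.erase ω,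
        G h (t + cubePt v ω) (t + cubePt v ω') := by
    intro v h
    by_cases hS : h ∈ S
    · refine (mul_le_mul_of_nonneg_right (cube_pairs (A h) v (hA h hS))
        (cubeInd_nonneg S v h)).trans ?_
      simp only [Finset.sum_mul]
      refine Finset.sum_le_sum fun t _ => Finset.sum_le_sum fun ω _ =>
        Finset.sum_le_sum fun ω' _ => ?_
      refine mul_le_mul_of_nonneg_left ?_ (mul_nonneg (ind_nonneg _ _) (ind_nonneg _ _))
      have := cubeInd_le S v h (fun i => xor (ω i) (ω' i))
      rw [cubePt_xor h2] at this
      rwa [show t + cubePt v ω + (t + cubePt v ω') + h =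
        (t + t) + (h + (cubePt v ω + cubePt v ω')) by abel, h2, zero_add]
    · have h0 : cubeInd S v h = 0 := by
        refine le_antisymm ((cubeInd_le S v h fun _ => false).trans ?_) (cubeInd_nonneg S v h)
        simp [cubePt_zero, ind, hS]
      rw [h0, mul_zero]
      exact Finset.sum_nonneg fun _ _ => Finset.sum_nonneg fun _ _ =>
        Finset.sum_nonneg fun _ _ => hG _ _ _
  have step2 : 2 * N * ∑ v : Fin d → H, ∑ h, cubeInd S v h ≤
      ∑ ω : Fin d → Bool, ∑ ω' ∈ Finset.univ.erase ω, ∑ h, ∑ v : Fin d → H, ∑ t,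
        G h (t + cubePt v ω) (t + cubePt v ω') := by
    calc 2 * N * ∑ v : Fin d → H, ∑ h, cubeInd S v h
        = ∑ h, ∑ v : Fin d → H, 2 * N * cubeInd S v h := by
          rw [Finset.sum_comm]; simp only [Finset.mul_sum]
      _ ≤ ∑ h, ∑ v : Fin d → H, ∑ t, ∑ ω : Fin d → Bool, ∑ ω' ∈ Finset.univ.erase ω,
            G h (t + cubePt v ω) (t + cubePt v ω') :=
          Finset.sum_le_sum fun h _ => Finset.sum_le_sum fun v _ => step1 v h
      _ = _ := by
          rw [sum_comm_three]
          exact Finset.sum_congr rfl fun ω _ => sum_comm_three _ _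
  have step3 : ∀ ω : Fin d → Bool, ∀ ω' ∈ Finset.univ.erase ω,
      N * ∑ h, ∑ v : Fin d → H, ∑ t, G h (t + cubePt v ω) (t + cubePt v ω') =
        N ^ d * tripleCount A S := by
    intro ω ω' hω
    rw [Finset.mul_sum, tripleCount, Finset.mul_sum]
    exact Finset.sum_congr rfl fun h _ =>
      pair_uniform h2 (Finset.ne_of_mem_erase hω).symm (G h)
  have step4 : N * (2 * N * ∑ v : Fin d → H, ∑ h, cubeInd S v h) ≤
      4 ^ d * (N ^ d * tripleCount A S) := by
    refine (mul_le_mul_of_nonneg_left step2 hN.le).trans ?_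
    have hT : 0 ≤ N ^ d * tripleCount A S := mul_nonneg (by positivity) (tripleCount_nonneg A S)
    calc _ = ∑ ω : Fin d → Bool, ∑ ω' ∈ Finset.univ.erase ω, N ^ d * tripleCount A S := by
          rw [Finset.mul_sum]
          refine Finset.sum_congr rfl fun ω _ => ?_
          rw [Finset.mul_sum]
          exact Finset.sum_congr rfl (step3 ω)
      _ ≤ ∑ ω : Fin d → Bool, ∑ ω' : Fin d → Bool, N ^ d * tripleCount A S :=
          Finset.sum_le_sum fun ω _ =>
            Finset.sum_le_sum_of_subset_of_nonneg (Finset.erase_subset _ _) fun _ _ _ => hT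
      _ = _ := by
          simp only [Finset.sum_const, Finset.card_univ, Fintype.card_pi, Fintype.card_bool,
            Finset.prod_const, Fintype.card_fin, nsmul_eq_mul]
          rw [show (4 : ℝ) = 2 * 2 by norm_num, mul_pow]
          push_cast
          ring
  have step5 := mul_le_mul_of_nonneg_left (cube_count S d) (by positivity : 0 ≤ N * (2 * N))
  refine le_of_mul_le_mul_left ?_ (pow_pos hN d)
  calc _ = N * (2 * N) * (((S.card : ℝ) / N) ^ (2 ^ d) * N ^ (d + 1)) := by ring
    _ ≤ _ := step5
    _ = N * (2 * N * ∑ v : Fin d → H, ∑ h, cubeInd S v h) := by ring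
    _ ≤ _ := step4
    _ = _ := by ring

/-! ### From triples to `Λ` -/

/-- The variable `y` contributes a factor `|A_(a+a'+h)| = δ |H|` when `a + a' + h ∈ S`, and `0`
otherwise. -/
lemma famLambda_eq (h2 : ∀ x : H, x + x = 0) (A : H → Finset H) (S : Finset H) (δ : ℝ)
    (hA : ∀ h : H, ((A h).card : ℝ) / (Fintype.card H : ℝ) = δ * (if h ∈ S then 1 else 0)) :
    famLambda A = δ * tripleCount A S / (Fintype.card H : ℝ) ^ 3 := by
  have hN : (0 : ℝ) < Fintype.card H := by exact_mod_cast Fintype.card_pos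
  have hcard : ∀ h, ∑ y, ind (A h) y = Fintype.card H * (δ * ind S h) := by
    intro h
    rw [sum_ind, ind, ← hA h]
    field_simp
  have hsum : ((Finset.univ.filter (fun q : H × H × H × H =>
      q.1 ∈ A q.2.2.2 ∧ q.2.1 ∈ A q.2.2.2 ∧
        q.2.2.1 ∈ A (q.1 + q.2.1 - q.2.2.2))).card : ℝ) =
      ∑ a, ∑ a', ∑ y, ∑ h, ind (A h) a * ind (A h) a' * ind (A (a + a' + h)) y := by
    have hneg : ∀ x : H, -x = x := fun x => neg_eq_of_add_eq_zero_left (h2 x)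
    rw [← Finset.sum_boole]
    simp only [Fintype.sum_prod_type]
    refine Finset.sum_congr rfl fun a _ => Finset.sum_congr rfl fun a' _ =>
      Finset.sum_congr rfl fun y _ => Finset.sum_congr rfl fun h _ => ?_
    rw [sub_eq_add_neg, hneg]
    unfold ind
    by_cases h1 : a ∈ A h <;> by_cases h2 : a' ∈ A h <;> simp [h1, h2]
  have htot : ∑ a, ∑ a', ∑ y, ∑ h, ind (A h) a * ind (A h) a' * ind (A (a + a' + h)) y =
      Fintype.card H * (δ * tripleCount A S) := by
    have : ∀ a a' : H, ∑ y, ∑ h, ind (A h) a * ind (A h) a' * ind (A (a + a' + h)) y =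
        Fintype.card H * (δ * ∑ h, ind (A h) a * ind (A h) a' * ind S (a + a' + h)) := by
      intro a a'
      rw [Finset.sum_comm, Finset.mul_sum, Finset.mul_sum]
      refine Finset.sum_congr rfl fun h _ => ?_
      rw [← Finset.mul_sum, hcard]
      ring
    simp only [this, ← Finset.mul_sum]
    congr 2
    unfold tripleCount
    exact (Finset.sum_congr rfl fun a _ => Finset.sum_comm).trans Finset.sum_comm
  rw [famLambda, hsum, htot]
  field_simp

end

/-- The numerical comparison giving the constant `C = 6`, with `K = 2^d`. -/
lemma numeric_bound {δ σ K : ℝ} {k : ℕ} (hk : (k : ℝ) = K) (hδ : 0 < δ) (hδ1 : δ ≤ 1) (hσ : 0 < σ)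
    (hσ1 : σ ≤ 1) (hK0 : 0 < K) (hK : K ≤ 4 / δ) :
    Real.exp (-(6 * δ⁻¹ * Real.log (2 * σ⁻¹))) ≤ δ * (2 * σ ^ k / K ^ 2) := by
  have hpos : 0 < δ * (2 * σ ^ k / K ^ 2) := by positivity
  rw [← Real.le_log_iff_exp_le hpos]
  rw [Real.log_mul hδ.ne' (by positivity), Real.log_div (by positivity) (by positivity),
    Real.log_mul two_ne_zero (pow_pos hσ k).ne', Real.log_pow, Real.log_pow, hk,
    Real.log_mul two_ne_zero (inv_pos.mpr hσ).ne', Real.log_inv]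
  have hlK : Real.log K ≤ 2 * Real.log 2 - Real.log δ := by
    have := Real.log_le_log hK0 hK
    rw [Real.log_div (by norm_num) hδ.ne', show (4 : ℝ) = 2 ^ 2 by norm_num, Real.log_pow] at this
    exact_mod_cast this
  have hlσ : Real.log σ ≤ 0 := Real.log_nonpos hσ.le hσ1
  have hx : 1 ≤ δ⁻¹ := (one_le_inv₀ hδ).mpr hδ1
  have hlδ : -Real.log δ ≤ δ⁻¹ - 1 := by
    rw [← Real.log_inv]; exact Real.log_le_sub_one_of_pos (by positivity)
  have hl2 := Real.log_two_gt_d9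
  rw [div_eq_mul_inv] at hK
  have hA : 6 * δ⁻¹ * Real.log σ ≤ K * Real.log σ :=
    mul_le_mul_of_nonpos_right (by linarith) hlσ
  push_cast
  nlinarith [mul_nonneg (sub_nonneg.mpr hx) (by linarith : 0 ≤ 6 * Real.log 2 - 3)]

/-- **Counting for families with two-valued density function.** There is an absolute
constant `C > 0` such that if `H` is a finite abelian group of exponent `2` and
`𝒜 = (A_h)_{h∈H}` is a family on `H` with `f_𝒜 = δ·1_S` for some `δ ∈ (0,1]` and
`S ⊆ H` of density `σ > 0`, then `Λ(𝒜) ≥ exp(−C·δ⁻¹·log(2·σ⁻¹))`. -/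
theorem family_count_two_valued :
    ∃ C : ℝ, 0 < C ∧
      ∀ (H : Type) [AddCommGroup H] [Fintype H],
        (∀ x : H, x + x = 0) →
        ∀ (A : H → Finset H) (S : Finset H) (δ : ℝ),
          let σ : ℝ := (S.card : ℝ) / (Fintype.card H : ℝ)
          0 < δ → δ ≤ 1 → 0 < σ →
          (∀ h : H, ((A h).card : ℝ) / (Fintype.card H : ℝ) =
            δ * (if h ∈ S then 1 else 0)) →
          famLambda A ≥ Real.exp (-(C * δ⁻¹ * Real.log (2 * σ⁻¹))) := by
  refine ⟨6, by norm_num, ?_⟩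
  intro H _ _ h2 A S δ σ hδ hδ1 hσ hA
  have hN : (0 : ℝ) < Fintype.card H := by exact_mod_cast Fintype.card_pos
  have hσ1 : σ ≤ 1 := by
    rw [div_le_one hN]; exact_mod_cast Finset.card_le_univ S
  obtain ⟨n, hn1, hn2⟩ := exists_nat_pow_near (x := 2 / δ) (y := (2 : ℝ))
    (by rw [le_div_iff₀ hδ]; linarith) (by norm_num)
  have hlow := tripleCount_lower h2 A S (n + 1) (by
    intro h hS
    have := hA h
    rw [if_pos hS, mul_one, div_eq_iff hN.ne'] at this
    rw [this]
    rw [div_lt_iff₀ hδ] at hn2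
    nlinarith)
  have hK : (2 : ℝ) ^ (n + 1) ≤ 4 / δ := by
    rw [pow_succ]
    calc (2 : ℝ) ^ n * 2 ≤ 2 / δ * 2 := by linarith
      _ = 4 / δ := by ring
  refine (numeric_bound (k := 2 ^ (n + 1)) (K := 2 ^ (n + 1)) (by push_cast; rfl) hδ hδ1 hσ hσ1
    (by positivity) hK).trans ?_
  rw [famLambda_eq h2 A S δ hA, mul_div_assoc δ (tripleCount A S)]
  refine mul_le_mul_of_nonneg_left ?_ hδ.le
  rw [div_le_div_iff₀ (by positivity) (by positivity)]
  refine hlow.trans (le_of_eq ?_)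
  rw [show (4 : ℝ) = 2 ^ 2 by norm_num, ← pow_mul, ← pow_mul, mul_comm 2 (n + 1), mul_comm]
end

section
/- There exists an absolute constant C > 0 such that the following holds. Let H be a finite abelian group of exponent 2 and let 𝒜 = (A_h)_{h∈H} be a family on H of density α > 0, and set K := ‖f_𝒜‖²_{L²(H)} / α². If K ≥ 2 then Λ(𝒜) ≥ exp(−C · α^{−1} · K^{−1} · (log K)²). -/
/-!
Let `f` be the density function of the family. By dyadic pigeonholing
(`exists_dyadic_level`), there is `j` such that `f ≥ τ := 2 ^ j · K α / 2` on a set `S` of density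
`σ ≥ 1 / (4 · 8 ^ j · K)`. It then suffices to prove `Λ ≥ (τ³ / 2) σ ^ (2 + 30 / τ)`
(`famLambda_lower_bound`), since this is at least `exp (-(C α⁻¹ K⁻¹ log K))`.

That bound is a density increment argument on `σ`. Up to a factor `τ`, `Λ` is at least the number of
`h ∈ S`, `a, a' ∈ A h` with `a + a' + h ∈ S`. Expanding this count in characters, the trivial one
contributes `σ · E_{h} 1_S(h) f(h)²`, while by Parseval the others contribute at most
`E_{h} 1_S(h) f(h)` times the largest nontrivial Fourier coefficient of `S`. As `f ≥ τ` on `S`,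
either `Λ ≥ τ³ σ² / 2`, or some nontrivial coefficient exceeds `τ σ / 2`. In the latter case the
density of `S` increases by a factor `1 + τ / 2` on a coset of an index-two subgroup `V`. The sets
`A h` may be translated by shifts depending on `h` before they are intersected with `V`, since the
shifts cancel in `a + a'` (`famLambda_restrict`); so each may be replaced by its denser half and the
lower bound `τ` is preserved. The count drops by a factor of at most `16`, which the increment pays
for.
-/

open scoped BigOperators Classical

/-! ### Real characters in exponent two -/

/-- The real part of a complex character. On a group of exponent `2` characters are
`±1`-valued, so nothing is lost by passing to real parts. -/
noncomputable def realChar {H : Type} [AddCommGroup H] (ψ : AddChar H ℂ) (x : H) : ℝ :=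
  (ψ x).re

section Characters

variable {H : Type} [AddCommGroup H]

lemma char_eq_one_or (hH : ∀ x : H, x + x = 0) (ψ : AddChar H ℂ) (x : H) :
    ψ x = 1 ∨ ψ x = -1 := by
  have h : ψ x * ψ x = 1 := by
    rw [← AddChar.map_add_eq_mul, hH, AddChar.map_zero_eq_one]
  exact mul_self_eq_one_iff.mp h

lemma realChar_eq_one_or (hH : ∀ x : H, x + x = 0) (ψ : AddChar H ℂ) (x : H) :
    realChar ψ x = 1 ∨ realChar ψ x = -1 := by
  rcases char_eq_one_or hH ψ x with h | h <;> simp [realChar, h]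

lemma realChar_add (hH : ∀ x : H, x + x = 0) (ψ : AddChar H ℂ) (x y : H) :
    realChar ψ (x + y) = realChar ψ x * realChar ψ y := by
  unfold realChar
  rw [AddChar.map_add_eq_mul]
  rcases char_eq_one_or hH ψ x with h | h <;>
    rcases char_eq_one_or hH ψ y with h' | h' <;> simp [h, h']

lemma sum_realChar [Fintype H] (x : H) :
    ∑ ψ : AddChar H ℂ, realChar ψ x = if x = 0 then (Fintype.card H : ℝ) else 0 := by
  have h := congrArg Complex.re (AddChar.sum_apply_eq_ite (α := H) x)
  rw [Complex.re_sum] at h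
  unfold realChar
  rw [h]
  split_ifs <;> simp

lemma add_eq_zero_iff_of_exponent_two (hH : ∀ x : H, x + x = 0) (x y : H) :
    x + y = 0 ↔ x = y := by
  rw [add_eq_zero_iff_eq_neg, neg_eq_of_add_eq_zero_left (hH y)]

/-- Parseval's identity for the indicator function of a finite set. -/
lemma parseval_realChar [Fintype H] (hH : ∀ x : H, x + x = 0) (B : Finset H) :
    ∑ ψ : AddChar H ℂ, (∑ a ∈ B, realChar ψ a) ^ 2
      = (Fintype.card H : ℝ) * (B.card : ℝ) := by
  have h1 : ∀ ψ : AddChar H ℂ, (∑ a ∈ B, realChar ψ a) ^ 2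
      = ∑ a ∈ B, ∑ a' ∈ B, realChar ψ (a + a') := by
    intro ψ
    rw [sq, Finset.sum_mul_sum]
    simp_rw [realChar_add hH]
  simp_rw [h1]
  rw [Finset.sum_comm]
  have h2 : ∀ a ∈ B, ∑ ψ : AddChar H ℂ, ∑ a' ∈ B, realChar ψ (a + a')
      = (Fintype.card H : ℝ) := by
    intro a ha
    rw [Finset.sum_comm]
    simp_rw [sum_realChar, add_eq_zero_iff_of_exponent_two hH]
    simp [ha]
  rw [Finset.sum_congr rfl h2]
  simp [mul_comm]

/-- Fourier expansion of the number of triples `(h, a, a')` with `h ∈ S`, `a, a' ∈ A h` and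
`a + a' + h ∈ S`. -/
lemma fourier_count [Fintype H] (hH : ∀ x : H, x + x = 0) (A : H → Finset H)
    (S : Finset H) :
    ∑ ψ : AddChar H ℂ, ∑ h ∈ S, (∑ a ∈ A h, realChar ψ a) ^ 2 *
        ((∑ s ∈ S, realChar ψ s) * realChar ψ h)
      = (Fintype.card H : ℝ) *
        ∑ h ∈ S, ∑ a ∈ A h, ∑ a' ∈ A h, if a + a' + h ∈ S then (1 : ℝ) else 0 := by
  have h1 : ∀ (ψ : AddChar H ℂ) (h : H), (∑ a ∈ A h, realChar ψ a) ^ 2 *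
        ((∑ s ∈ S, realChar ψ s) * realChar ψ h)
      = ∑ a ∈ A h, ∑ a' ∈ A h, ∑ s ∈ S, realChar ψ ((a + a' + h) + s) := by
    intro ψ h
    simp_rw [realChar_add hH]
    simp_rw [← Finset.mul_sum, ← Finset.sum_mul, ← Finset.mul_sum, ← Finset.sum_mul]
    ring
  simp_rw [h1]
  rw [Finset.sum_comm, Finset.mul_sum]
  refine Finset.sum_congr rfl fun h _ => ?_
  rw [Finset.sum_comm, Finset.mul_sum]
  refine Finset.sum_congr rfl fun a _ => ?_
  rw [Finset.sum_comm, Finset.mul_sum]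
  refine Finset.sum_congr rfl fun a' _ => ?_
  rw [Finset.sum_comm]
  simp_rw [sum_realChar, add_eq_zero_iff_of_exponent_two hH]
  simp

end Characters

/-! ### The density increment -/

section Increment

variable {H : Type} [AddCommGroup H] [Fintype H]

lemma famLambda_eq_sum (A : H → Finset H) :
    famLambda A = (∑ h, ∑ a ∈ A h, ∑ a' ∈ A h, ((A (a + a' - h)).card : ℝ)) /
      (Fintype.card H : ℝ) ^ 4 := by
  unfold famLambda
  congr 1
  rw [Finset.card_filter]
  push_cast
  simp_rw [Fintype.sum_prod_type]
  have hs : ∀ (B : Finset H) (g : H → ℝ), ∑ a ∈ B, g a = ∑ a, if a ∈ B then g a else 0 := by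
    intro B g; simp
  have comm3 : ∀ F : H → H → H → H → ℝ, ∑ a, ∑ a', ∑ y, ∑ h, F a a' y h
      = ∑ h, ∑ a, ∑ a', ∑ y, F a a' y h := by
    intro F
    rw [Finset.sum_comm (s := (Finset.univ : Finset H)) (t := (Finset.univ : Finset H))
      (f := fun h a => ∑ a', ∑ y, F a a' y h)]
    refine Finset.sum_congr rfl fun a _ => ?_
    rw [Finset.sum_comm (s := (Finset.univ : Finset H)) (t := (Finset.univ : Finset H))
      (f := fun h a' => ∑ y, F a a' y h)]
    exact Finset.sum_congr rfl fun a' _ => Finset.sum_comm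
  rw [comm3]
  refine Finset.sum_congr rfl fun h _ => ?_
  rw [hs (A h)]
  refine Finset.sum_congr rfl fun a _ => ?_
  by_cases ha : a ∈ A h
  · simp only [ha, true_and, if_true]
    rw [hs (A h)]
    refine Finset.sum_congr rfl fun a' _ => ?_
    by_cases ha' : a' ∈ A h <;> simp [ha']
  · simp [ha]

/-- If no nontrivial Fourier coefficient of `S` exceeds `(τ / 2) |S|`, then the trivial character
dominates the Fourier expansion of the count. -/
lemma count_of_small_coeff (hH : ∀ x : H, x + x = 0) (A : H → Finset H) (S : Finset H)
    (τ : ℝ) (hτ : 0 < τ) (hA : ∀ h ∈ S, τ * Fintype.card H ≤ (A h).card)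
    (hS : ∀ ψ : AddChar H ℂ, ψ ≠ 0 → |∑ s ∈ S, realChar ψ s| ≤ τ / 2 * S.card) :
    τ ^ 3 / 2 * ((S.card : ℝ) / Fintype.card H) ^ 2 ≤ famLambda A := by
  set N : ℝ := (Fintype.card H : ℝ) with hN
  have hNpos : 0 < N := by rw [hN]; exact_mod_cast Fintype.card_pos
  set T : ℝ := ∑ h ∈ S, ∑ a ∈ A h, ∑ a' ∈ A h, if a + a' + h ∈ S then (1 : ℝ) else 0 with hT
  set Q : ℝ := ∑ h ∈ S, ((A h).card : ℝ) ^ 2 with hQ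
  set R : ℝ := ∑ h ∈ S, ((A h).card : ℝ) with hR
  have hF := fourier_count hH A S
  rw [← hT, ← hN] at hF
  have hmain : (S.card : ℝ) * Q - τ / 2 * S.card * (N * R) ≤ N * T := by
    rw [← hF, ← Finset.add_sum_erase _ _ (Finset.mem_univ (0 : AddChar H ℂ))]
    have h0 : ∑ h ∈ S, (∑ a ∈ A h, realChar (0 : AddChar H ℂ) a) ^ 2 *
        ((∑ s ∈ S, realChar (0 : AddChar H ℂ) s) * realChar (0 : AddChar H ℂ) h)
        = (S.card : ℝ) * Q := by
      simp [realChar, hQ, Finset.mul_sum, mul_comm]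
    have h1 : -(τ / 2 * S.card * (N * R)) ≤
        ∑ ψ ∈ Finset.univ.erase (0 : AddChar H ℂ), ∑ h ∈ S, (∑ a ∈ A h, realChar ψ a) ^ 2 *
        ((∑ s ∈ S, realChar ψ s) * realChar ψ h) := by
      have hb : ∀ ψ ∈ Finset.univ.erase (0 : AddChar H ℂ),
          -(τ / 2 * S.card * ∑ h ∈ S, (∑ a ∈ A h, realChar ψ a) ^ 2) ≤
          ∑ h ∈ S, (∑ a ∈ A h, realChar ψ a) ^ 2 *
            ((∑ s ∈ S, realChar ψ s) * realChar ψ h) := by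
        intro ψ hψ
        rw [Finset.mul_sum, ← Finset.sum_neg_distrib]
        refine Finset.sum_le_sum fun h _ => ?_
        have hs := abs_le.mp (hS ψ (Finset.ne_of_mem_erase hψ))
        have hsq := sq_nonneg (∑ a ∈ A h, realChar ψ a)
        rcases realChar_eq_one_or hH ψ h with e | e <;> rw [e] <;> nlinarith
      have hP : ∑ ψ : AddChar H ℂ, ∑ h ∈ S, (∑ a ∈ A h, realChar ψ a) ^ 2 = N * R := by
        rw [Finset.sum_comm, hR, Finset.mul_sum]
        exact Finset.sum_congr rfl fun h _ => parseval_realChar hH (A h)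
      have hle : ∑ ψ ∈ Finset.univ.erase (0 : AddChar H ℂ),
          ∑ h ∈ S, (∑ a ∈ A h, realChar ψ a) ^ 2 ≤ N * R := by
        rw [← hP]
        exact Finset.sum_le_sum_of_subset_of_nonneg (Finset.erase_subset _ _)
          fun ψ _ _ => Finset.sum_nonneg fun h _ => sq_nonneg _
      refine le_trans ?_ (Finset.sum_le_sum hb)
      rw [Finset.sum_neg_distrib, ← Finset.mul_sum]
      have : 0 ≤ τ / 2 * (S.card : ℝ) := by positivity
      exact neg_le_neg (mul_le_mul_of_nonneg_left hle this)
    linarith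
  have hRQ : τ * N * R ≤ Q := by
    rw [hR, hQ, Finset.mul_sum]
    refine Finset.sum_le_sum fun h hh => ?_
    rw [sq]
    exact mul_le_mul_of_nonneg_right (hA h hh) (Nat.cast_nonneg _)
  have hRS : τ * N * S.card ≤ R := by
    rw [hR]
    have := Finset.card_nsmul_le_sum S (fun h => ((A h).card : ℝ)) (τ * N) hA
    simpa [mul_comm] using this
  have hT2 : τ ^ 2 / 2 * N * (S.card : ℝ) ^ 2 ≤ T := by
    have hs : (0 : ℝ) ≤ S.card := Nat.cast_nonneg _
    have e1 : τ * N * (τ * N * S.card) ≤ Q :=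
      (mul_le_mul_of_nonneg_left hRS (by positivity)).trans hRQ
    have e2 : N * (τ ^ 2 / 2 * N * (S.card : ℝ) ^ 2) ≤ N * T := by
      have e3 := mul_le_mul_of_nonneg_left e1 hs
      have e4 := mul_le_mul_of_nonneg_left hRQ hs
      nlinarith
    exact le_of_mul_le_mul_left e2 hNpos
  have hL : τ * N * T ≤ ∑ h, ∑ a ∈ A h, ∑ a' ∈ A h, ((A (a + a' - h)).card : ℝ) := by
    rw [hT, Finset.mul_sum]
    refine le_trans (Finset.sum_le_sum fun h _ => ?_)
      (Finset.sum_le_sum_of_subset_of_nonneg (Finset.subset_univ S) fun h _ _ =>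
        Finset.sum_nonneg fun a _ => Finset.sum_nonneg fun a' _ => Nat.cast_nonneg _)
    rw [Finset.mul_sum]
    refine Finset.sum_le_sum fun a _ => ?_
    rw [Finset.mul_sum]
    refine Finset.sum_le_sum fun a' _ => ?_
    have hneg : a + a' - h = a + a' + h := by
      rw [sub_eq_add_neg, neg_eq_of_add_eq_zero_left (hH h)]
    rw [hneg]
    split_ifs with hm
    · simpa using hA _ hm
    · simp
  rw [famLambda_eq_sum, ← hN, le_div_iff₀ (by positivity)]
  refine le_trans (le_of_eq ?_) ((mul_le_mul_of_nonneg_left hT2 (by positivity :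
    0 ≤ τ * N)).trans hL)
  field_simp

/-- A family on `V` obtained by translating the sets of a family on `H`, by shifts that may depend on
the index, and intersecting with `V`: its solutions embed into those of the original family. In
exponent `2` the shift `w (x + v)` cancels in `a + a'`. -/
lemma famLambda_restrict (hH : ∀ x : H, x + x = 0) (A : H → Finset H) (V : AddSubgroup H)
    (x : H) (w : H → H) :
    famLambda (fun v : V => Finset.univ.filter fun u : V => (u : H) + w (x + v) ∈ A (x + v)) *
      (Fintype.card V : ℝ) ^ 4 ≤ famLambda A * (Fintype.card H : ℝ) ^ 4 := by
  have hNpos : (0 : ℝ) < (Fintype.card H : ℝ) := by exact_mod_cast Fintype.card_pos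
  have hVpos : (0 : ℝ) < (Fintype.card V : ℝ) := by exact_mod_cast Fintype.card_pos
  unfold famLambda
  rw [div_mul_cancel₀ _ (by positivity), div_mul_cancel₀ _ (by positivity)]
  norm_cast
  have key : ∀ a a' v : V, (a : H) + w (x + v) + (a' + w (x + v)) - (x + v)
      = x + ((a + a' - v : V) : H) := by
    intro a a' v
    have e1 := hH (w (x + v))
    have e2 := hH x
    have : (a : H) + w (x + v) + (a' + w (x + v)) - (x + v)
      = x + ((a : H) + a' - v) + (w (x + v) + w (x + v)) - (x + x) := by abel
    rw [this, e1, e2]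
    simp
  refine Finset.card_le_card_of_injOn
    (fun q : V × V × V × V => ((q.1 : H) + w (x + q.2.2.2), (q.2.1 : H) + w (x + q.2.2.2),
      (q.2.2.1 : H) + w (x + ((q.1 + q.2.1 - q.2.2.2 : V) : H)), x + (q.2.2.2 : H))) ?_ ?_
  · rintro ⟨a, a', y, v⟩ hq
    simp only [Finset.coe_filter, Finset.mem_filter, Finset.mem_univ, true_and,
      Set.mem_ofPred_eq] at hq ⊢
    rw [key]
    exact hq
  · rintro ⟨a, a', y, v⟩ - ⟨b, b', z, u⟩ - h
    simp only [Prod.mk.injEq] at h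
    obtain ⟨h1, h2, h3, h4⟩ := h
    have hv : v = u := Subtype.ext (add_left_cancel h4)
    subst hv
    have ha : a = b := Subtype.ext (add_right_cancel h1)
    have ha' : a' = b' := Subtype.ext (add_right_cancel h2)
    subst ha ha'
    have hy : y = z := Subtype.ext (add_right_cancel h3)
    rw [hy]

/-- A large Fourier coefficient of `S` gives a density increment for `S` on a coset of an index-two
subgroup. The lower bound `τ` for the densities of the sets `A h` survives, because each of them may
be intersected with whichever coset suits it better. -/
lemma increment_of_large_coeff (hH : ∀ x : H, x + x = 0) (A : H → Finset H) (S : Finset H)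
    (τ : ℝ) (hA : ∀ h ∈ S, τ * Fintype.card H ≤ (A h).card)
    (ψ : AddChar H ℂ) (hψ : ψ ≠ 0) (hS : τ / 2 * S.card < |∑ s ∈ S, realChar ψ s|) :
    ∃ (V : AddSubgroup H) (B : V → Finset V) (S' : Finset V),
      (Fintype.card H : ℝ) = 2 * Fintype.card V ∧
      (∀ v ∈ S', τ * Fintype.card V ≤ (B v).card) ∧
      (S.card : ℝ) * (1 + τ / 2) ≤ 2 * S'.card ∧
      famLambda B ≤ 16 * famLambda A := by
  let V : AddSubgroup H :=
    { carrier := {x | ψ x = 1}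
      add_mem' := by
        intro a b ha hb
        simp only [Set.mem_ofPred_eq] at *
        rw [AddChar.map_add_eq_mul, ha, hb, one_mul]
      zero_mem' := AddChar.map_zero_eq_one ψ
      neg_mem' := by
        intro a ha
        rwa [neg_eq_of_add_eq_zero_left (hH a)] }
  have hV : ∀ y, y ∈ V ↔ ψ y = 1 := fun y => Iff.rfl
  obtain ⟨x₀, hx₀⟩ : ∃ x₀, ψ x₀ = -1 := by
    by_contra! hcon
    apply hψ
    ext y
    have := (char_eq_one_or hH ψ y).resolve_right (hcon y)
    simpa using this
  have hcardV : ∀ (C : Finset H) (x : H),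
      ((Finset.univ.filter fun u : V => (u : H) + x ∈ C).card : ℝ)
        = ∑ c ∈ C, (1 + realChar ψ c * realChar ψ x) / 2 := by
    intro C x
    have e : (Finset.univ.filter fun u : V => (u : H) + x ∈ C).card
        = (C.filter fun c => c + x ∈ V).card := by
      refine Finset.card_bij (fun u _ => (u : H) + x) ?_ ?_ ?_
      · intro u hu
        simp only [Finset.mem_filter, Finset.mem_univ, true_and] at hu ⊢
        refine ⟨hu, ?_⟩
        rw [add_assoc, hH, add_zero]
        exact u.2
      · intro u _ u' _ h
        exact Subtype.ext (add_right_cancel h)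
      · intro c hc
        simp only [Finset.mem_filter] at hc
        have hcx : c + x + x = c := by rw [add_assoc, hH, add_zero]
        refine ⟨⟨c + x, hc.2⟩, ?_, hcx⟩
        simp only [Finset.mem_filter, Finset.mem_univ, true_and]
        rw [hcx]
        exact hc.1
    rw [e, Finset.card_filter]
    push_cast
    refine Finset.sum_congr rfl fun c _ => ?_
    rw [hV, ← realChar_add hH]
    unfold realChar
    rcases char_eq_one_or hH ψ (c + x) with h | h <;> rw [h]
    · norm_num
    · norm_num
  have hr0 : realChar ψ 0 = 1 := by simp [realChar]
  have hr1 : realChar ψ x₀ = -1 := by simp [realChar, hx₀]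
  -- The two cosets of `V` split every set into two parts whose sizes differ by its coefficient.
  have hc0 : ∀ C : Finset H, ((Finset.univ.filter fun u : V => (u : H) + 0 ∈ C).card : ℝ)
      = (C.card + ∑ c ∈ C, realChar ψ c) / 2 := by
    intro C
    rw [hcardV, hr0, ← Finset.sum_div, Finset.sum_add_distrib]
    simp
  have hc1 : ∀ C : Finset H, ((Finset.univ.filter fun u : V => (u : H) + x₀ ∈ C).card : ℝ)
      = (C.card - ∑ c ∈ C, realChar ψ c) / 2 := by
    intro C
    rw [hcardV, hr1, ← Finset.sum_div, Finset.sum_add_distrib]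
    simp [sub_eq_add_neg]
  have hHV : (Fintype.card H : ℝ) = 2 * Fintype.card V := by
    have a0 := hc0 Finset.univ
    have a1 := hc1 Finset.univ
    simp only [Finset.mem_univ, Finset.filter_true, Finset.card_univ] at a0 a1
    linarith
  have hw : ∀ h, ∃ w : H, ((A h).card : ℝ) ≤
      2 * (Finset.univ.filter fun u : V => (u : H) + w ∈ A h).card := by
    intro h
    rcases le_total 0 (∑ c ∈ A h, realChar ψ c) with hs | hs
    · exact ⟨0, by rw [hc0]; linarith⟩
    · exact ⟨x₀, by rw [hc1]; linarith⟩
  choose w hw using hw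
  obtain ⟨x, hx⟩ : ∃ x : H, (S.card : ℝ) * (1 + τ / 2) ≤
      2 * (Finset.univ.filter fun u : V => (u : H) + x ∈ S).card := by
    rcases le_total 0 (∑ s ∈ S, realChar ψ s) with hs | hs
    · rw [abs_of_nonneg hs] at hS
      exact ⟨0, by rw [hc0]; linarith⟩
    · rw [abs_of_nonpos hs] at hS
      exact ⟨x₀, by rw [hc1]; linarith⟩
  refine ⟨V, fun v => Finset.univ.filter fun u : V => (u : H) + w (x + v) ∈ A (x + v),
    Finset.univ.filter fun u : V => (u : H) + x ∈ S, hHV, ?_, hx, ?_⟩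
  · intro v hv
    simp only [Finset.mem_filter, Finset.mem_univ, true_and] at hv
    rw [add_comm] at hv
    have h1 := hA _ hv
    have h2 := hw (x + v)
    rw [hHV] at h1
    linarith
  · have h := famLambda_restrict hH A V x w
    have hVpos : (0 : ℝ) < (Fintype.card V : ℝ) ^ 4 := by
      have : (0 : ℝ) < (Fintype.card V : ℝ) := by exact_mod_cast Fintype.card_pos
      positivity
    rw [hHV] at h
    refine le_of_mul_le_mul_right ?_ hVpos
    linarith

end Increment

/-- Iterating the density increment. The exponent `2 + 30 / τ` is chosen so that one increment, which
multiplies the density by at least `1 + τ / 2`, pays for the factor `16` lost in the count. -/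
lemma famLambda_lower_bound (n : ℕ) : ∀ (H : Type) [AddCommGroup H] [Fintype H],
    Fintype.card H = n → (∀ x : H, x + x = 0) → ∀ (A : H → Finset H) (S : Finset H) (τ : ℝ),
    0 < τ → S.Nonempty → (∀ h ∈ S, τ * Fintype.card H ≤ (A h).card) →
    τ ^ 3 / 2 * ((S.card : ℝ) / Fintype.card H) ^ (2 + 30 / τ) ≤ famLambda A := by
  induction n using Nat.strong_induction_on with
  | _ n ih =>
  intro H _ _ hn hH A S τ hτ hS hA
  have hNpos : (0 : ℝ) < (Fintype.card H : ℝ) := by exact_mod_cast Fintype.card_pos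
  have hSpos : (0 : ℝ) < (S.card : ℝ) := by exact_mod_cast hS.card_pos
  have hσ : 0 < (S.card : ℝ) / Fintype.card H := by positivity
  have hσ1 : (S.card : ℝ) / Fintype.card H ≤ 1 := by
    rw [div_le_one hNpos]
    exact_mod_cast Finset.card_le_univ S
  by_cases hsm : ∀ ψ : AddChar H ℂ, ψ ≠ 0 → |∑ s ∈ S, realChar ψ s| ≤ τ / 2 * S.card
  · refine le_trans ?_ (count_of_small_coeff hH A S τ hτ hA hsm)
    refine mul_le_mul_of_nonneg_left ?_ (by positivity)
    rw [← Real.rpow_natCast]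
    refine Real.rpow_le_rpow_of_exponent_ge hσ hσ1 ?_
    have : 0 < 30 / τ := by positivity
    push_cast
    linarith
  · push Not at hsm
    obtain ⟨ψ, hψ, hlarge⟩ := hsm
    obtain ⟨V, B, S', hHV, hB, hS', hΛ⟩ := increment_of_large_coeff hH A S τ hA ψ hψ hlarge
    have hVpos : (0 : ℝ) < (Fintype.card V : ℝ) := by exact_mod_cast Fintype.card_pos
    have hlt : Fintype.card V < n := by
      have : Fintype.card H = 2 * Fintype.card V := by exact_mod_cast hHV
      have : 0 < Fintype.card V := Fintype.card_pos
      omega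
    have hS'pos : (0 : ℝ) < S'.card := by
      have : 0 < (S.card : ℝ) * (1 + τ / 2) := by positivity
      linarith
    have hV2 : ∀ v : V, v + v = 0 := fun v => Subtype.ext (hH v)
    have hrec := ih _ hlt V rfl hV2 B S' τ hτ
      (Finset.card_pos.mp (by exact_mod_cast hS'pos)) hB
    obtain ⟨h, hh⟩ := hS
    have hτ1 : τ ≤ 1 := by
      have h1 := hA h hh
      have h2 : ((A h).card : ℝ) ≤ Fintype.card H := by exact_mod_cast Finset.card_le_univ _
      by_contra! hc
      nlinarith
    have hinc : (S.card : ℝ) / Fintype.card H * (1 + τ / 2) ≤ (S'.card : ℝ) / Fintype.card V := by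
      rw [hHV, div_mul_eq_mul_div, div_le_div_iff₀ (by positivity) hVpos]
      nlinarith
    have hbern : (16 : ℝ) ≤ (1 + τ / 2) ^ (2 + 30 / τ) := by
      have h30 : 0 < 30 / τ := by positivity
      have := one_add_mul_self_le_rpow_one_add (s := τ / 2) (by linarith) (p := 2 + 30 / τ)
        (by linarith)
      refine le_trans ?_ this
      have e : 30 / τ * (τ / 2) = 15 := by field_simp; norm_num
      nlinarith
    have hpow : 16 * ((S.card : ℝ) / Fintype.card H) ^ (2 + 30 / τ)
        ≤ ((S'.card : ℝ) / Fintype.card V) ^ (2 + 30 / τ) := by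
      refine le_trans ?_ (Real.rpow_le_rpow (by positivity) hinc (by positivity))
      rw [Real.mul_rpow hσ.le (by positivity), mul_comm]
      exact mul_le_mul_of_nonneg_left hbern (by positivity)
    have := mul_le_mul_of_nonneg_left hpow (by positivity : 0 ≤ τ ^ 3 / 2)
    linarith

/-! ### Choice of the level and numerical bounds -/

/-- Dyadic pigeonholing: a function `f ≥ 0` with mean `α` and mean square `K α²` is, for some `j`, at
least `2 ^ j · K α / 2` on a set of density at least `1 / (4 · 8 ^ j · K)`. -/
lemma exists_dyadic_level {ι : Type} [Fintype ι] [Nonempty ι] (f : ι → ℝ) (hf : ∀ i, 0 ≤ f i)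
    (α K : ℝ) (hα : 0 < α) (hK : 0 < K)
    (hmean : ∑ i, f i = α * Fintype.card ι)
    (hsq : ∑ i, f i ^ 2 = K * α ^ 2 * Fintype.card ι) :
    ∃ j : ℕ, (Fintype.card ι : ℝ) / (4 * 8 ^ j * K) ≤
      ((Finset.univ.filter fun i => 2 ^ j * (K * α / 2) ≤ f i).card : ℝ) := by
  set N : ℝ := (Fintype.card ι : ℝ) with hN
  have hNpos : 0 < N := by rw [hN]; exact_mod_cast Fintype.card_pos
  set t : ℝ := K * α / 2 with ht
  have htpos : 0 < t := by positivity
  by_contra! hcon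
  obtain ⟨J, hJ⟩ : ∃ J : ℕ, ∀ i, f i < 2 ^ J * t := by
    obtain ⟨J, hJ⟩ := pow_unbounded_of_one_lt ((∑ i, f i) / t) (one_lt_two : (1 : ℝ) < 2)
    refine ⟨J, fun i => ?_⟩
    rw [div_lt_iff₀ htpos] at hJ
    exact (Finset.single_le_sum (fun i _ => hf i) (Finset.mem_univ i)).trans_lt hJ
  -- If `y < t` then `y ^ 2 ≤ t * y`; otherwise the largest level `2 ^ j * t ≤ y` bounds `y ^ 2`.
  have hpt : ∀ m : ℕ, ∀ y : ℝ, 0 ≤ y → y < 2 ^ m * t →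
      y ^ 2 ≤ t * y + ∑ j ∈ Finset.range m, if 2 ^ j * t ≤ y then 4 ^ (j + 1) * t ^ 2 else 0 := by
    intro m
    induction m with
    | zero =>
      intro y hy hyt
      simp at hyt ⊢
      nlinarith
    | succ m ihm =>
      intro y hy hyt
      rw [Finset.sum_range_succ]
      by_cases hc : 2 ^ m * t ≤ y
      · rw [if_pos hc]
        have h0 : 0 ≤ ∑ j ∈ Finset.range m, if 2 ^ j * t ≤ y then 4 ^ (j + 1) * t ^ 2 else 0 :=
          Finset.sum_nonneg fun j _ => by split_ifs <;> positivity
        have h1 : y ^ 2 ≤ (2 ^ (m + 1) * t) ^ 2 := pow_le_pow_left₀ hy hyt.le 2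
        have h2 : ((2 : ℝ) ^ (m + 1) * t) ^ 2 = 4 ^ (m + 1) * t ^ 2 := by
          rw [mul_pow, ← pow_mul, mul_comm (m + 1) 2, pow_mul]; norm_num
        have h3 : 0 ≤ t * y := by positivity
        linarith
      · rw [if_neg hc, add_zero]
        exact ihm y hy (not_le.mp hc)
  have hsum : ∑ i, f i ^ 2 ≤ t * (α * N) + ∑ j ∈ Finset.range J, 4 ^ (j + 1) * t ^ 2 *
      ((Finset.univ.filter fun i => 2 ^ j * t ≤ f i).card : ℝ) := by
    refine (Finset.sum_le_sum fun i _ => hpt J (f i) (hf i) (hJ i)).trans (le_of_eq ?_)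
    rw [Finset.sum_add_distrib, ← Finset.mul_sum, hmean, Finset.sum_comm]
    congr 1
    refine Finset.sum_congr rfl fun j _ => ?_
    rw [← Finset.sum_filter, Finset.sum_const, nsmul_eq_mul, mul_comm]
  have hlev : ∀ j ∈ Finset.range J, 4 ^ (j + 1) * t ^ 2 *
      ((Finset.univ.filter fun i => 2 ^ j * t ≤ f i).card : ℝ)
      ≤ t ^ 2 * (N / K) * (1 / 2) ^ j := by
    intro j _
    refine (mul_le_mul_of_nonneg_left (hcon j).le (by positivity)).trans (le_of_eq ?_)
    have e : (8 : ℝ) ^ j = 4 ^ j * 2 ^ j := by rw [← mul_pow]; norm_num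
    rw [e, one_div_pow, pow_succ]
    field_simp
  have hgeo : ∑ j ∈ Finset.range J, ((1 : ℝ) / 2) ^ j < 2 := by
    rw [geom_sum_eq (by norm_num)]
    have : (0 : ℝ) < (1 / 2) ^ J := by positivity
    rw [div_lt_iff_of_neg (by norm_num)]
    linarith
  have htot := Finset.sum_le_sum hlev
  rw [← Finset.mul_sum] at htot
  have hpos : 0 < t ^ 2 * (N / K) := by positivity
  have h2 := mul_lt_mul_of_pos_left hgeo hpos
  have e1 : t * (α * N) = K * α ^ 2 * N / 2 := by rw [ht]; ring
  have e2 : t ^ 2 * (N / K) * 2 = K * α ^ 2 * N / 2 := by rw [ht]; field_simp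
  rw [hsq] at hsum
  linarith

/-- The numerical conclusion: the lower bound at level `j` is at least
`exp (-(1000 α⁻¹ K⁻¹ (log K)²))`. -/
lemma exp_le_level_bound (α K σ : ℝ) (j : ℕ) (hα : 0 < α) (hK : 2 ≤ K)
    (hτ1 : 2 ^ j * (K * α / 2) ≤ 1) (hσ1 : σ ≤ 1) (hσ : 1 / (4 * 8 ^ j * K) ≤ σ) :
    Real.exp (-(1000 * α⁻¹ * K⁻¹ * Real.log K ^ 2)) ≤
      (2 ^ j * (K * α / 2)) ^ 3 / 2 * σ ^ (2 + 30 / (2 ^ j * (K * α / 2))) := by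
  have hKpos : 0 < K := by linarith
  have hσpos : 0 < σ := lt_of_lt_of_le (by positivity) hσ
  set τ : ℝ := 2 ^ j * (K * α / 2) with hτ
  have hτpos : 0 < τ := by positivity
  have hL : 0.69 < Real.log K :=
    lt_of_lt_of_le (by linarith [Real.log_two_gt_d9]) (Real.log_le_log (by norm_num) hK)
  have hlogσ : -Real.log σ ≤ (3 + 3 * j) * Real.log K := by
    have h1 := Real.log_le_log (by positivity) hσ
    have h2 : Real.log (1 / (4 * 8 ^ j * K))
        = -(2 * Real.log 2 + j * (3 * Real.log 2) + Real.log K) := by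
      have h4 : Real.log 4 = 2 * Real.log 2 := by
        rw [show (4 : ℝ) = 2 ^ 2 by norm_num, Real.log_pow]; norm_num
      have h8 : Real.log 8 = 3 * Real.log 2 := by
        rw [show (8 : ℝ) = 2 ^ 3 by norm_num, Real.log_pow]; norm_num
      rw [one_div, Real.log_inv, Real.log_mul (by positivity) (by positivity),
        Real.log_mul (by positivity) (by positivity), Real.log_pow, h4, h8]
    have h3 : Real.log 2 ≤ Real.log K := Real.log_le_log (by norm_num) hK
    have h5 : (j : ℝ) * Real.log 2 ≤ j * Real.log K :=
      mul_le_mul_of_nonneg_left h3 (Nat.cast_nonneg j)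
    rw [h2] at h1
    linarith
  have hlogτ : -Real.log τ ≤ 1 / τ := by
    have := Real.log_le_self (x := τ⁻¹) (by positivity)
    rw [Real.log_inv] at this
    simpa using this
  set X : ℝ := α⁻¹ * K⁻¹ with hX
  have hXpos : 0 < X := by positivity
  have hτX : 1 / τ * 2 ^ j = 2 * X := by
    rw [hτ, hX]; field_simp
  have hj : (j : ℝ) + 1 ≤ 2 ^ j := by
    exact_mod_cast Nat.lt_two_pow_self (n := j)
  have hτinv : 0 < 1 / τ := by positivity
  have hA : 1 / τ * (j + 1) ≤ 2 * X := by
    rw [← hτX]; exact mul_le_mul_of_nonneg_left hj hτinv.le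
  have hB : 1 / τ ≤ 2 * X := by
    refine le_trans ?_ hA
    have : (0 : ℝ) ≤ j := Nat.cast_nonneg j
    nlinarith
  have hone : 1 ≤ 1 / τ := by rw [le_div_iff₀ hτpos]; linarith
  have hlogσ0 : 0 ≤ -Real.log σ := by
    have := Real.log_nonpos hσpos.le hσ1
    linarith
  have hC : 1 / τ * (-Real.log σ) ≤ 6 * X * Real.log K := by
    have h1 := mul_le_mul_of_nonneg_left hlogσ hτinv.le
    have h2 := mul_le_mul_of_nonneg_right hA (by linarith : 0 ≤ 3 * Real.log K)
    linarith
  have hrhs : 0 < τ ^ 3 / 2 * σ ^ (2 + 30 / τ) := by positivity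
  rw [← Real.le_log_iff_exp_le hrhs, Real.log_mul (by positivity) (by positivity),
    Real.log_div (by positivity) (by norm_num), Real.log_pow, Real.log_rpow hσpos]
  have hD : (2 + 30 / τ) * (-Real.log σ) ≤ 32 * (6 * X * Real.log K) := by
    have h1 := mul_le_mul_of_nonneg_right hone hlogσ0
    have e : 30 / τ = 30 * (1 / τ) := by ring
    rw [e]
    linarith
  have hl2 : Real.log 2 ≤ 1 / τ := by linarith [Real.log_two_lt_d9]
  have hfin : 8 * X + 192 * X * Real.log K ≤ 1000 * X * Real.log K ^ 2 := by
    have : 8 + 192 * Real.log K ≤ 1000 * Real.log K ^ 2 := by nlinarith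
    have := mul_le_mul_of_nonneg_left this hXpos.le
    linarith
  have e : 1000 * α⁻¹ * K⁻¹ * Real.log K ^ 2 = 1000 * X * Real.log K ^ 2 := by rw [hX]; ring
  rw [e]
  push_cast
  linarith

/-- **Counting for families with large mean square density.** There is an absolute
constant `C > 0` such that if `H` is a finite abelian group of exponent `2` and `𝒜` is
a family on `H` of density `α > 0` with `K := ‖f_𝒜‖²_{L²(H)}/α² ≥ 2`, then
`Λ(𝒜) ≥ exp(−C·α⁻¹·K⁻¹·(log K)²)`. -/
theorem family_count_large_mean_square :
    ∃ C : ℝ, 0 < C ∧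
      ∀ (H : Type) [AddCommGroup H] [Fintype H],
        (∀ x : H, x + x = 0) →
        ∀ A : H → Finset H,
          let α : ℝ := famDensity A
          let K : ℝ :=
            ((∑ h, (((A h).card : ℝ) / (Fintype.card H : ℝ)) ^ 2) /
              (Fintype.card H : ℝ)) / α ^ 2
          0 < α → 2 ≤ K →
          famLambda A ≥ Real.exp (-(C * α⁻¹ * K⁻¹ * Real.log K ^ 2)) := by
  refine ⟨1000, by norm_num, ?_⟩
  intro H _ _ hH A α K hα hK
  have hNpos : (0 : ℝ) < (Fintype.card H : ℝ) := by exact_mod_cast Fintype.card_pos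
  have hKpos : 0 < K := by linarith
  obtain ⟨j, hj⟩ := exists_dyadic_level (fun h => ((A h).card : ℝ) / Fintype.card H)
    (fun h => by positivity) α K hα hKpos
    (by
      simp only [α, famDensity]
      rw [← Finset.sum_div]
      field_simp)
    (by
      have hα' : α ≠ 0 := hα.ne'
      simp only [K]
      field_simp)
  clear_value K α
  set S : Finset H := Finset.univ.filter fun h =>
    2 ^ j * (K * α / 2) ≤ ((A h).card : ℝ) / Fintype.card H with hS
  have hτpos : 0 < 2 ^ j * (K * α / 2) := by positivity
  have hScard : (0 : ℝ) < S.card := lt_of_lt_of_le (by positivity) hj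
  have hSne : S.Nonempty := Finset.card_pos.mp (by exact_mod_cast hScard)
  have hSA : ∀ h ∈ S, 2 ^ j * (K * α / 2) ≤ ((A h).card : ℝ) / Fintype.card H := by
    intro h hh
    simpa [hS] using hh
  have hle1 : ∀ B : Finset H, (B.card : ℝ) / Fintype.card H ≤ 1 := by
    intro B
    rw [div_le_one hNpos]
    exact_mod_cast Finset.card_le_univ B
  refine ge_iff_le.mpr (le_trans ?_ (famLambda_lower_bound _ H rfl hH A S _ hτpos hSne
    fun h hh => (le_div_iff₀ hNpos).mp (hSA h hh)))
  refine exp_le_level_bound α K _ j hα hK ?_ (hle1 S) ?_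
  · obtain ⟨h, hh⟩ := hSne
    exact (hSA h hh).trans (hle1 _)
  · rw [le_div_iff₀ hNpos]
    refine le_trans (le_of_eq ?_) hj
    ring
end

section
/- There exists an absolute constant C > 0 such that the following holds. Let H be a finite abelian group of exponent 2, let A ⊆ H have density α > 0, let c ∈ (0,1], and suppose ‖1_A ∗ 1_A‖²_{L²(H)} ≥ c·α³. Then there exist an element x ∈ H and a subgroup H' ≤ H such that |H'|/|H| ≥ exp(−C·c^{−1}·log(2c^{−1}))·α and |A ∩ (x + H')| / |H'| ≥ c/2. -/
/-!
The theorem holds in the stronger form with lower bound `exp (-1000 / c) * α` for the density of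
the subgroup. The proof is an energy increment by induction on the order of the group. Let `c` be
the normalized energy `E(A) / |A|³`, where `E(A)` counts quadruples in `A` with sum zero.

If `A` has density at least `c / 2` in the group, the whole group works. Otherwise the trivial
character contributes at most half of the fourth moment of the Fourier transform of `1_A`, so some
nontrivial character `ψ` satisfies `|Â(ψ)|² ≥ (c / 2) |A|²` (`BSGF.exists_large_coeff`). Let `A₀`,
`A₁` be the parts of `A` in the two cosets of `ker ψ`; their proportions `p`, `q` satisfy
`(p - q)² ≥ c / 2`. Since `E(A) = E(A₀) + E(A₁) + 6X` with `X² ≤ E(A₀) E(A₁)`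
(`BSGF.energy_split`), and `p³ + q³ + 6(pq)^(3/2) = 1 - 3pq(1 - 2√(pq))` is bounded away from `1`,
one part must have noticeably larger normalized energy. Quantitatively (`BSGF.increment`), one of
the parts satisfies `|A| exp (-1000 / c) ≤ |Aᵢ| exp (-1000 / cᵢ)`, which also forces `c ≤ cᵢ`. A
translate of that part lives in the smaller group `ker ψ`, and the induction hypothesis for it
gives the claim for `A` (`BSGF.main_induction`).
-/

open scoped BigOperators Classical

/-- `‖1_A ∗ 1_A‖²_{L²(H)}` for the normalized convolution
`(f ∗ g)(x) = (1/|H|)·Σ_y f(y)·g(x−y)`; here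
`(1_A ∗ 1_A)(x) = |{y : y ∈ A ∧ x − y ∈ A}|/|H|`. -/
noncomputable def convSelfNormSq {H : Type*} [AddCommGroup H] [Fintype H]
    (A : Finset H) : ℝ :=
  (∑ x : H, (((Finset.univ.filter (fun y : H => y ∈ A ∧ x - y ∈ A)).card : ℝ) /
      (Fintype.card H : ℝ)) ^ 2) / (Fintype.card H : ℝ)

namespace BSGF

/-! ### Characters of a group of exponent two -/

section Fourier

variable {G : Type} [AddCommGroup G]

/-- The real part of a character. When `G` has exponent two, characters take only the values
`±1`, so this is the character itself viewed as a real-valued function. -/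
noncomputable def chr (χ : AddChar G ℂ) (a : G) : ℝ := (χ a).re

/-- The unnormalized Fourier transform of the indicator function of `A`. -/
noncomputable def ft (A : Finset G) (χ : AddChar G ℂ) : ℝ := ∑ a ∈ A, chr χ a

/-- The additive energy of `A`, written as the number of quadruples in `A` with sum zero; this is
the usual energy when `G` has exponent two. -/
noncomputable def energy (A : Finset G) : ℝ :=
  ∑ a ∈ A, ∑ b ∈ A, ∑ c ∈ A, ∑ d ∈ A, if a + b + c + d = 0 then 1 else 0

lemma char_sq (h2 : ∀ x : G, x + x = 0) (χ : AddChar G ℂ) (a : G) : χ a = 1 ∨ χ a = -1 := by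
  have h : χ a * χ a = 1 := by rw [← AddChar.map_add_eq_mul, h2, AddChar.map_zero_eq_one]
  exact mul_self_eq_one_iff.mp h

lemma chr_cases (h2 : ∀ x : G, x + x = 0) (χ : AddChar G ℂ) (a : G) :
    chr χ a = 1 ∨ chr χ a = -1 := by
  rcases char_sq h2 χ a with h | h <;> simp [chr, h]

lemma chr_add (h2 : ∀ x : G, x + x = 0) (χ : AddChar G ℂ) (a b : G) :
    chr χ (a + b) = chr χ a * chr χ b := by
  unfold chr
  rw [AddChar.map_add_eq_mul]
  rcases char_sq h2 χ a with h | h <;> rcases char_sq h2 χ b with h' | h' <;> simp [h, h']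

lemma chr_zero (χ : AddChar G ℂ) : chr χ (0 : G) = 1 := by simp [chr]

lemma chr_mul (h2 : ∀ x : G, x + x = 0) (χ ψ : AddChar G ℂ) (a : G) :
    chr (χ * ψ) a = chr χ a * chr ψ a := by
  unfold chr
  rw [AddChar.mul_apply]
  rcases char_sq h2 χ a with h | h <;> rcases char_sq h2 ψ a with h' | h' <;> simp [h, h']

lemma ft_zero (A : Finset G) : ft A (0 : AddChar G ℂ) = A.card := by simp [ft, chr]

lemma abs_ft_le (h2 : ∀ x : G, x + x = 0) (A : Finset G) (χ : AddChar G ℂ) :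
    |ft A χ| ≤ A.card := by
  refine (Finset.abs_sum_le_sum_abs _ _).trans ?_
  rw [Finset.sum_congr rfl (g := fun _ => (1 : ℝ))]
  · simp
  · intro a _
    rcases chr_cases h2 χ a with h | h <;> simp [h]

lemma ft_sq_le (h2 : ∀ x : G, x + x = 0) (A : Finset G) (χ : AddChar G ℂ) :
    ft A χ ^ 2 ≤ (A.card : ℝ) ^ 2 :=
  sq_le_sq' (abs_le.mp (abs_ft_le h2 A χ)).1 (abs_le.mp (abs_ft_le h2 A χ)).2

lemma energy_pos (h2 : ∀ x : G, x + x = 0) (A : Finset G) (hA : A.Nonempty) :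
    0 < energy A := by
  obtain ⟨a, ha⟩ := hA
  have hn : ∀ p : Prop, (0 : ℝ) ≤ if p then 1 else 0 := fun p => by split_ifs <;> simp
  unfold energy
  refine Finset.sum_pos' (fun _ _ => Finset.sum_nonneg fun _ _ => Finset.sum_nonneg fun _ _ =>
    Finset.sum_nonneg fun _ _ => hn _) ⟨a, ha, ?_⟩
  refine Finset.sum_pos' (fun _ _ => Finset.sum_nonneg fun _ _ =>
    Finset.sum_nonneg fun _ _ => hn _) ⟨a, ha, ?_⟩
  refine Finset.sum_pos' (fun _ _ => Finset.sum_nonneg fun _ _ => hn _) ⟨a, ha, ?_⟩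
  refine Finset.sum_pos' (fun _ _ => hn _) ⟨a, ha, ?_⟩
  simp [h2]

lemma ft_eq_sub (h2 : ∀ x : G, x + x = 0) (A : Finset G) (ψ : AddChar G ℂ) :
    ft A ψ = ((A.filter fun a => chr ψ a = 1).card : ℝ) -
      ((A.filter fun a => ¬ chr ψ a = 1).card : ℝ) := by
  unfold ft
  rw [← Finset.sum_filter_add_sum_filter_not A (fun a => chr ψ a = 1),
    Finset.sum_congr rfl (g := fun _ => (1 : ℝ)) (fun a ha => (Finset.mem_filter.mp ha).2),
    Finset.sum_congr (s₁ := A.filter fun a => ¬ chr ψ a = 1) rfl (g := fun _ => (-1 : ℝ))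
      (fun a ha => (chr_cases h2 ψ a).resolve_left (Finset.mem_filter.mp ha).2)]
  simp
  ring

variable [Fintype G]

lemma sum_chr (a : G) :
    ∑ χ : AddChar G ℂ, chr χ a = if a = 0 then (Fintype.card G : ℝ) else 0 := by
  have h := congrArg Complex.re (AddChar.sum_apply_eq_ite (α := G) a)
  rw [Complex.re_sum] at h
  unfold chr
  rw [h]
  split_ifs <;> simp

lemma sum_ft_sq (h2 : ∀ x : G, x + x = 0) (A : Finset G) :
    ∑ χ, ft A χ ^ 2 = Fintype.card G * A.card := by
  have h1 : ∀ χ : AddChar G ℂ, ft A χ ^ 2 = ∑ a ∈ A, ∑ b ∈ A, chr χ (a + b) := by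
    intro χ
    rw [sq, ft, Finset.sum_mul_sum]
    simp_rw [chr_add h2]
  simp_rw [h1]
  rw [Finset.sum_comm]
  have h3 : ∀ a ∈ A, ∑ χ : AddChar G ℂ, ∑ b ∈ A, chr χ (a + b) = Fintype.card G := by
    intro a ha
    rw [Finset.sum_comm]
    simp_rw [sum_chr]
    rw [Finset.sum_eq_single_of_mem a ha]
    · simp [h2]
    · intro b _ hb
      rw [if_neg]
      intro h
      apply hb
      rw [← add_left_cancel_iff (a := a), h, h2]
  rw [Finset.sum_congr rfl h3]
  simp [mul_comm]

lemma sum_ft_four (h2 : ∀ x : G, x + x = 0) (A : Finset G) :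
    ∑ χ, ft A χ ^ 4 = Fintype.card G * energy A := by
  have h1 : ∀ χ : AddChar G ℂ, ft A χ ^ 4 =
      ∑ a ∈ A, ∑ b ∈ A, ∑ c ∈ A, ∑ d ∈ A, chr χ (a + b + c + d) := by
    intro χ
    simp only [chr_add h2, mul_assoc, ← Finset.mul_sum, ← Finset.sum_mul, ft]
    ring
  simp_rw [h1, energy, Finset.mul_sum]
  rw [Finset.sum_comm]
  refine Finset.sum_congr rfl fun a _ => ?_
  rw [Finset.sum_comm]
  refine Finset.sum_congr rfl fun b _ => ?_
  rw [Finset.sum_comm]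
  refine Finset.sum_congr rfl fun c _ => ?_
  rw [Finset.sum_comm]
  refine Finset.sum_congr rfl fun d _ => ?_
  rw [sum_chr]
  split_ifs <;> simp

lemma card_pos_real : (0 : ℝ) < Fintype.card G := by
  exact_mod_cast Fintype.card_pos_iff.mpr ⟨(0 : G)⟩

lemma energy_le (h2 : ∀ x : G, x + x = 0) (A : Finset G) : energy A ≤ (A.card : ℝ) ^ 3 := by
  have h : Fintype.card G * energy A ≤ Fintype.card G * (A.card : ℝ) ^ 3 := by
    calc (Fintype.card G : ℝ) * energy A = ∑ χ, ft A χ ^ 4 := (sum_ft_four h2 A).symm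
      _ ≤ ∑ χ, (A.card : ℝ) ^ 2 * ft A χ ^ 2 := by
          refine Finset.sum_le_sum fun χ _ => ?_
          have := mul_le_mul_of_nonneg_right (ft_sq_le h2 A χ) (sq_nonneg (ft A χ))
          nlinarith
      _ = Fintype.card G * (A.card : ℝ) ^ 3 := by
          rw [← Finset.mul_sum, sum_ft_sq h2]; ring
  exact le_of_mul_le_mul_left h card_pos_real

/-- A set whose density is at most half its normalized energy has a nontrivial Fourier coefficient
comparable to its size: the trivial character accounts for at most half of the fourth moment. -/
lemma exists_large_coeff (h2 : ∀ x : G, x + x = 0) (A : Finset G) (hA : A.Nonempty) (c : ℝ)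
    (hc : energy A = c * (A.card : ℝ) ^ 3)
    (hd : (A.card : ℝ) ≤ c / 2 * Fintype.card G) :
    ∃ χ : AddChar G ℂ, χ ≠ 0 ∧ c / 2 * (A.card : ℝ) ^ 2 ≤ ft A χ ^ 2 := by
  by_contra! hcon
  have hm : (0 : ℝ) < A.card := by exact_mod_cast hA.card_pos
  have hG : (0 : ℝ) < Fintype.card G := card_pos_real
  have h4 := sum_ft_four h2 A
  have h2' := sum_ft_sq h2 A
  rw [← Finset.add_sum_erase _ _ (Finset.mem_univ (0 : AddChar G ℂ)), ft_zero] at h4 h2'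
  have hle : ∑ χ ∈ Finset.univ.erase (0 : AddChar G ℂ), ft A χ ^ 4 ≤
      c / 2 * (A.card : ℝ) ^ 2 * ∑ χ ∈ Finset.univ.erase (0 : AddChar G ℂ), ft A χ ^ 2 := by
    rw [Finset.mul_sum]
    refine Finset.sum_le_sum fun χ hχ => ?_
    have := mul_le_mul_of_nonneg_right (hcon χ (Finset.ne_of_mem_erase hχ)).le
      (sq_nonneg (ft A χ))
    nlinarith
  have hcpos : 0 < c := by
    have := energy_pos h2 A hA
    rw [hc] at this
    exact pos_of_mul_pos_left this (by positivity)
  set S := ∑ χ ∈ Finset.univ.erase (0 : AddChar G ℂ), ft A χ ^ 2 with hS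
  have hSv : S = Fintype.card G * A.card - (A.card : ℝ) ^ 2 := by linarith
  rw [hc] at h4
  rw [hSv] at hle
  have h5 : (A.card : ℝ) ^ 3 * A.card ≤ (A.card : ℝ) ^ 3 * (c / 2 * Fintype.card G) :=
    mul_le_mul_of_nonneg_left hd (by positivity)
  have h6 : 0 < c / 2 * (A.card : ℝ) ^ 4 := by positivity
  nlinarith

/-- The energy splits along the two cosets of the kernel of a nontrivial character: multiplying by
that character shows that the odd mixed moments vanish, and Cauchy–Schwarz bounds the remaining
one. -/
lemma energy_split (h2 : ∀ x : G, x + x = 0) (A : Finset G) (ψ : AddChar G ℂ) :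
    ∃ X : ℝ, energy A = energy (A.filter fun a => chr ψ a = 1) +
        energy (A.filter fun a => ¬ chr ψ a = 1) + 6 * X ∧
      X ^ 2 ≤ energy (A.filter fun a => chr ψ a = 1) *
        energy (A.filter fun a => ¬ chr ψ a = 1) := by
  set A₀ := A.filter fun a => chr ψ a = 1
  set A₁ := A.filter fun a => ¬ chr ψ a = 1
  have hG : (0 : ℝ) < Fintype.card G := card_pos_real
  have hF : ∀ χ, ft A χ = ft A₀ χ + ft A₁ χ := fun χ =>
    (Finset.sum_filter_add_sum_filter_not A (fun a => chr ψ a = 1) _).symm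
  have hs0 : ∀ χ, ft A₀ (χ * ψ) = ft A₀ χ := by
    intro χ
    refine Finset.sum_congr rfl fun a ha => ?_
    rw [chr_mul h2, (Finset.mem_filter.mp ha).2, mul_one]
  have hs1 : ∀ χ, ft A₁ (χ * ψ) = -ft A₁ χ := by
    intro χ
    unfold ft
    rw [← Finset.sum_neg_distrib]
    refine Finset.sum_congr rfl fun a ha => ?_
    rw [chr_mul h2, (chr_cases h2 ψ a).resolve_left (Finset.mem_filter.mp ha).2]
    ring
  have hodd : ∑ χ, (4 * ft A₀ χ ^ 3 * ft A₁ χ + 4 * ft A₀ χ * ft A₁ χ ^ 3) = 0 := by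
    have h := Equiv.sum_comp (Equiv.mulRight ψ)
      (fun χ => 4 * ft A₀ χ ^ 3 * ft A₁ χ + 4 * ft A₀ χ * ft A₁ χ ^ 3)
    simp only [Equiv.coe_mulRight, hs0, hs1] at h
    have h' : ∑ χ, (4 * ft A₀ χ ^ 3 * -ft A₁ χ + 4 * ft A₀ χ * (-ft A₁ χ) ^ 3) =
        -∑ χ, (4 * ft A₀ χ ^ 3 * ft A₁ χ + 4 * ft A₀ χ * ft A₁ χ ^ 3) := by
      rw [← Finset.sum_neg_distrib]
      exact Finset.sum_congr rfl fun χ _ => by ring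
    linarith
  have hsum : ∑ χ, ft A χ ^ 4 = ∑ χ, ft A₀ χ ^ 4 + ∑ χ, ft A₁ χ ^ 4 +
      6 * ∑ χ, ft A₀ χ ^ 2 * ft A₁ χ ^ 2 := by
    rw [← add_zero (_ + _), ← hodd, Finset.mul_sum, ← Finset.sum_add_distrib,
      ← Finset.sum_add_distrib, ← Finset.sum_add_distrib]
    exact Finset.sum_congr rfl fun χ _ => by rw [hF]; ring
  have hcs := Finset.sum_mul_sq_le_sq_mul_sq Finset.univ (fun χ => ft A₀ χ ^ 2)
    (fun χ => ft A₁ χ ^ 2)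
  simp only [← pow_mul] at hcs
  norm_num only at hcs
  rw [sum_ft_four h2, sum_ft_four h2] at hcs
  rw [sum_ft_four h2, sum_ft_four h2, sum_ft_four h2] at hsum
  refine ⟨(∑ χ, ft A₀ χ ^ 2 * ft A₁ χ ^ 2) / Fintype.card G, ?_, ?_⟩
  · field_simp
    linarith
  · rw [div_pow, div_le_iff₀ (by positivity)]
    nlinarith

end Fourier

/-! ### The numerical increment inequality -/

lemma le_of_sq_le {a b : ℝ} (h : a ^ 2 ≤ b ^ 2) (hb : 0 ≤ b) : a ≤ b :=
  le_of_abs_le (abs_le_of_sq_le_sq h hb)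

lemma le_of_near {c d u : ℝ} (hc : 0 < c) (hu : 0 ≤ u) (hu' : u ≤ 1 / 2)
    (h : d * (1 - u) ≤ c) : d ≤ c * (1 + 2 * u) := by
  have h1 : c * 1 ≤ c * ((1 + 2 * u) * (1 - u)) :=
    mul_le_mul_of_nonneg_left (by nlinarith) hc.le
  have h2 : d * (1 - u) ≤ c * (1 + 2 * u) * (1 - u) := by linarith
  exact le_of_mul_le_mul_right h2 (by linarith)

set_option maxHeartbeats 1000000 in
/-- The inequality behind the increment: if neither half gains enough normalized energy, then the
energy of the whole is too small. Here `s²` and `t²` are the proportions of the set in the two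
halves, and `c₀`, `c₁` the normalized energies of the halves. -/
lemma increment_aux {c c₀ c₁ s t X : ℝ} (ht : 0 < t) (hts : t ≤ s) (hst : s ^ 2 + t ^ 2 = 1)
    (hc : 0 < c) (hc1 : c ≤ 1) (h0 : 0 < c₀) (h1 : 0 < c₁) (h1' : c₁ ≤ 1)
    (hδ : c / 2 ≤ (s ^ 2 - t ^ 2) ^ 2)
    (hg0 : 1000 / c - 1000 / c₀ ≤ 2 * t ^ 2) (hg1 : 1000 / c - 1000 / c₁ ≤ 2 / t)
    (hE : c ≤ c₀ * s ^ 6 + c₁ * t ^ 6 + 6 * X) (hX : X ^ 2 ≤ c₀ * c₁ * s ^ 6 * t ^ 6) :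
    False := by
  have hs : 0 < s := ht.trans_le hts
  have ht1 : t ^ 2 ≤ 1 / 2 := by nlinarith
  have hs1 : s ≤ 1 := by nlinarith
  have ht1' : t ≤ 1 := hts.trans hs1
  have ht2 : 0 < t ^ 2 := by positivity
  have hct : c * t ^ 2 ≤ 1 := by nlinarith
  have b0 : c₀ ≤ c * (1 + 2 * (c * t ^ 2 / 500)) := by
    refine le_of_near hc (by positivity) (by linarith) ?_
    have : (1000 / c - 1000 / c₀) * (c * c₀) ≤ 2 * t ^ 2 * (c * c₀) :=
      mul_le_mul_of_nonneg_right hg0 (by positivity)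
    have e : (1000 / c - 1000 / c₀) * (c * c₀) = 1000 * c₀ - 1000 * c := by field_simp
    nlinarith
  rcases le_total (c / 100) (t ^ 2) with hcase | hcase
  · -- Both parts are substantial: the loss `1 - (s⁶ + t⁶ + 6s³t³)` is at least `3ct²/8`.
    have hct' : c / t ≤ 10 := by
      rw [div_le_iff₀ ht]
      nlinarith
    have b1 : c₁ ≤ c * (1 + 2 * (c / t / 500)) := by
      refine le_of_near hc (by positivity) (by linarith) ?_
      have : (1000 / c - 1000 / c₁) * (c * c₁) ≤ 2 / t * (c * c₁) :=
        mul_le_mul_of_nonneg_right hg1 (by positivity)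
      have e : (1000 / c - 1000 / c₁) * (c * c₁) = 1000 * c₁ - 1000 * c := by field_simp
      have e' : 2 / t * (c * c₁) = 2 * (c₁ * (c / t)) := by ring
      nlinarith
    have hXle : X ≤ (c₀ + c₁) / 2 * (s ^ 3 * t ^ 3) := by
      refine le_of_sq_le ?_ (by positivity)
      calc X ^ 2 ≤ c₀ * c₁ * (s ^ 6 * t ^ 6) := by linarith
        _ ≤ ((c₀ + c₁) / 2) ^ 2 * (s ^ 6 * t ^ 6) :=
            mul_le_mul_of_nonneg_right (by nlinarith [sq_nonneg (c₀ - c₁)]) (by positivity)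
        _ = _ := by ring
    have hP : s * t ≤ (1 - c / 4) / 2 := by
      refine le_of_sq_le ?_ (by linarith)
      have e : (s * t) ^ 2 = (1 - (s ^ 2 - t ^ 2) ^ 2) / 4 := by
        have : (s ^ 2 + t ^ 2) ^ 2 = 1 := by rw [hst]; norm_num
        nlinarith
      rw [e]
      nlinarith [sq_nonneg c]
    have hs2 : 1 / 2 ≤ s ^ 2 := by linarith
    have hφ : s ^ 6 + t ^ 6 + 6 * (s ^ 3 * t ^ 3) ≤ 1 - 3 / 8 * (c * t ^ 2) := by
      have e : s ^ 6 + t ^ 6 + 6 * (s ^ 3 * t ^ 3) =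
          (s ^ 2 + t ^ 2) ^ 3 - 3 * (s ^ 2 * t ^ 2) * ((s ^ 2 + t ^ 2) - 2 * (s * t)) := by ring
      rw [e, hst]
      have i1 : 1 / 2 * t ^ 2 ≤ s ^ 2 * t ^ 2 := mul_le_mul_of_nonneg_right hs2 ht2.le
      have i2 : 1 / 2 * t ^ 2 * (c / 4) ≤ s ^ 2 * t ^ 2 * (1 - 2 * (s * t)) :=
        mul_le_mul i1 (by linarith) (by positivity) (by positivity)
      linarith
    have hs3 : s ^ 3 ≤ 1 := pow_le_one₀ hs.le hs1
    have hs6 : s ^ 6 ≤ 1 := pow_le_one₀ hs.le hs1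
    have ht3 : t ^ 3 ≤ t ^ 2 := pow_le_pow_of_le_one ht.le ht1' (by norm_num)
    have ht31 : t ^ 3 ≤ 1 := pow_le_one₀ ht.le ht1'
    have w0 : s ^ 6 + 3 * (s ^ 3 * t ^ 3) ≤ 4 := by
      have : s ^ 3 * t ^ 3 ≤ 1 := mul_le_one₀ hs3 (by positivity) ht31
      linarith
    have w1 : t ^ 6 + 3 * (s ^ 3 * t ^ 3) ≤ 4 * t ^ 3 := by
      have a1 : t ^ 6 ≤ t ^ 3 := pow_le_pow_of_le_one ht.le ht1' (by norm_num)
      have a2 : s ^ 3 * t ^ 3 ≤ 1 * t ^ 3 := mul_le_mul_of_nonneg_right hs3 (by positivity)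
      linarith
    have hE2 : c ≤ c₀ * (s ^ 6 + 3 * (s ^ 3 * t ^ 3)) + c₁ * (t ^ 6 + 3 * (s ^ 3 * t ^ 3)) := by
      linarith
    have j0 : c₀ * (s ^ 6 + 3 * (s ^ 3 * t ^ 3)) ≤
        c * (s ^ 6 + 3 * (s ^ 3 * t ^ 3)) + c * (2 * (c * t ^ 2 / 500)) * 4 := by
      have k1 := mul_le_mul_of_nonneg_right b0
        (show 0 ≤ s ^ 6 + 3 * (s ^ 3 * t ^ 3) by positivity)
      have k2 := mul_le_mul_of_nonneg_left w0
        (show 0 ≤ c * (2 * (c * t ^ 2 / 500)) by positivity)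
      linarith
    have j1 : c₁ * (t ^ 6 + 3 * (s ^ 3 * t ^ 3)) ≤
        c * (t ^ 6 + 3 * (s ^ 3 * t ^ 3)) + c * (2 * (c * t ^ 2 / 500)) * 4 := by
      have k1 := mul_le_mul_of_nonneg_right b1
        (show 0 ≤ t ^ 6 + 3 * (s ^ 3 * t ^ 3) by positivity)
      have k2 := mul_le_mul_of_nonneg_left w1
        (show 0 ≤ c * (2 * (c / t / 500)) by positivity)
      have e : c * (2 * (c / t / 500)) * (4 * t ^ 3) = c * (2 * (c * t ^ 2 / 500)) * 4 := by
        field_simp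
      linarith
    have j2 := mul_le_mul_of_nonneg_left hφ hc.le
    have : 0 < c * (c * t ^ 2) := by positivity
    linarith
  · -- The second part is tiny, so the trivial bound `c₁ ≤ 1` suffices.
    obtain ⟨r, hr, rfl⟩ : ∃ r, 0 < r ∧ c = r ^ 2 :=
      ⟨√c, Real.sqrt_pos.mpr hc, (Real.sq_sqrt hc.le).symm⟩
    have htr : t ≤ r / 10 := by
      refine le_of_sq_le ?_ (by positivity)
      linarith [show (r / 10) ^ 2 = r ^ 2 / 100 by ring]
    have b0' : c₀ ≤ r ^ 2 * (101 / 100) := by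
      refine b0.trans (mul_le_mul_of_nonneg_left ?_ hc.le)
      linarith
    have hs6 : s ^ 6 ≤ s ^ 2 := pow_le_pow_of_le_one hs.le hs1 (by norm_num)
    have hs61 : s ^ 6 ≤ 1 := pow_le_one₀ hs.le hs1
    have hXle : X ≤ 11 / 10 * r * t ^ 3 := by
      refine le_of_sq_le ?_ (by positivity)
      have k : c₀ * c₁ * s ^ 6 ≤ r ^ 2 * (101 / 100) * 1 * 1 := by
        gcongr
      have := mul_le_mul_of_nonneg_right k (show 0 ≤ t ^ 6 by positivity)
      have p : 0 ≤ r ^ 2 * t ^ 6 := by positivity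
      linarith
    have j0 : c₀ * s ^ 6 ≤ r ^ 2 * (1 + 2 * (r ^ 2 * t ^ 2 / 500)) * (1 - t ^ 2) := by
      have : s ^ 6 ≤ 1 - t ^ 2 := by linarith
      gcongr
    have j1 : c₁ * t ^ 6 ≤ t ^ 2 * (r ^ 2 / 100) := by
      have a : t ^ 6 ≤ t ^ 4 := pow_le_pow_of_le_one ht.le ht1' (by norm_num)
      have b : c₁ * t ^ 6 ≤ 1 * t ^ 6 := mul_le_mul_of_nonneg_right h1' (by positivity)
      have d := mul_le_mul_of_nonneg_left hcase ht2.le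
      linarith
    have j2 : r * t ^ 3 ≤ r ^ 2 * t ^ 2 / 10 := by
      have := mul_le_mul_of_nonneg_left htr (show 0 ≤ r * t ^ 2 by positivity)
      linarith
    have q : 0 < r ^ 2 * t ^ 2 := by positivity
    have q1 : r ^ 2 * (r ^ 2 * t ^ 2) ≤ 1 * (r ^ 2 * t ^ 2) :=
      mul_le_mul_of_nonneg_right hc1 q.le
    have q2 : 0 ≤ r ^ 2 * (2 * (r ^ 2 * t ^ 2 / 500)) * t ^ 2 := by positivity
    linarith

/-- `increment_aux` in terms of sizes `m₀ ≥ m₁` and energies `cᵢ * mᵢ ^ 3`: some half does not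
decrease `m * exp (-1000 / c)`. -/
lemma increment {c c₀ c₁ m₀ m₁ X : ℝ} (hm1 : 0 < m₁) (hm : m₁ ≤ m₀)
    (hc : 0 < c) (hc1 : c ≤ 1) (h0 : 0 < c₀) (h1 : 0 < c₁) (h1' : c₁ ≤ 1)
    (hδ : c / 2 * (m₀ + m₁) ^ 2 ≤ (m₀ - m₁) ^ 2)
    (hE : c * (m₀ + m₁) ^ 3 = c₀ * m₀ ^ 3 + c₁ * m₁ ^ 3 + 6 * X)
    (hX : X ^ 2 ≤ (c₀ * m₀ ^ 3) * (c₁ * m₁ ^ 3)) :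
    (m₀ + m₁) * Real.exp (-(1000 / c)) ≤ m₀ * Real.exp (-(1000 / c₀)) ∨
    (m₀ + m₁) * Real.exp (-(1000 / c)) ≤ m₁ * Real.exp (-(1000 / c₁)) := by
  by_contra! hcon
  obtain ⟨g0, g1⟩ := hcon
  have hm0 : 0 < m₀ := hm1.trans_le hm
  have hM : 0 < m₀ + m₁ := by positivity
  set M := m₀ + m₁ with hMdef
  have logform : ∀ m d : ℝ, 0 < m → m * Real.exp (-(1000 / d)) < M * Real.exp (-(1000 / c)) →
      1000 / c - 1000 / d ≤ Real.log (M / m) := by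
    intro m d hmp h
    have := Real.log_lt_log (by positivity) h
    rw [Real.log_mul hmp.ne' (Real.exp_ne_zero _), Real.log_mul hM.ne' (Real.exp_ne_zero _),
      Real.log_exp, Real.log_exp] at this
    rw [Real.log_div hM.ne' hmp.ne']
    linarith
  have l0 := logform m₀ c₀ hm0 g0
  have l1 := logform m₁ c₁ hm1 g1
  obtain ⟨s, hs, hs2⟩ : ∃ s, 0 < s ∧ s ^ 2 = m₀ / M :=
    ⟨√(m₀ / M), Real.sqrt_pos.mpr (by positivity), Real.sq_sqrt (by positivity)⟩
  obtain ⟨t, ht, ht2⟩ : ∃ t, 0 < t ∧ t ^ 2 = m₁ / M :=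
    ⟨√(m₁ / M), Real.sqrt_pos.mpr (by positivity), Real.sq_sqrt (by positivity)⟩
  have e0 : m₀ = M * s ^ 2 := by rw [hs2]; field_simp
  have e1 : m₁ = M * t ^ 2 := by rw [ht2]; field_simp
  have hst : s ^ 2 + t ^ 2 = 1 := by
    rw [hs2, ht2, ← add_div, ← hMdef, div_self hM.ne']
  have hts : t ≤ s := by
    refine le_of_sq_le ?_ hs.le
    rw [hs2, ht2]
    gcongr
  clear_value M
  subst e0 e1
  have d0 : M / (M * s ^ 2) = 1 / s ^ 2 := by field_simp
  have d1 : M / (M * t ^ 2) = (1 / t) ^ 2 := by field_simp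
  rw [d0] at l0
  rw [d1, Real.log_pow] at l1
  have l0' : Real.log (1 / s ^ 2) ≤ 2 * t ^ 2 := by
    refine (Real.log_le_sub_one_of_pos (by positivity)).trans ?_
    rw [sub_le_iff_le_add, div_le_iff₀ (by positivity)]
    nlinarith [sq_nonneg t, mul_nonneg (sub_nonneg.mpr hts) (add_pos hs ht).le]
  have l1' : ((2 : ℕ) : ℝ) * Real.log (1 / t) ≤ 2 / t := by
    have := Real.log_le_sub_one_of_pos (show 0 < 1 / t by positivity)
    have e : 2 / t = 2 * (1 / t) := by ring
    rw [e]
    push_cast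
    linarith
  refine increment_aux (X := X / M ^ 3) ht hts hst hc hc1 h0 h1 h1' ?_ (l0.trans l0')
    (l1.trans l1') ?_ ?_
  · have : M ^ 2 * (c / 2) ≤ M ^ 2 * (s ^ 2 - t ^ 2) ^ 2 := by linarith
    exact le_of_mul_le_mul_left this (by positivity)
  · have : c = c₀ * s ^ 6 + c₁ * t ^ 6 + 6 * (X / M ^ 3) := by
      field_simp
      linarith
    exact this.le
  · rw [div_pow, div_le_iff₀ (by positivity)]
    linarith

/-! ### Induction on the group -/

/-- The normalized additive energy, `energy A / |A|³`. -/
noncomputable def ratio {G : Type} [AddCommGroup G] [Fintype G] (A : Finset G) : ℝ :=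
  energy A / (A.card : ℝ) ^ 3

/-- `A` has density at least `d` on a coset of a subgroup with at least `m` elements. -/
def DenseOnCoset {G : Type} [AddCommGroup G] (A : Finset G) (d m : ℝ) : Prop :=
  ∃ (x : G) (W : AddSubgroup G), m ≤ Nat.card W ∧
    d * Nat.card W ≤ ((A.filter fun a => a - x ∈ W).card : ℝ)

/-- A subset of a coset `y + V` has a copy inside `V` with the same size and energy, and a dense
coset for the copy gives one for the original set. -/
lemma exists_copy {G : Type} [AddCommGroup G] [Fintype G] (h2 : ∀ x : G, x + x = 0)
    (V : AddSubgroup G) (y : G) (A : Finset G) (hA : ∀ a ∈ A, a - y ∈ V) :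
    ∃ B : Finset V, B.card = A.card ∧ energy B = energy A ∧
      ∀ d m : ℝ, DenseOnCoset B d m → DenseOnCoset A d m := by
  let e : V ↪ G := ⟨fun v => y + v, fun u v h => Subtype.ext (add_left_cancel h)⟩
  have he : ∀ v : V, e v = y + v := fun _ => rfl
  obtain ⟨B, rfl⟩ : ∃ B : Finset V, A = B.map e := by
    refine ⟨Finset.univ.filter fun v : V => y + (v : G) ∈ A, ?_⟩
    ext a
    simp only [Finset.mem_map, Finset.mem_filter, Finset.mem_univ, true_and, he]
    constructor
    · intro ha
      exact ⟨⟨a - y, hA a ha⟩, by simpa using ha, by simp⟩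
    · rintro ⟨v, hv, rfl⟩
      exact hv
  refine ⟨B, (Finset.card_map e).symm, ?_, ?_⟩
  · unfold energy
    simp only [Finset.sum_map, he]
    refine Finset.sum_congr rfl fun a _ => Finset.sum_congr rfl fun b _ =>
      Finset.sum_congr rfl fun c _ => Finset.sum_congr rfl fun d _ => ?_
    have : y + (a : G) + (y + b) + (y + c) + (y + d) = ((a + b + c + d : V) : G) := by
      have : y + (a : G) + (y + b) + (y + c) + (y + d) =
          (y + y) + (y + y) + (a + b + c + d) := by abel
      rw [this, h2]
      simp
    rw [this]
    by_cases h : a + b + c + d = 0 <;> simp only [ZeroMemClass.coe_eq_zero, h, if_true, if_false]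
  · rintro d m ⟨x, H', hm, hd⟩
    have hcard : Nat.card (H'.map V.subtype) = Nat.card H' :=
      Nat.card_congr (H'.equivMapOfInjective V.subtype V.subtype_injective).symm.toEquiv
    refine ⟨y + x, H'.map V.subtype, by rwa [hcard], ?_⟩
    rw [hcard]
    refine hd.trans ?_
    rw [← Finset.card_map e]
    refine Nat.cast_le.mpr (Finset.card_le_card ?_)
    intro a ha
    obtain ⟨v, hv, rfl⟩ := Finset.mem_map.mp ha
    obtain ⟨hvB, hvH⟩ := Finset.mem_filter.mp hv
    refine Finset.mem_filter.mpr ⟨Finset.mem_map_of_mem e hvB, v - x, hvH, ?_⟩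
    simp [he]

lemma DenseOnCoset.mono {G : Type} [AddCommGroup G] {A B : Finset G} {d d' m m' : ℝ}
    (h : DenseOnCoset A d m) (hAB : A ⊆ B) (hd : d' ≤ d) (hm : m' ≤ m) :
    DenseOnCoset B d' m' := by
  obtain ⟨x, H', h1, h2⟩ := h
  refine ⟨x, H', hm.trans h1, (mul_le_mul_of_nonneg_right hd (Nat.cast_nonneg _)).trans
    (h2.trans (Nat.cast_le.mpr (Finset.card_le_card (Finset.filter_subset_filter _ hAB))))⟩

lemma ratio_mono {c c' m m' : ℝ} (hc : 0 < c) (hc' : 0 < c') (hm' : 0 < m') (hmm : m' ≤ m)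
    (h : m * Real.exp (-(1000 / c)) ≤ m' * Real.exp (-(1000 / c'))) : c ≤ c' := by
  have h1 : m' * Real.exp (-(1000 / c)) ≤ m' * Real.exp (-(1000 / c')) :=
    (mul_le_mul_of_nonneg_right hmm (Real.exp_pos _).le).trans h
  have h2 := Real.exp_le_exp.mp (le_of_mul_le_mul_left h1 hm')
  have h3 : 1000 / c' ≤ 1000 / c := by linarith
  rw [div_le_div_iff₀ hc' hc] at h3
  linarith

/-- Strong induction on the order of the group. Either `A` is already dense in the whole group, or
it splits along an index-two subgroup and one of the halves satisfies the induction hypothesis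
with a larger guaranteed size. -/
lemma main_induction (n : ℕ) : ∀ (G : Type) [AddCommGroup G] [Fintype G],
    (∀ x : G, x + x = 0) → Fintype.card G = n → ∀ A : Finset G, A.Nonempty →
      DenseOnCoset A (ratio A / 2) (A.card * Real.exp (-(1000 / ratio A))) := by
  induction n using Nat.strong_induction_on with
  | _ n ih =>
  intro G _ _ h2 hn A hA
  have ratio_spec : ∀ B : Finset G, B.Nonempty → 0 < ratio B ∧ ratio B ≤ 1 ∧
      energy B = ratio B * (B.card : ℝ) ^ 3 := by
    intro B hB
    have hm : (0 : ℝ) < B.card := by exact_mod_cast hB.card_pos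
    refine ⟨div_pos (energy_pos h2 B hB) (by positivity), ?_, ?_⟩
    · rw [ratio, div_le_one (by positivity)]
      exact energy_le h2 B
    · rw [ratio]
      field_simp
  obtain ⟨hc, hc1, hce⟩ := ratio_spec A hA
  have hm : (0 : ℝ) < A.card := by exact_mod_cast hA.card_pos
  rcases le_total (ratio A / 2 * Fintype.card G) (A.card : ℝ) with hd | hd
  · refine ⟨0, ⊤, ?_, ?_⟩
    · rw [AddSubgroup.card_top, Nat.card_eq_fintype_card]
      have h1 : (A.card : ℝ) ≤ Fintype.card G := by exact_mod_cast Finset.card_le_univ A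
      have h3 : Real.exp (-(1000 / ratio A)) ≤ 1 := by
        rw [Real.exp_le_one_iff, neg_nonpos]
        positivity
      nlinarith
    · rw [AddSubgroup.card_top, Nat.card_eq_fintype_card]
      simpa using hd
  obtain ⟨ψ, hψ, hlarge⟩ := exists_large_coeff h2 A hA (ratio A) hce hd
  obtain ⟨X, hX, hX2⟩ := energy_split h2 A ψ
  have hft := ft_eq_sub h2 A ψ
  have hcardsum : ((A.filter fun a => chr ψ a = 1).card : ℝ) +
      ((A.filter fun a => ¬ chr ψ a = 1).card : ℝ) = A.card := by
    exact_mod_cast Finset.card_filter_add_card_filter_not (s := A) (fun a => chr ψ a = 1)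
  -- The kernel of `ψ`.
  let V : AddSubgroup G :=
    { carrier := {a | chr ψ a = 1}
      zero_mem' := chr_zero ψ
      add_mem' := by
        intro a b ha hb
        simp only [Set.mem_ofPred_eq] at *
        rw [chr_add h2, ha, hb, one_mul]
      neg_mem' := by
        intro a ha
        rw [show -a = a from neg_eq_of_add_eq_zero_left (h2 a)]
        exact ha }
  have memV : ∀ a, a ∈ V ↔ chr ψ a = 1 := fun _ => Iff.rfl
  obtain ⟨z, hz⟩ : ∃ z, ψ z ≠ 1 := (AddChar.ne_zero_iff).mp hψ
  have hzV : chr ψ z ≠ 1 := by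
    rcases char_sq h2 ψ z with h | h
    · exact absurd h hz
    · rw [chr, h]; norm_num
  have hVlt : Fintype.card V < n := by
    rw [← hn]
    exact Fintype.card_subtype_lt (x := z) hzV
  have hV2 : ∀ v : V, v + v = 0 := fun v => Subtype.ext (h2 v)
  -- The induction hypothesis applies to each half that does not decrease the guaranteed size.
  have step : ∀ (B : Finset G) (y : G), B ⊆ A → B.Nonempty → (∀ b ∈ B, b - y ∈ V) →
      A.card * Real.exp (-(1000 / ratio A)) ≤ B.card * Real.exp (-(1000 / ratio B)) →
      DenseOnCoset A (ratio A / 2) (A.card * Real.exp (-(1000 / ratio A))) := by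
    intro B y hBA hB hy hle
    obtain ⟨B', hcard, hen, hdense⟩ := exists_copy h2 V y B hy
    have hB' : B'.Nonempty := by
      rw [← Finset.card_pos, hcard]
      exact hB.card_pos
    have hr : ratio B' = ratio B := by rw [ratio, ratio, hcard, hen]
    have h := hdense _ _ (ih _ hVlt V hV2 rfl B' hB')
    rw [hr, hcard] at h
    have hBA' : (B.card : ℝ) ≤ A.card := by exact_mod_cast Finset.card_le_card hBA
    have := ratio_mono hc (ratio_spec B hB).1 (by exact_mod_cast hB.card_pos) hBA' hle
    exact h.mono hBA (by linarith) hle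
  have hy0 : ∀ b ∈ A.filter (fun a => chr ψ a = 1), b - 0 ∈ V := by
    intro b hb
    rw [sub_zero]
    exact (Finset.mem_filter.mp hb).2
  have hy1 : ∀ b ∈ A.filter (fun a => ¬ chr ψ a = 1), b - z ∈ V := by
    intro b hb
    have hb' := (chr_cases h2 ψ b).resolve_left (Finset.mem_filter.mp hb).2
    have hz' := (chr_cases h2 ψ z).resolve_left hzV
    rw [memV, show b - z = b + z by
      rw [sub_eq_add_neg, show -z = z from neg_eq_of_add_eq_zero_left (h2 z)], chr_add h2, hb', hz']
    norm_num
  have hs0 : A.filter (fun a => chr ψ a = 1) ⊆ A := Finset.filter_subset _ _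
  have hs1 : A.filter (fun a => ¬ chr ψ a = 1) ⊆ A := Finset.filter_subset _ _
  rcases (A.filter fun a => ¬ chr ψ a = 1).eq_empty_or_nonempty with hE1 | hN1
  · have : A.filter (fun a => chr ψ a = 1) = A := by
      rw [Finset.filter_eq_self]
      intro a ha
      by_contra hcon
      exact Finset.notMem_empty a (hE1 ▸ Finset.mem_filter.mpr ⟨ha, hcon⟩)
    rw [this] at hy0
    exact step A 0 subset_rfl hA hy0 le_rfl
  rcases (A.filter fun a => chr ψ a = 1).eq_empty_or_nonempty with hE0 | hN0
  · have : A.filter (fun a => ¬ chr ψ a = 1) = A := by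
      rw [Finset.filter_eq_self]
      intro a ha hcon
      exact Finset.notMem_empty a (hE0 ▸ Finset.mem_filter.mpr ⟨ha, hcon⟩)
    rw [this] at hy1
    exact step A z subset_rfl hA hy1 le_rfl
  have st0 := step _ 0 hs0 hN0 hy0
  have st1 := step _ z hs1 hN1 hy1
  obtain ⟨p0, q0, r0⟩ := ratio_spec _ hN0
  obtain ⟨p1, q1, r1⟩ := ratio_spec _ hN1
  have m0 : (0 : ℝ) < (A.filter fun a => chr ψ a = 1).card := by exact_mod_cast hN0.card_pos
  have m1 : (0 : ℝ) < (A.filter fun a => ¬ chr ψ a = 1).card := by exact_mod_cast hN1.card_pos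
  rw [r0, r1] at hX hX2
  rw [hce] at hX
  rw [hft] at hlarge
  generalize A.filter (fun a => chr ψ a = 1) = A₀ at *
  generalize A.filter (fun a => ¬ chr ψ a = 1) = A₁ at *
  rw [← hcardsum] at hX hlarge st0 st1 ⊢
  rcases le_total (A₁.card : ℝ) A₀.card with hle | hle
  · rcases increment m1 hle hc hc1 p0 p1 q1 hlarge hX hX2 with h | h
    · exact st0 h
    · exact st1 h
  · rw [add_comm (A₀.card : ℝ)] at hX hlarge st0 st1 ⊢
    rcases increment (X := X) m0 hle hc hc1 p1 p0 q0 (by linarith) (by linarith)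
      (by linarith) with h | h
    · exact st1 h
    · exact st0 h

/-- The squared `L²` norm of `1_A ∗ 1_A` is the energy up to normalization, as signs do not matter
in exponent two. -/
lemma convSelfNormSq_eq {G : Type} [AddCommGroup G] [Fintype G] (h2 : ∀ x : G, x + x = 0)
    (A : Finset G) : convSelfNormSq A = energy A / (Fintype.card G : ℝ) ^ 3 := by
  have hneg : ∀ x : G, -x = x := fun x => neg_eq_of_add_eq_zero_left (h2 x)
  have hr : ∀ x : G, ((Finset.univ.filter (fun y : G => y ∈ A ∧ x - y ∈ A)).card : ℝ) =
      ∑ a ∈ A, ∑ b ∈ A, if a + b = x then 1 else 0 := by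
    intro x
    rw [Finset.card_filter]
    push_cast
    rw [← Finset.sum_subset (Finset.subset_univ A)]
    · refine Finset.sum_congr rfl fun a ha => ?_
      have : ∀ b, (a + b = x) ↔ (x - a = b) := fun b => by
        rw [sub_eq_iff_eq_add, add_comm b a, eq_comm]
      simp_rw [this]
      rw [Finset.sum_ite_eq]
      simp [ha]
    · intro a _ ha
      simp [ha]
  have hE : ∑ x : G, ((Finset.univ.filter (fun y : G => y ∈ A ∧ x - y ∈ A)).card : ℝ) ^ 2 =
      energy A := by
    simp_rw [hr, sq, Finset.sum_mul, Finset.mul_sum]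
    unfold energy
    rw [Finset.sum_comm]
    refine Finset.sum_congr rfl fun a _ => ?_
    rw [Finset.sum_comm]
    refine Finset.sum_congr rfl fun b _ => ?_
    rw [Finset.sum_comm]
    refine Finset.sum_congr rfl fun c _ => ?_
    rw [Finset.sum_comm]
    refine Finset.sum_congr rfl fun d _ => ?_
    rw [Finset.sum_eq_single (a + b)]
    · have : (c + d = a + b) ↔ (a + b + c + d = 0) := by
        rw [add_assoc (a + b), add_eq_zero_iff_eq_neg, hneg, eq_comm]
      simp [this]
    · intro x _ hx
      simp [hx.symm]
    · simp
  unfold convSelfNormSq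
  simp_rw [div_pow]
  rw [← Finset.sum_div, hE, div_div]
  ring_nf

end BSGF

/-- **Balog–Szemerédi–Gowers–Freiman theorem in exponent 2.** There is an absolute
constant `C > 0` such that if `H` is a finite abelian group of exponent `2`, `A ⊆ H` has
density `α > 0`, `c ∈ (0,1]` and `‖1_A ∗ 1_A‖²_{L²(H)} ≥ c·α³`, then there are `x ∈ H`
and a subgroup `H' ≤ H` with `|H'|/|H| ≥ exp(−C·c⁻¹·log(2c⁻¹))·α` and
`|A ∩ (x + H')|/|H'| ≥ c/2`. -/
theorem bsgf_exponent_two :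
    ∃ C : ℝ, 0 < C ∧
      ∀ (H : Type) [AddCommGroup H] [Fintype H],
        (∀ x : H, x + x = 0) →
        ∀ (A : Finset H) (c : ℝ),
          let α : ℝ := (A.card : ℝ) / (Fintype.card H : ℝ)
          0 < α → 0 < c → c ≤ 1 →
          convSelfNormSq A ≥ c * α ^ 3 →
          ∃ (x : H) (H' : AddSubgroup H),
            (Nat.card H' : ℝ) / (Fintype.card H : ℝ) ≥
              Real.exp (-(C * c⁻¹ * Real.log (2 * c⁻¹))) * α ∧
            ((A.filter (fun a => a - x ∈ H')).card : ℝ) / (Nat.card H' : ℝ) ≥ c / 2 := by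
  have hlog2 : 0 < Real.log 2 := Real.log_pos (by norm_num)
  refine ⟨1000 / Real.log 2, by positivity, ?_⟩
  intro H _ _ h2 A c α hα hc hc1 hE
  have hG : (0 : ℝ) < Fintype.card H := BSGF.card_pos_real
  have hm : (0 : ℝ) < A.card := by
    have := mul_pos hα hG
    rwa [div_mul_cancel₀ _ hG.ne'] at this
  have hA : A.Nonempty := by
    rw [← Finset.card_pos]
    exact_mod_cast hm
  have hcr : c ≤ BSGF.ratio A := by
    rw [BSGF.convSelfNormSq_eq h2, ge_iff_le, div_pow, ← mul_div_assoc,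
      div_le_div_iff_of_pos_right (by positivity)] at hE
    rw [BSGF.ratio, le_div_iff₀ (by positivity)]
    exact hE
  have hexp : Real.exp (-(1000 / Real.log 2 * c⁻¹ * Real.log (2 * c⁻¹))) ≤
      Real.exp (-(1000 / BSGF.ratio A)) := by
    rw [Real.exp_le_exp, neg_le_neg_iff]
    have hci : 1 ≤ c⁻¹ := (one_le_inv₀ hc).mpr hc1
    have hl : Real.log 2 ≤ Real.log (2 * c⁻¹) := Real.log_le_log (by norm_num) (by linarith)
    calc 1000 / BSGF.ratio A ≤ 1000 / c := by gcongr
      _ = 1000 / Real.log 2 * c⁻¹ * Real.log 2 := by field_simp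
      _ ≤ _ := by gcongr
  obtain ⟨x, H', hsize, hdens⟩ :=
    (BSGF.main_induction _ H h2 rfl A hA).mono subset_rfl
      (show c / 2 ≤ _ by linarith) (mul_le_mul_of_nonneg_left hexp hm.le)
  have hH' : (0 : ℝ) < Nat.card H' := by exact_mod_cast Nat.card_pos
  refine ⟨x, H', ?_, ?_⟩
  · rw [ge_iff_le, ← mul_div_assoc, mul_comm]
    exact div_le_div_of_nonneg_right hsize hG.le
  · rw [ge_iff_le, le_div_iff₀ hH']
    exact hdens
end
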